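/- Let n ≥ 9 be an integer and ε > 0, and set e(n) = 2/binom(n, ⌊n/2⌋), where ⌊n/2⌋ is the largest integer not exceeding n/2. Then there exists a constant C, depending only on n and ε, such that for every real H ≥ 1 the number of tuples (a_1, …, a_n) ∈ ℤ^n with |a_i| ≤ H for 1 ≤ i ≤ n such that the Galois group of the splitting field of X^n + a_1X^{n-1} + ⋯ + a_n over ℚ is isomorphic neither to S_n nor to the alternating group A_n is at most C·H^{n-1+e(n)+ε}. -/

import Mathlib

open Polynomial

/-!
A monic reducible polynomial is the product of two monic integer polynomials whose Mahler measures
multiply, so there are few reducible polynomials of height at most `H`. If `f` is irreducible and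
its Galois group `G` does not contain `A_n`, then, for `n ≥ 9`, `G` has index at least
`binom(n, ⌊n/2⌋) / 2` in `S_n`.

To count such `f`, fibre the space of coefficients by the lines `f + t v`, where `v` has degree
`n - 2` and is the product of two irreducible polynomials. The two roots of `f + T v` that go to
infinity with `T` ramify there, so that inertia at `T = ∞` is generated by a transposition, whereas
the decomposition group permutes transitively the roots that tend to the zeros of each factor of
`v`. For a suitable `v`, depending only on `n`, this forces the Galois group of `f + T v` over
`ℚ(T)` to be `S_n`. The resolvent of `f + T v` attached to a proper subgroup `G` is then
irreducible of degree `[S_n : G]`, and a value `t` for which the Galois group of `f + t v` is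
conjugate to `G` gives an integral point on the curve it defines. By the determinant method, such a
curve has `O(H ^ (1 / [S_n : G] + ε))` integral points in the relevant box, and there are
`O(H ^ (n - 1))` lines.
-/

namespace GaloisCount

/-! ### Integer points on a plane curve -/

section Bivariate

variable {R : Type*} [CommRing R]

lemma eval_eval_eq_evalEval (F : R[X][X]) (φ : R[X]) (t : R) :
    (F.eval φ).eval t = F.evalEval t (φ.eval t) := by
  rw [← map_evalRingHom_eval, ← coe_evalRingHom, ← eval₂_id, hom_eval₂, eval₂_eq_eval_map,
    RingHom.comp_id, coe_evalRingHom]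

lemma sub_dvd_evalEval_sub (F : R[X][X]) (t z w : R) :
    z - w ∣ F.evalEval t z - F.evalEval t w := by
  simpa only [map_evalRingHom_eval] using sub_dvd_eval_sub z w (F.map (evalRingHom t))

lemma dvd_evalEval_sub_evalEval (F : R[X][X]) {p t t₀ z z₀ : R} (ht : p ∣ t - t₀)
    (hz : p ∣ z - z₀) : p ∣ F.evalEval t z - F.evalEval t₀ z₀ := by
  have hz' : p ∣ F.evalEval t z - F.evalEval t z₀ := hz.trans (sub_dvd_evalEval_sub _ _ _ _)
  have ht' : p ∣ F.evalEval t z₀ - F.evalEval t₀ z₀ := ht.trans (sub_dvd_eval_sub _ _ _)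
  simpa using dvd_add hz' ht'

lemma exists_evalEval_sub_eq (F : R[X][X]) (t z e : R) :
    ∃ q : R, F.evalEval t (z - e) =
      F.evalEval t z - e * (derivative F).evalEval t z + e ^ 2 * q := by
  obtain ⟨q, hq⟩ := (F.map (evalRingHom t)).binomExpansion z (-e)
  refine ⟨q, ?_⟩
  rw [derivative_map] at hq
  simp only [map_evalRingHom_eval] at hq
  rw [sub_eq_add_neg, hq]
  ring

lemma pow_succ_dvd_newton_step (F : R[X][X]) {p c t t₀ z z₀ w : R} {N : ℕ}
    (hc : p ∣ 1 - c * (derivative F).evalEval t₀ z₀) (ht : p ∣ t - t₀) (hz : p ∣ z - z₀)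
    (hF : F.evalEval t z = 0) (hw : p ^ (N + 1) ∣ z - w) :
    p ^ (N + 2) ∣ z - (w - c * F.evalEval t w) := by
  obtain ⟨q, hq⟩ := exists_evalEval_sub_eq F t z (z - w)
  rw [sub_sub_cancel, hF] at hq
  have hslope : p ∣ 1 - c * (derivative F).evalEval t z := by
    have h := (dvd_evalEval_sub_evalEval (derivative F) ht hz).mul_left c
    convert dvd_sub hc h using 1
    ring
  have hsq : p ^ (N + 2) ∣ (z - w) ^ 2 :=
    (pow_dvd_pow p (by lia : N + 2 ≤ (N + 1) * 2)).trans
      (by simpa only [← pow_mul] using pow_dvd_pow_of_dvd hw 2)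
  have hstep : z - (w - c * F.evalEval t w) =
      (z - w) * (1 - c * (derivative F).evalEval t z) + c * ((z - w) ^ 2 * q) := by
    rw [hq]
    ring
  rw [hstep]
  exact dvd_add (pow_succ p (N + 1) ▸ mul_dvd_mul hw hslope) ((hsq.mul_right q).mul_left c)

lemma exists_graph_approximation (F : R[X][X]) {p t₀ z₀ : R}
    (hns : IsCoprime p ((derivative F).evalEval t₀ z₀)) (N : ℕ) :
    ∃ φ : R[X], ∀ t z : R, p ∣ t - t₀ → p ∣ z - z₀ → F.evalEval t z = 0 →
      p ^ (N + 1) ∣ z - φ.eval t := by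
  obtain ⟨a, c, hac⟩ := hns
  have hc : p ∣ 1 - c * (derivative F).evalEval t₀ z₀ := ⟨a, by rw [← hac]; ring⟩
  induction N with
  | zero => exact ⟨C z₀, fun t z _ hz _ => by simpa using hz⟩
  | succ N ih =>
    obtain ⟨φ, hφ⟩ := ih
    refine ⟨φ - C c * F.eval φ, fun t z ht hz hF => ?_⟩
    rw [eval_sub, eval_mul, eval_C, eval_eval_eq_evalEval]
    exact pow_succ_dvd_newton_step F hc ht hz hF (hφ t z ht hz hF)

lemma pow_dvd_eval_of_pow_dvd_taylor_coeff {h : R[X]} {p t t₀ : R} {N : ℕ} (ht : p ∣ t - t₀)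
    (hcoeff : ∀ k < N, p ^ (N - k) ∣ (taylor t₀ h).coeff k) : p ^ N ∣ h.eval t := by
  have heval : h.eval t = (taylor t₀ h).eval (t - t₀) := by rw [taylor_eval, sub_add_cancel]
  rw [heval, eval_eq_sum_range]
  refine Finset.dvd_sum fun k _ => ?_
  have hk : p ^ k ∣ (t - t₀) ^ k := pow_dvd_pow_of_dvd ht k
  rcases lt_or_ge k N with hkN | hkN
  · simpa only [← pow_add, Nat.sub_add_cancel hkN.le] using mul_dvd_mul (hcoeff k hkN) hk
  · exact ((pow_dvd_pow p hkN).trans hk).mul_left _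

/-- The polynomial `∑ g (i, j) T ^ i Z ^ j` with coefficient table `g`, where `T` is the inner and
`Z` the outer variable of `R[X][X]`. -/
noncomputable def bivariateOfCoeffs {M d : ℕ} : (Fin M × Fin d → R) →ₗ[R] R[X][X] where
  toFun g := ∑ ij : Fin M × Fin d, monomial (ij.2 : ℕ) (monomial (ij.1 : ℕ) (g ij))
  map_add' g h := by simp only [Pi.add_apply, map_add, Finset.sum_add_distrib]
  map_smul' r g := by
    simp only [Pi.smul_apply, ← smul_monomial, Finset.smul_sum, RingHom.id_apply]

variable {M d : ℕ}

lemma bivariateOfCoeffs_apply (g : Fin M × Fin d → R) :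
    bivariateOfCoeffs g =
      ∑ ij : Fin M × Fin d, monomial (ij.2 : ℕ) (monomial (ij.1 : ℕ) (g ij)) := rfl

lemma evalEval_bivariateOfCoeffs (g : Fin M × Fin d → R) (t z : R) :
    (bivariateOfCoeffs g).evalEval t z =
      ∑ ij : Fin M × Fin d, g ij * t ^ (ij.1 : ℕ) * z ^ (ij.2 : ℕ) := by
  simp [bivariateOfCoeffs_apply, evalEval, eval_finsetSum]

lemma coeff_coeff_bivariateOfCoeffs (g : Fin M × Fin d → R) (i : Fin M) (j : Fin d) :
    ((bivariateOfCoeffs g).coeff j).coeff i = g (i, j) := by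
  rw [bivariateOfCoeffs_apply, finsetSum_coeff, finsetSum_coeff, Finset.sum_eq_single (i, j)]
  · simp
  · rintro ⟨i', j'⟩ - hne
    by_cases hj : j' = j
    · have hi : i' ≠ i := fun hi => hne (by rw [hi, hj])
      simp [hj, coeff_monomial, Fin.val_inj, hi]
    · simp [coeff_monomial, Fin.val_inj, hj]
  · simp

lemma bivariateOfCoeffs_injective :
    Function.Injective (bivariateOfCoeffs : (Fin M × Fin d → R) →ₗ[R] R[X][X]) := fun g h hgh => by
  funext ij
  rw [← coeff_coeff_bivariateOfCoeffs g, hgh, coeff_coeff_bivariateOfCoeffs]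

lemma natDegree_bivariateOfCoeffs_lt (hd : 0 < d) (g : Fin M × Fin d → R) :
    (bivariateOfCoeffs g).natDegree < d := by
  refine (natDegree_sum_le_of_forall_le (n := d - 1) _ _ fun ij _ => ?_).trans_lt (by lia)
  exact (natDegree_monomial_le _).trans (by lia)

lemma natDegree_coeff_bivariateOfCoeffs_le (g : Fin M × Fin d → R) (k : ℕ) :
    ((bivariateOfCoeffs g).coeff k).natDegree ≤ M := by
  rw [bivariateOfCoeffs_apply, finsetSum_coeff]
  refine natDegree_sum_le_of_forall_le _ _ fun ij _ => ?_
  rw [coeff_monomial]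
  split_ifs
  · exact (natDegree_monomial_le _).trans ij.1.2.le
  · simp

end Bivariate

lemma abs_evalEval_bivariateOfCoeffs_le {M d : ℕ} {g : Fin M × Fin d → ℤ} {H B A : ℝ} {t z : ℤ}
    (ht : |(t : ℝ)| ≤ H) (hz : |(z : ℝ)| ≤ B)
    (hg : ∀ ij : Fin M × Fin d, |(g ij : ℝ)| * (H ^ (ij.1 : ℕ) * B ^ (ij.2 : ℕ)) ≤ A) :
    |(((bivariateOfCoeffs g).evalEval t z : ℤ) : ℝ)| ≤ M * d * A := by
  rw [evalEval_bivariateOfCoeffs]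
  push_cast
  calc |∑ ij : Fin M × Fin d, (g ij : ℝ) * (t : ℝ) ^ (ij.1 : ℕ) * (z : ℝ) ^ (ij.2 : ℕ)|
      ≤ ∑ ij : Fin M × Fin d, |(g ij : ℝ)| * (|(t : ℝ)| ^ (ij.1 : ℕ) * |(z : ℝ)| ^ (ij.2 : ℕ)) := by
        refine (Finset.abs_sum_le_sum_abs _ _).trans_eq (Finset.sum_congr rfl fun ij _ => ?_)
        rw [abs_mul, abs_mul, abs_pow, abs_pow, mul_assoc]
    _ ≤ ∑ _ij : Fin M × Fin d, A := by
        refine Finset.sum_le_sum fun ij _ => le_trans ?_ (hg ij)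
        have := (abs_nonneg _).trans ht
        gcongr
    _ = M * d * A := by simp

lemma exists_ne_zero_abs_le_forall_dvd {ι κ : Type*} [Nonempty ι] [Fintype ι]
    [Fintype κ] (L : κ → (ι → ℤ) →+ ℤ) {m : κ → ℕ} (hm : ∀ k, 0 < m k) {A : ι → ℝ}
    (hA : ∀ i, 0 < A i) (hmA : ∏ k, (m k : ℝ) ≤ ∏ i, A i) :
    ∃ g : ι → ℤ, g ≠ 0 ∧ (∀ i, |(g i : ℝ)| ≤ A i) ∧ ∀ k, (m k : ℤ) ∣ L k g := by
  classical
  have : ∀ k, NeZero (m k) := fun k => ⟨(hm k).ne'⟩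
  let toInt : (∀ i, Fin (⌊A i⌋₊ + 1)) → ι → ℤ := fun u i => ((u i : ℕ) : ℤ)
  let residues : (∀ i, Fin (⌊A i⌋₊ + 1)) → ∀ k, ZMod (m k) := fun u k => L k (toInt u)
  have hcard : Fintype.card (∀ k, ZMod (m k)) < Fintype.card (∀ i, Fin (⌊A i⌋₊ + 1)) := by
    simp only [Fintype.card_pi, ZMod.card, Fintype.card_fin]
    have hlt : ∏ i, A i < ∏ i, ((⌊A i⌋₊ : ℝ) + 1) :=
      Finset.prod_lt_prod_of_nonempty (fun i _ => hA i) (fun i _ => Nat.lt_floor_add_one _)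
        Finset.univ_nonempty
    exact_mod_cast hmA.trans_lt hlt
  obtain ⟨u, v, huv, hres⟩ := Fintype.exists_ne_map_eq_of_card_lt residues hcard
  refine ⟨toInt u - toInt v, fun h0 => huv ?_, fun i => ?_, fun k => ?_⟩
  · funext i
    have : toInt u i = toInt v i := congrFun (sub_eq_zero.1 h0) i
    exact Fin.ext (Nat.cast_injective this)
  · have hle : ∀ w : ∀ i, Fin (⌊A i⌋₊ + 1), ((w i : ℕ) : ℝ) ≤ A i := fun w =>
      (Nat.cast_le.2 (Nat.lt_succ_iff.1 (w i).2)).trans (Nat.floor_le (hA i).le)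
    have hnonneg : ∀ w : ∀ i, Fin (⌊A i⌋₊ + 1), (0 : ℝ) ≤ ((w i : ℕ) : ℝ) := fun w =>
      Nat.cast_nonneg _
    have hcast : ((toInt u - toInt v) i : ℝ) = ((u i : ℕ) : ℝ) - ((v i : ℕ) : ℝ) := by simp [toInt]
    rw [hcast]
    exact abs_sub_le_of_nonneg_of_le (hnonneg u) (hle u) (hnonneg v) (hle v)
  · rw [← ZMod.intCast_zmod_eq_zero_iff_dvd, map_sub, Int.cast_sub]
    exact sub_eq_zero.2 (congrFun hres k)

lemma prod_pow_sub_sq {α : Type*} [CommMonoid α] (x : α) (N : ℕ) :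
    (∏ k : Fin N, x ^ (N - (k : ℕ))) ^ 2 = x ^ (N * (N + 1)) := by
  induction N with
  | zero => simp
  | succ N ih =>
    simp only [Fin.prod_univ_succ, Fin.val_zero, Fin.val_succ, Nat.sub_zero, Nat.add_sub_add_right,
      mul_pow, ih]
    rw [← pow_mul, ← pow_add]
    congr 1
    ring

lemma prod_pow_val_sq {α : Type*} [CommMonoid α] (x : α) (N : ℕ) :
    (∏ k : Fin N, x ^ (k : ℕ)) ^ 2 = (x ^ (N - 1)) ^ N := by
  rw [Finset.prod_pow_eq_pow_sum, ← pow_mul, ← pow_mul, Fin.sum_univ_eq_sum_range (fun k => k),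
    Finset.sum_range_id_mul_two, mul_comm]

lemma prod_pow_mul_pow_sq {α : Type*} [CommMonoid α] (x y : α) (M d : ℕ) :
    (∏ ij : Fin M × Fin d, x ^ (ij.1 : ℕ) * y ^ (ij.2 : ℕ)) ^ 2 =
      (x ^ (M - 1) * y ^ (d - 1)) ^ (d * M) := by
  have hx : (∏ ij : Fin M × Fin d, x ^ (ij.1 : ℕ)) ^ 2 = (x ^ (M - 1)) ^ (d * M) := by
    rw [Fintype.prod_prod_type]
    simp only [Finset.prod_const, Finset.card_univ, Fintype.card_fin, Finset.prod_pow]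
    rw [pow_right_comm, prod_pow_val_sq, ← pow_mul, mul_comm d]
  have hy : (∏ ij : Fin M × Fin d, y ^ (ij.2 : ℕ)) ^ 2 = (y ^ (d - 1)) ^ (d * M) := by
    rw [Fintype.prod_prod_type]
    simp only [Finset.prod_const, Finset.card_univ, Fintype.card_fin]
    rw [pow_right_comm, prod_pow_val_sq, ← pow_mul]
  rw [Finset.prod_mul_distrib, mul_pow, hx, hy, mul_pow]

/-- The number of conditions imposed by vanishing modulo `p ^ N` is at most the number of
available coefficient tables; both are computed up to squaring. -/
lemma prod_pow_sub_le_prod_div {M d p N : ℕ} {H B : ℝ} (hH : 0 < H) (hB : 0 < B) (hN : d * M = N)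
    (hN0 : 0 < N) (hsize : (2 * N : ℝ) ^ 2 * H ^ (M - 1) * B ^ (d - 1) ≤ (p : ℝ) ^ (N - 1)) :
    ∏ k : Fin N, ((p ^ (N - (k : ℕ)) : ℕ) : ℝ) ≤
      ∏ ij : Fin M × Fin d, (p : ℝ) ^ N / (2 * N * (H ^ (ij.1 : ℕ) * B ^ (ij.2 : ℕ))) := by
  push_cast
  have : (0 : ℝ) < N := by exact_mod_cast hN0
  have hboxes : (∏ ij : Fin M × Fin d,
      (p : ℝ) ^ N / (2 * N * (H ^ (ij.1 : ℕ) * B ^ (ij.2 : ℕ)))) ^ 2 =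
      (p : ℝ) ^ (N * (2 * N)) / ((2 * N) ^ 2 * H ^ (M - 1) * B ^ (d - 1)) ^ N := by
    rw [Finset.prod_div_distrib, Finset.prod_mul_distrib, div_pow, mul_pow, prod_pow_mul_pow_sq]
    simp only [Finset.prod_const, Finset.card_univ, Fintype.card_prod, Fintype.card_fin]
    rw [mul_comm M d, hN, ← pow_mul, ← pow_mul, mul_assoc, mul_pow _ (_ * _) N, pow_right_comm]
    congr 2
    ring
  refine le_of_sq_le_sq ?_ (by positivity)
  rw [prod_pow_sub_sq, hboxes, le_div_iff₀ (by positivity)]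
  calc (p : ℝ) ^ (N * (N + 1)) * ((2 * N) ^ 2 * H ^ (M - 1) * B ^ (d - 1)) ^ N
      ≤ (p : ℝ) ^ (N * (N + 1)) * ((p : ℝ) ^ (N - 1)) ^ N := by gcongr
    _ = (p : ℝ) ^ (N * (2 * N)) := by
      rw [← pow_mul, ← pow_add, mul_comm (N - 1), ← mul_add]
      congr 2
      lia

/-- The `p`-adic determinant method, with the pigeonhole principle in place of a determinant. -/
lemma exists_auxiliary_polynomial (F : ℤ[X][X]) {p : ℕ} {t₀ z₀ : ℤ}
    (hns : IsCoprime (p : ℤ) ((derivative F).evalEval t₀ z₀)) {d M : ℕ} (hd : 0 < d) (hM : 0 < M)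
    {H B : ℝ} (hp : 0 < p) (hH : 0 < H) (hB : 0 < B)
    (hsize : (2 * (d * M : ℕ)) ^ 2 * H ^ (M - 1) * B ^ (d - 1) ≤ (p : ℝ) ^ (d * M - 1)) :
    ∃ G : ℤ[X][X], G ≠ 0 ∧ G.natDegree < d ∧ (∀ k, (G.coeff k).natDegree ≤ M) ∧
      ∀ t z : ℤ, |(t : ℝ)| ≤ H → |(z : ℝ)| ≤ B → (p : ℤ) ∣ t - t₀ → (p : ℤ) ∣ z - z₀ →
        F.evalEval t z = 0 → G.evalEval t z = 0 := by
  obtain ⟨N, hN⟩ : ∃ N, d * M = N := ⟨_, rfl⟩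
  rw [hN] at hsize
  have hN0 : 0 < N := hN ▸ Nat.mul_pos hd hM
  have : (0 : ℝ) < N := by exact_mod_cast hN0
  have : (0 : ℝ) < p := by exact_mod_cast hp
  have : Nonempty (Fin M × Fin d) := ⟨⟨0, hM⟩, ⟨0, hd⟩⟩
  obtain ⟨φ, hφ⟩ := exists_graph_approximation F hns (N - 1)
  rw [Nat.sub_add_cancel hN0] at hφ
  let coeffOnGraph (k : Fin N) : (Fin M × Fin d → ℤ) →+ ℤ :=
    (lcoeff ℤ (k : ℕ) ∘ₗ taylor t₀).toAddMonoidHom.comp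
      ((evalRingHom φ).toAddMonoidHom.comp bivariateOfCoeffs.toAddMonoidHom)
  obtain ⟨g, hg0, hgA, hgdvd⟩ := exists_ne_zero_abs_le_forall_dvd coeffOnGraph
    (m := fun k => p ^ (N - (k : ℕ))) (fun k => pow_pos hp _)
    (A := fun ij => (p : ℝ) ^ N / (2 * N * (H ^ (ij.1 : ℕ) * B ^ (ij.2 : ℕ))))
    (fun ij => by positivity) (prod_pow_sub_le_prod_div hH hB hN hN0 hsize)
  refine ⟨bivariateOfCoeffs g, (map_ne_zero_iff _ bivariateOfCoeffs_injective).2 hg0,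
    natDegree_bivariateOfCoeffs_lt hd g, natDegree_coeff_bivariateOfCoeffs_le g,
    fun t z ht hz hpt hpz hF => ?_⟩
  have hgraph : (p : ℤ) ^ N ∣ (bivariateOfCoeffs g).evalEval t (φ.eval t) := by
    rw [← eval_eval_eq_evalEval]
    exact pow_dvd_eval_of_pow_dvd_taylor_coeff hpt fun k hk => by
      simpa [coeffOnGraph] using hgdvd ⟨k, hk⟩
  have hpoint : (p : ℤ) ^ N ∣ (bivariateOfCoeffs g).evalEval t z :=
    (dvd_sub_left hgraph).1 ((hφ t z hpt hpz hF).trans (sub_dvd_evalEval_sub _ _ _ _))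
  refine Int.eq_zero_of_abs_lt_dvd hpoint ?_
  have hsmall :
      |(((bivariateOfCoeffs g).evalEval t z : ℤ) : ℝ)| ≤ M * d * ((p : ℝ) ^ N / (2 * N)) := by
    refine abs_evalEval_bivariateOfCoeffs_le ht hz fun ij => ?_
    have h := hgA ij
    rwa [← div_div, le_div_iff₀ (by positivity)] at h
  have hhalf : M * d * ((p : ℝ) ^ N / (2 * N)) = (p : ℝ) ^ N / 2 := by
    rw [← Nat.cast_mul, mul_comm M d, hN]
    field_simp
  exact_mod_cast hsmall.trans_lt (hhalf ▸ half_lt_self (by positivity))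

section Resultant

variable {R : Type*} [CommRing R]

lemma natDegree_det_le {ι : Type*} [Fintype ι] [DecidableEq ι] (A : Matrix ι ι R[X]) {E : ℕ}
    (hA : ∀ i j, (A i j).natDegree ≤ E) : A.det.natDegree ≤ Fintype.card ι * E := by
  rw [Matrix.det_apply]
  refine natDegree_sum_le_of_forall_le _ _ fun σ _ => ?_
  refine (natDegree_smul_le _ _).trans ((natDegree_prod_le _ _).trans ?_)
  simpa using Finset.sum_le_card_nsmul Finset.univ _ E fun i _ => hA (σ i) i

lemma natDegree_resultant_le {F G : R[X][X]} {E : ℕ} (hF : ∀ k, (F.coeff k).natDegree ≤ E)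
    (hG : ∀ k, (G.coeff k).natDegree ≤ E) :
    (resultant F G).natDegree ≤ (F.natDegree + G.natDegree) * E := by
  refine (natDegree_det_le _ fun i j => ?_).trans_eq (by rw [Fintype.card_fin])
  simp only [sylvester, Matrix.of_apply]
  refine Fin.addCases (fun j => ?_) (fun j => ?_) j
  · rw [Fin.addCases_left]
    split_ifs
    exacts [hG _, by simp]
  · rw [Fin.addCases_right]
    split_ifs
    exacts [hF _, by simp]

variable [IsDomain R]

lemma resultant_ne_zero_of_irreducible {F G : R[X]}
    (hF : Irreducible (F.map (algebraMap R (FractionRing R)))) (hG : G ≠ 0)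
    (hGF : G.natDegree < F.natDegree) : resultant F G ≠ 0 := fun h0 => by
  have hinj : Function.Injective (algebraMap R (FractionRing R)) := IsFractionRing.injective _ _
  have hdeg (P : R[X]) : (P.map (algebraMap R (FractionRing R))).natDegree = P.natDegree :=
    natDegree_map_eq_of_injective hinj P
  have hmap : resultant (F.map (algebraMap R (FractionRing R)))
      (G.map (algebraMap R (FractionRing R))) = 0 := by
    rw [hdeg, hdeg, resultant_map_map, h0, map_zero]
  refine (resultant_eq_zero_iff.1 hmap).2 (hF.coprime_iff_not_dvd.2 fun hdvd => ?_)
  have := natDegree_le_of_dvd hdvd ((Polynomial.map_ne_zero_iff hinj).2 hG)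
  rw [hdeg, hdeg] at this
  exact this.not_gt hGF

lemma card_le_of_common_zeros {F G : R[X][X]} {E : ℕ}
    (hF : Irreducible (F.map (algebraMap R[X] (FractionRing R[X])))) (hG : G ≠ 0)
    (hGF : G.natDegree < F.natDegree) (hFE : ∀ k, (F.coeff k).natDegree ≤ E)
    (hGE : ∀ k, (G.coeff k).natDegree ≤ E) (S : Finset R)
    (hS : ∀ t ∈ S, ∃ z : R, F.evalEval t z = 0 ∧ G.evalEval t z = 0) :
    S.card ≤ 2 * F.natDegree * E := by
  have hres : resultant F G ≠ 0 := resultant_ne_zero_of_irreducible hF hG hGF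
  obtain ⟨U, V, -, -, hUV⟩ := exists_mul_add_mul_eq_C_resultant F G le_rfl le_rfl
    (Or.inl (Nat.ne_zero_of_lt hGF))
  have hroots : S.val ⊆ (resultant F G).roots := fun t ht => by
    obtain ⟨z, hFz, hGz⟩ := hS t ht
    have := congrArg (evalEval t z) hUV
    rw [evalEval_add, evalEval_mul, evalEval_mul, hFz, hGz, evalEval_C, zero_mul, zero_mul,
      add_zero] at this
    exact (mem_roots hres).2 this.symm
  calc S.card ≤ (resultant F G).natDegree := card_le_degree_of_subset_roots hroots
    _ ≤ (F.natDegree + G.natDegree) * E := natDegree_resultant_le hFE hGE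
    _ ≤ 2 * F.natDegree * E := Nat.mul_le_mul_right _ (by lia)

lemma card_zeros_le [Fintype R] [DecidableEq R] {F : R[X][X]} (hF : F.Monic) :
    (Finset.univ.filter fun x : R × R => F.evalEval x.1 x.2 = 0).card ≤
      Fintype.card R * F.natDegree := by
  have hfiber : ∀ t ∈ (Finset.univ : Finset R),
      ((Finset.univ.filter fun x : R × R => F.evalEval x.1 x.2 = 0).filter
        fun x => x.1 = t).card ≤ F.natDegree := fun t _ => by
    have hFt : (F.map (evalRingHom t)).Monic := hF.map _
    have himage : ((Finset.univ.filter fun x : R × R => F.evalEval x.1 x.2 = 0).filter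
        fun x => x.1 = t).image Prod.snd ⊆ (F.map (evalRingHom t)).roots.toFinset := by
      simp only [Finset.image_subset_iff, Finset.mem_filter, Finset.mem_univ, true_and, and_imp,
        Prod.forall, Multiset.mem_toFinset]
      rintro s z hsz rfl
      rwa [mem_roots hFt.ne_zero, IsRoot.def, map_evalRingHom_eval]
    rw [← Finset.card_image_of_injOn (f := Prod.snd)]
    · exact (Finset.card_le_card himage).trans ((Multiset.toFinset_card_le _).trans
        ((card_roots' _).trans natDegree_map_le))
    · rintro ⟨s, z⟩ hx ⟨s', z'⟩ hx' rfl
      simp only [Finset.coe_filter, Set.mem_ofPred_eq] at hx hx'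
      rw [hx.2, hx'.2]
  calc _ ≤ F.natDegree * (Finset.univ : Finset R).card :=
        Finset.card_le_mul_card_image_of_maps_to (fun x _ => Finset.mem_univ x.1) _ hfiber
    _ = Fintype.card R * F.natDegree := by rw [Finset.card_univ, mul_comm]

end Resultant

lemma exists_primes_between {N : ℕ} (hN : 0 < N) (k : ℕ) :
    ∃ P : Finset ℕ, P.card = k ∧ ∀ p ∈ P, p.Prime ∧ N ≤ p ∧ p ≤ 2 ^ k * N := by
  have bertrand (i : ℕ) : ∃ p : ℕ, p.Prime ∧ 2 ^ i * N < p ∧ p ≤ 2 * (2 ^ i * N) :=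
    Nat.exists_prime_lt_and_le_two_mul _ (by positivity)
  choose p hprime hlt hle using bertrand
  have hmono : StrictMono p := strictMono_nat_of_lt_succ fun i =>
    (hle i).trans_lt (by simpa only [pow_succ', mul_assoc] using hlt (i + 1))
  refine ⟨(Finset.range k).image p, ?_, fun q hq => ?_⟩
  · rw [Finset.card_image_of_injective _ hmono.injective, Finset.card_range]
  · obtain ⟨i, hi, rfl⟩ := Finset.mem_image.1 hq
    refine ⟨hprime i, (Nat.le_mul_of_pos_left _ (by positivity)).trans (hlt i).le,
      (hle i).trans ?_⟩
    rw [← mul_assoc, ← pow_succ']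
    exact Nat.mul_le_mul_right _ (Nat.pow_le_pow_right two_pos (Finset.mem_range.1 hi))

lemma exists_prime_not_dvd {P : Finset ℕ} {N : ℕ} (hP : ∀ p ∈ P, p.Prime ∧ N ≤ p) {a : ℤ}
    (ha : a ≠ 0) (hlt : a.natAbs < N ^ P.card) : ∃ p ∈ P, ¬ (p : ℤ) ∣ a := by
  by_contra! hdvd
  have hprod : ∏ p ∈ P, p ∣ a.natAbs := Finset.prod_primes_dvd _
    (fun p hp => (hP p hp).1.prime) fun p hp => Int.natCast_dvd.1 (hdvd p hp)
  have hpow : N ^ P.card ≤ ∏ p ∈ P, p := Finset.pow_card_le_prod _ _ _ fun p hp => (hP p hp).2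
  exact (hpow.trans (Nat.le_of_dvd (Int.natAbs_pos.2 ha) hprod)).not_gt hlt

section CurveCount

variable {F : ℤ[X][X]} {D : ℕ}

lemma card_le_of_nonsingular_mod_prime (hF : F.Monic)
    (hirr : Irreducible (F.map (algebraMap ℤ[X] (FractionRing ℤ[X]))))
    (hFD : ∀ k, (F.coeff k).natDegree ≤ D) (hd : 0 < F.natDegree) {M : ℕ} (hM : 0 < M) {p : ℕ}
    (hp : p.Prime) {H B : ℝ} (hH : 0 < H) (hB : 0 < B)
    (hsize : (2 * (F.natDegree * M : ℕ)) ^ 2 * H ^ (M - 1) * B ^ (F.natDegree - 1) ≤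
      (p : ℝ) ^ (F.natDegree * M - 1)) (S : Finset ℤ) (z : ℤ → ℤ)
    (hS : ∀ t ∈ S, |(t : ℝ)| ≤ H ∧ |(z t : ℝ)| ≤ B ∧ F.evalEval t (z t) = 0 ∧
      ¬ (p : ℤ) ∣ (derivative F).evalEval t (z t)) :
    S.card ≤ 2 * F.natDegree * (D + M) * (p * F.natDegree) := by
  classical
  have : Fact p.Prime := ⟨hp⟩
  let Fp : (ZMod p)[X][X] := F.map (mapRingHom (Int.castRingHom (ZMod p)))
  let residue (t : ℤ) : ZMod p × ZMod p := (t, z t)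
  have hmem : ∀ t ∈ S, residue t ∈
      Finset.univ.filter fun x : ZMod p × ZMod p => Fp.evalEval x.1 x.2 = 0 := fun t ht => by
    have := map_mapRingHom_evalEval (Int.castRingHom (ZMod p)) F t (z t)
    rw [(hS t ht).2.2.1, map_zero] at this
    simpa [residue] using this
  have hclass : ∀ c ∈ Finset.univ.filter fun x : ZMod p × ZMod p => Fp.evalEval x.1 x.2 = 0,
      (S.filter fun t => residue t = c).card ≤ 2 * F.natDegree * (D + M) := by
    intro c _
    rcases (S.filter fun t => residue t = c).eq_empty_or_nonempty with
      hempty | ⟨t₀, ht₀⟩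
    · simp [hempty]
    obtain ⟨ht₀S, rfl⟩ := Finset.mem_filter.1 ht₀
    have hns : IsCoprime (p : ℤ) ((derivative F).evalEval t₀ (z t₀)) :=
      (Nat.prime_iff_prime_int.1 hp).coprime_iff_not_dvd.2 (hS t₀ ht₀S).2.2.2
    obtain ⟨G, hG0, hGd, hGM, hGz⟩ :=
      exists_auxiliary_polynomial F hns hd hM hp.pos hH hB hsize
    refine card_le_of_common_zeros hirr hG0 hGd (fun k => (hFD k).trans (by lia))
      (fun k => (hGM k).trans (by lia)) _ fun t ht => ?_
    obtain ⟨htS, hclass⟩ := Finset.mem_filter.1 ht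
    obtain ⟨htH, hzB, hFz, -⟩ := hS t htS
    obtain ⟨ht, hz⟩ := Prod.ext_iff.1 hclass.symm
    exact ⟨z t, hFz, hGz t (z t) htH hzB ((ZMod.intCast_eq_intCast_iff_dvd_sub _ _ _).1 ht)
      ((ZMod.intCast_eq_intCast_iff_dvd_sub _ _ _).1 hz) hFz⟩
  calc S.card ≤ 2 * F.natDegree * (D + M) *
        (Finset.univ.filter fun x : ZMod p × ZMod p => Fp.evalEval x.1 x.2 = 0).card :=
        Finset.card_le_mul_card_image_of_maps_to hmem _ hclass
    _ ≤ 2 * F.natDegree * (D + M) * (p * F.natDegree) := by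
        refine Nat.mul_le_mul_left _ ((card_zeros_le (hF.map _)).trans ?_)
        rw [ZMod.card, hF.natDegree_map]

lemma card_le_of_singular (hirr : Irreducible (F.map (algebraMap ℤ[X] (FractionRing ℤ[X]))))
    (hFD : ∀ k, (F.coeff k).natDegree ≤ D) (hd : 0 < F.natDegree) (S : Finset ℤ)
    (hS : ∀ t ∈ S, ∃ z : ℤ, F.evalEval t z = 0 ∧ (derivative F).evalEval t z = 0) :
    S.card ≤ 2 * F.natDegree * D := by
  refine card_le_of_common_zeros hirr (fun h => ?_) (natDegree_derivative_lt hd.ne') hFD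
    (fun k => ?_) S hS
  · exact hd.ne' (derivative_eq_zero.1 h)
  · rw [coeff_derivative, ← Nat.cast_succ]
    refine natDegree_mul_le.trans ?_
    rw [natDegree_natCast, add_zero]
    exact hFD _

lemma card_le_of_large_primes (hF : F.Monic)
    (hirr : Irreducible (F.map (algebraMap ℤ[X] (FractionRing ℤ[X]))))
    (hFD : ∀ k, (F.coeff k).natDegree ≤ D) (hd : 0 < F.natDegree) {M : ℕ} (hM : 0 < M)
    {P : Finset ℕ} {N : ℕ} (hP : ∀ p ∈ P, p.Prime ∧ N ≤ p) {H B : ℝ} (hH : 0 < H) (hB : 0 < B)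
    (hsize : (2 * (F.natDegree * M : ℕ)) ^ 2 * H ^ (M - 1) * B ^ (F.natDegree - 1) ≤
      (N : ℝ) ^ (F.natDegree * M - 1)) (hBN : B < (N : ℝ) ^ P.card) (S : Finset ℤ)
    (hS : ∀ t ∈ S, |(t : ℝ)| ≤ H ∧ ∃ z : ℤ, |(z : ℝ)| ≤ B ∧ F.evalEval t z = 0 ∧
      |(((derivative F).evalEval t z : ℤ) : ℝ)| ≤ B) :
    S.card ≤ 2 * F.natDegree * (D + M) * (1 + ∑ p ∈ P, p * F.natDegree) := by
  classical
  choose! z hz using fun t ht => (hS t ht).2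
  have hcover : S ⊆ S.filter (fun t => (derivative F).evalEval t (z t) = 0) ∪
      P.biUnion fun p => S.filter fun t => ¬ (p : ℤ) ∣ (derivative F).evalEval t (z t) := by
    intro t ht
    simp only [Finset.mem_union, Finset.mem_filter, ht, true_and, Finset.mem_biUnion]
    refine or_iff_not_imp_left.2 fun hsing => exists_prime_not_dvd hP hsing ?_
    have habs := (hz t ht).2.2.trans_lt hBN
    rw [← Int.cast_abs, Int.abs_eq_natAbs] at habs
    exact_mod_cast habs
  have hsing : (S.filter fun t => (derivative F).evalEval t (z t) = 0).card ≤
      2 * F.natDegree * (D + M) := by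
    refine (card_le_of_singular hirr hFD hd _ fun t ht => ?_).trans
      (Nat.mul_le_mul_left _ (Nat.le_add_right _ _))
    obtain ⟨htS, hsing⟩ := Finset.mem_filter.1 ht
    exact ⟨z t, (hz t htS).2.1, hsing⟩
  have hnonsing : ∀ p ∈ P, (S.filter fun t =>
      ¬ (p : ℤ) ∣ (derivative F).evalEval t (z t)).card ≤
        2 * F.natDegree * (D + M) * (p * F.natDegree) := by
    intro p hp
    have hsize' := hsize.trans (pow_le_pow_left₀ (Nat.cast_nonneg _)
      (Nat.cast_le.2 (hP p hp).2) (F.natDegree * M - 1))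
    refine card_le_of_nonsingular_mod_prime hF hirr hFD hd hM (hP p hp).1 hH hB hsize' _ z
      fun t ht => ?_
    obtain ⟨htS, hns⟩ := Finset.mem_filter.1 ht
    exact ⟨(hS t htS).1, (hz t htS).1, (hz t htS).2.1, hns⟩
  calc S.card ≤ _ := Finset.card_le_card hcover
    _ ≤ _ := Finset.card_union_le _ _
    _ ≤ 2 * F.natDegree * (D + M) + ∑ p ∈ P, 2 * F.natDegree * (D + M) * (p * F.natDegree) :=
        add_le_add hsing (Finset.card_biUnion_le.trans (Finset.sum_le_sum hnonsing))
    _ = _ := by rw [← Finset.mul_sum]; ring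

lemma card_le_mul_of_size_le (hF : F.Monic)
    (hirr : Irreducible (F.map (algebraMap ℤ[X] (FractionRing ℤ[X]))))
    (hFD : ∀ k, (F.coeff k).natDegree ≤ D) (hd : 0 < F.natDegree) {M : ℕ} (hM : 0 < M)
    {H B T : ℝ} (hH : 0 < H) (hB : 0 < B) (hT : 1 ≤ T)
    (hsize : (2 * (F.natDegree * M : ℕ)) ^ 2 * H ^ (M - 1) * B ^ (F.natDegree - 1) ≤
      T ^ (F.natDegree * M - 1)) {k : ℕ} (hBT : B < T ^ k) (S : Finset ℤ)
    (hS : ∀ t ∈ S, |(t : ℝ)| ≤ H ∧ ∃ z : ℤ, |(z : ℝ)| ≤ B ∧ F.evalEval t z = 0 ∧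
      |(((derivative F).evalEval t z : ℤ) : ℝ)| ≤ B) :
    (S.card : ℝ) ≤ 2 * F.natDegree * (D + M) * (1 + k * (2 ^ k * 2) * F.natDegree) * T := by
  obtain ⟨N, hTN, hNT⟩ : ∃ N : ℕ, T ≤ N ∧ N ≤ 2 * T :=
    ⟨⌈T⌉₊, Nat.le_ceil _, by linarith [Nat.ceil_lt_add_one (zero_le_one.trans hT)]⟩
  obtain ⟨P, hPcard, hP⟩ := exists_primes_between
    (Nat.cast_pos.1 (zero_lt_one.trans_le (hT.trans hTN))) k
  have hcount := card_le_of_large_primes hF hirr hFD hd hM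
    (fun p hp => ⟨(hP p hp).1, (hP p hp).2.1⟩) hH hB
    (hsize.trans (pow_le_pow_left₀ (by linarith) hTN _))
    (hBT.trans_le (hPcard ▸ pow_le_pow_left₀ (by linarith) hTN _)) S hS
  have hsum : ∑ p ∈ P, (p : ℝ) * F.natDegree ≤ k * (2 ^ k * 2) * F.natDegree * T := calc
    ∑ p ∈ P, (p : ℝ) * F.natDegree ≤ ∑ _p ∈ P, (2 : ℝ) ^ k * N * F.natDegree := by
        gcongr with p hp
        exact_mod_cast (hP p hp).2.2
    _ = k * ((2 : ℝ) ^ k * N * F.natDegree) := by rw [Finset.sum_const, hPcard, nsmul_eq_mul]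
    _ ≤ k * ((2 : ℝ) ^ k * (2 * T) * F.natDegree) := by gcongr
    _ = k * (2 ^ k * 2) * F.natDegree * T := by ring
  calc (S.card : ℝ) ≤ 2 * F.natDegree * (D + M) * (1 + ∑ p ∈ P, (p : ℝ) * F.natDegree) := by
        exact_mod_cast hcount
    _ ≤ 2 * F.natDegree * (D + M) * (T + k * (2 ^ k * 2) * F.natDegree * T) := by gcongr
    _ = _ := by ring

end CurveCount

lemma pow_le_rpow_pow {d M c : ℕ} (hd : 0 < d) (hM : 0 < M) {ε : ℝ} (hε : 0 ≤ ε)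
    (hc : c ≤ (M - 1) * ε) {H : ℝ} (hH : 1 ≤ H) :
    H ^ (M - 1 + c * (d - 1)) ≤ (H ^ ((1 : ℝ) / d + ε)) ^ (d * M - 1) := by
  have hd1 : (1 : ℝ) ≤ d := by exact_mod_cast hd
  have hM1 : (1 : ℝ) ≤ M := by exact_mod_cast hM
  rw [← Real.rpow_natCast, ← Real.rpow_natCast, ← Real.rpow_mul (by linarith)]
  refine Real.rpow_le_rpow_of_exponent_le hH ?_
  push_cast [Nat.cast_pred hd, Nat.cast_pred hM, Nat.cast_pred (Nat.mul_pos hd hM)]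
  have hexp : ((1 : ℝ) / d + ε) * (d * M - 1) =
      M - 1 / d + (M - 1) * ε * (d - 1) + ε * (d - 1) + ε * (M - 1) := by
    field_simp
    ring
  have hinv : (1 : ℝ) / d ≤ 1 := div_le_one_of_le₀ hd1 (by linarith)
  have hcd : (c : ℝ) * (d - 1) ≤ (M - 1) * ε * (d - 1) :=
    mul_le_mul_of_nonneg_right hc (by linarith)
  have : 0 ≤ ε * (d - 1) := mul_nonneg hε (by linarith)
  have : 0 ≤ ε * (M - 1) := mul_nonneg hε (by linarith)
  linarith

lemma pow_mul_pow_le_rpow_pow {d M c : ℕ} (hd : 0 < d) (hdM : 1 < d * M) {ε : ℝ} (hε : 0 ≤ ε)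
    (hc : c ≤ (M - 1) * ε) {H A K : ℝ} (hH : 1 ≤ H) (hK : 1 ≤ K)
    (hAK : A * (c : ℝ) ^ (d - 1) ≤ K) :
    A * H ^ (M - 1) * (c * H ^ c) ^ (d - 1) ≤ (K * H ^ ((1 : ℝ) / d + ε)) ^ (d * M - 1) := by
  have hM : 0 < M := Nat.pos_of_mul_pos_left (by lia : 0 < d * M)
  calc A * H ^ (M - 1) * (c * H ^ c) ^ (d - 1)
      = A * (c : ℝ) ^ (d - 1) * H ^ (M - 1 + c * (d - 1)) := by ring
    _ ≤ K * (H ^ ((1 : ℝ) / d + ε)) ^ (d * M - 1) := by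
        gcongr
        exact pow_le_rpow_pow hd hM hε hc hH
    _ ≤ K ^ (d * M - 1) * (H ^ ((1 : ℝ) / d + ε)) ^ (d * M - 1) := by
        gcongr
        exact le_self_pow₀ hK (by lia)
    _ = _ := (mul_pow _ _ _).symm

lemma pow_le_rpow_pow_mul {d : ℕ} (hd : 0 < d) (c : ℕ) {ε H : ℝ} (hε : 0 ≤ ε) (hH : 1 ≤ H) :
    H ^ c ≤ (H ^ ((1 : ℝ) / d + ε)) ^ (d * c) := by
  rw [pow_mul, ← Real.rpow_mul_natCast (by linarith)]
  refine pow_le_pow_left₀ (by linarith) (Real.self_le_rpow_of_one_le hH ?_) c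
  have hd' : (0 : ℝ) < d := by exact_mod_cast hd
  rw [add_mul, one_div_mul_cancel hd'.ne']
  exact le_add_of_nonneg_right (by positivity)

/-- The bound of Bombieri and Pila, in the form of Heath-Brown. -/
theorem exists_card_integer_points_le {d c : ℕ} (hd : 0 < d) (hc : 0 < c) (D : ℕ) {ε : ℝ}
    (hε : 0 < ε) :
    ∃ K : ℝ, ∀ H : ℝ, 1 ≤ H → ∀ F : ℤ[X][X], F.Monic → F.natDegree = d →
      (∀ k, (F.coeff k).natDegree ≤ D) →
      Irreducible (F.map (algebraMap ℤ[X] (FractionRing ℤ[X]))) →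
      ∀ S : Finset ℤ, (∀ t ∈ S, |(t : ℝ)| ≤ H ∧ ∃ z : ℤ, |(z : ℝ)| ≤ c * H ^ c ∧
        F.evalEval t z = 0 ∧ |(((derivative F).evalEval t z : ℤ) : ℝ)| ≤ c * H ^ c) →
      (S.card : ℝ) ≤ K * H ^ ((1 : ℝ) / d + ε) := by
  obtain ⟨M, hM, hcM⟩ : ∃ M : ℕ, 1 < M ∧ c ≤ (M - 1) * ε := by
    obtain ⟨m, hm⟩ := exists_nat_ge ((c : ℝ) / ε)
    refine ⟨m + 2, by lia, (div_le_iff₀ hε).1 ?_⟩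
    push_cast
    linarith
  have hc1 : (1 : ℝ) ≤ c := by exact_mod_cast hc
  have hdM : 1 < d * M := hM.trans_le (Nat.le_mul_of_pos_left _ hd)
  have hdM' : (1 : ℝ) < (d * M : ℕ) := by exact_mod_cast hdM
  let A : ℝ := (2 * (d * M : ℕ)) ^ 2
  have hA : 1 < A := one_lt_pow₀ (by linarith) two_ne_zero
  let K : ℝ := A * (c : ℝ) ^ d
  have hcK : (c : ℝ) < K :=
    (le_self_pow₀ hc1 hd.ne').trans_lt (lt_mul_of_one_lt_left (by positivity) hA)
  have hK : 1 ≤ K := hc1.trans hcK.le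
  refine ⟨2 * d * (D + M) * (1 + (d * c : ℕ) * (2 ^ (d * c) * 2) * d) * K,
    fun H hH F hF hFd hFD hirr S hS => ?_⟩
  let T : ℝ := H ^ ((1 : ℝ) / d + ε)
  have hKT : 1 ≤ K * T :=
    one_le_mul_of_one_le_of_one_le hK (Real.one_le_rpow hH (by positivity))
  have hAK : A * (c : ℝ) ^ (d - 1) ≤ K :=
    mul_le_mul_of_nonneg_left (pow_le_pow_right₀ hc1 (Nat.sub_le d 1)) (by positivity)
  have hsize := pow_mul_pow_le_rpow_pow hd hdM hε.le hcM hH hK hAK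
  have hcHT : c * H ^ c < (K * T) ^ (d * c) := calc
    c * H ^ c < K * H ^ c := mul_lt_mul_of_pos_right hcK (by positivity)
    _ ≤ K ^ (d * c) * T ^ (d * c) := mul_le_mul (le_self_pow₀ hK (Nat.mul_pos hd hc).ne')
        (pow_le_rpow_pow_mul hd c hε.le hH) (by positivity) (by positivity)
    _ = (K * T) ^ (d * c) := (mul_pow _ _ _).symm
  subst hFd
  refine (card_le_mul_of_size_le hF hirr hFD hd (by lia) (by linarith) (by positivity) hKT hsize
    hcHT S hS).trans_eq ?_
  simp only [T]
  ring

/-! ### Reducible polynomials -/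

/-- The monic integer polynomials of degree `d` and height at most `R`. -/
def monicBox (d : ℕ) (R : ℝ) : Set ℤ[X] :=
  {f | f.Monic ∧ f.natDegree = d ∧ ∀ j, |(f.coeff j : ℝ)| ≤ R}

lemma finite_ncard_monic_le_prod (d : ℕ) {R : ℕ → ℝ} (hR : ∀ j < d, 0 ≤ R j) :
    {f : ℤ[X] | f.Monic ∧ f.natDegree = d ∧ ∀ j < d, |(f.coeff j : ℝ)| ≤ R j}.Finite ∧
    ({f : ℤ[X] | f.Monic ∧ f.natDegree = d ∧ ∀ j < d, |(f.coeff j : ℝ)| ≤ R j}.ncard : ℝ) ≤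
      ∏ j ∈ Finset.range d, (2 * R j + 1) := by
  let B₁ : Fin (d + 1) → ℝ := Fin.snoc (fun j => -R j) 1
  let B₂ : Fin (d + 1) → ℝ := Fin.snoc (fun j => R j) 1
  have hbox : (boxPoly d B₁ B₂).ncard = ∏ j : Fin d, (2 * ⌊R j⌋₊ + 1) := by
    rw [ncard_boxPoly, Fin.prod_univ_castSucc]
    simp only [B₁, B₂, Fin.snoc_castSucc, Fin.snoc_last, Int.ceil_neg, Int.floor_one, Int.ceil_one,
      sub_self, zero_add, Int.toNat_one, mul_one]
    refine Finset.prod_congr rfl fun j _ => ?_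
    rw [← Int.natCast_floor_eq_floor (hR j j.2)]
    lia
  have hsub : {f : ℤ[X] | f.Monic ∧ f.natDegree = d ∧ ∀ j < d, |(f.coeff j : ℝ)| ≤ R j} ⊆
      boxPoly d B₁ B₂ := by
    rintro f ⟨hf, rfl, hfR⟩
    refine ⟨le_rfl, Fin.lastCases ?_ fun j => ?_⟩
    · simp [B₁, B₂, hf.leadingCoeff]
    · simpa only [B₁, B₂, Fin.snoc_castSucc, Fin.val_castSucc, abs_le] using hfR j j.2
  have hfin : (boxPoly d B₁ B₂).Finite :=
    Set.finite_of_ncard_ne_zero (hbox ▸ Finset.prod_ne_zero_iff.2 fun _ _ => by lia)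
  refine ⟨hfin.subset hsub, (Nat.cast_le.2 (Set.ncard_le_ncard hsub hfin)).trans ?_⟩
  rw [hbox, Finset.prod_range, Nat.cast_prod]
  refine Finset.prod_le_prod (fun _ _ => by positivity) fun j _ => ?_
  push_cast
  linarith [Nat.floor_le (hR j j.2)]

lemma finite_monicBox (d : ℕ) {R : ℝ} (hR : 0 ≤ R) : (monicBox d R).Finite := by
  refine (finite_ncard_monic_le_prod d (R := fun _ => R) fun _ _ => hR).1.subset ?_
  rintro f ⟨hf, hfd, hfR⟩
  exact ⟨hf, hfd, fun j _ => hfR j⟩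

lemma ncard_monicBox_le (d : ℕ) {R : ℝ} (hR : 1 ≤ R) :
    ((monicBox d R).ncard : ℝ) ≤ (3 * R) ^ d := by
  obtain ⟨hfin, hcard⟩ := finite_ncard_monic_le_prod d (R := fun _ => R) fun _ _ => by linarith
  calc ((monicBox d R).ncard : ℝ)
      ≤ ({f : ℤ[X] | f.Monic ∧ f.natDegree = d ∧ ∀ j < d, |(f.coeff j : ℝ)| ≤ R}.ncard : ℝ) := by
        refine Nat.cast_le.2 (Set.ncard_le_ncard ?_ hfin)
        rintro f ⟨hf, hfd, hfR⟩
        exact ⟨hf, hfd, fun j _ => hfR j⟩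
    _ ≤ _ := hcard
    _ = (2 * R + 1) ^ d := by rw [Finset.prod_const, Finset.card_range]
    _ ≤ (3 * R) ^ d := pow_le_pow_left₀ (by linarith) (by linarith) d

lemma mahlerMeasure_le_of_abs_coeff_le (f : ℤ[X]) {H : ℝ} (hf : ∀ j, |(f.coeff j : ℝ)| ≤ H) :
    (f.map (Int.castRingHom ℂ)).mahlerMeasure ≤ (f.natDegree + 1) * H := by
  refine (mahlerMeasure_le_sum_norm_coeff _).trans ?_
  rw [sum_over_range _ (fun _ => norm_zero),
    natDegree_map_eq_of_injective (RingHom.injective_int _)]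
  refine (Finset.sum_le_card_nsmul _ _ H fun j _ => ?_).trans_eq (by simp)
  simpa using hf j

lemma abs_coeff_le_two_pow_mul_mahlerMeasure (g : ℤ[X]) (j : ℕ) :
    |(g.coeff j : ℝ)| ≤ 2 ^ g.natDegree * (g.map (Int.castRingHom ℂ)).mahlerMeasure := by
  have hcoeff := norm_coeff_le_choose_mul_mahlerMeasure j (g.map (Int.castRingHom ℂ))
  rw [coeff_map, natDegree_map_eq_of_injective (RingHom.injective_int _), eq_intCast,
    Complex.norm_intCast] at hcoeff
  refine hcoeff.trans (mul_le_mul_of_nonneg_right ?_ (mahlerMeasure_nonneg _))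
  exact_mod_cast Nat.choose_le_two_pow _ _

lemma exists_dyadic_factor_box {g h : ℤ[X]} (hg : g.Monic) (hh : h.Monic) {x : ℝ}
    (hx : ((g * h).map (Int.castRingHom ℂ)).mahlerMeasure ≤ x) :
    ∃ i : ℕ, (2 : ℝ) ^ i ≤ x ∧
      g ∈ monicBox g.natDegree (2 ^ ((g * h).natDegree + 1) * 2 ^ i) ∧
      h ∈ monicBox h.natDegree (2 ^ ((g * h).natDegree + 1) * (x / 2 ^ i)) := by
  rw [Polynomial.map_mul, mahlerMeasure_mul] at hx
  have hg1 := one_le_mahlerMeasure_of_ne_zero hg.ne_zero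
  have hh1 := one_le_mahlerMeasure_of_ne_zero hh.ne_zero
  set μ := (g.map (Int.castRingHom ℂ)).mahlerMeasure
  set ν := (h.map (Int.castRingHom ℂ)).mahlerMeasure
  obtain ⟨i, hiμ, hμi⟩ := exists_nat_pow_near hg1 (one_lt_two (α := ℝ))
  have hν : ν ≤ x / 2 ^ i := (le_div_iff₀' (by positivity)).2
    ((mul_le_mul_of_nonneg_right hiμ (by linarith)).trans hx)
  have hdeg := hg.natDegree_mul hh
  refine ⟨i, hiμ.trans ((le_mul_of_one_le_right (by linarith) hh1).trans hx),
    ⟨hg, rfl, fun j => ?_⟩, ⟨hh, rfl, fun j => ?_⟩⟩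
  · calc _ ≤ 2 ^ g.natDegree * μ := abs_coeff_le_two_pow_mul_mahlerMeasure g j
      _ ≤ 2 ^ (g * h).natDegree * 2 ^ (i + 1) := by
        gcongr
        exacts [one_le_two, by lia]
      _ = _ := by ring
  · calc _ ≤ 2 ^ h.natDegree * ν := abs_coeff_le_two_pow_mul_mahlerMeasure h j
      _ ≤ 2 ^ ((g * h).natDegree + 1) * (x / 2 ^ i) := by
        gcongr
        exacts [one_le_two, by lia]

lemma ncard_mul_monicBox_le {k n : ℕ} (hk : 0 < k) (hkn : k < n) {c Y Z : ℝ} (hc : 1 ≤ c)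
    (hY : 1 ≤ Y) (hZ : 1 ≤ Z) :
    ((Set.image2 (· * ·) (monicBox k (c * Y)) (monicBox (n - k) (c * Z))).ncard : ℝ) ≤
      (3 * c) ^ n * (Y * Z) ^ (n - 1) := by
  have hcY : 1 ≤ c * Y := one_le_mul_of_one_le_of_one_le hc hY
  have hcZ : 1 ≤ c * Z := one_le_mul_of_one_le_of_one_le hc hZ
  rw [← Set.image_uncurry_prod]
  calc _ ≤ ((monicBox k (c * Y) ×ˢ monicBox (n - k) (c * Z)).ncard : ℝ) :=
        Nat.cast_le.2 (Set.ncard_image_le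
          ((finite_monicBox k (by linarith)).prod (finite_monicBox (n - k) (by linarith))))
    _ ≤ (3 * (c * Y)) ^ k * (3 * (c * Z)) ^ (n - k) := by
        rw [Set.ncard_prod, Nat.cast_mul]
        gcongr <;> exact ncard_monicBox_le _ ‹_›
    _ = (3 * c) ^ (k + (n - k)) * (Y ^ k * Z ^ (n - k)) := by ring
    _ ≤ (3 * c) ^ n * (Y ^ (n - 1) * Z ^ (n - 1)) := by
        rw [Nat.add_sub_cancel' hkn.le]
        gcongr <;> first | assumption | lia
    _ = _ := by rw [mul_pow Y Z]

lemma natLog_two_add_one_le {x ε : ℝ} (hx : 1 ≤ x) (hε : 0 < ε) :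
    ((Nat.log 2 ⌊x⌋₊ + 1 : ℕ) : ℝ) ≤ (1 + 1 / (ε * Real.log 2)) * x ^ ε := by
  have hlog2 : 0 < Real.log 2 := Real.log_pos one_lt_two
  have hpow : (2 : ℝ) ^ Nat.log 2 ⌊x⌋₊ ≤ x := by
    refine le_trans ?_ (Nat.floor_le (zero_le_one.trans hx))
    exact_mod_cast Nat.pow_log_le_self 2 (Nat.floor_pos.2 hx).ne'
  have hlog := (Real.log_le_log (by positivity) hpow).trans
    (Real.log_le_rpow_div (zero_le_one.trans hx) hε)
  rw [Real.log_pow, ← le_div_iff₀ hlog2, div_div] at hlog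
  have hone : 1 ≤ x ^ ε := Real.one_le_rpow hx hε.le
  push_cast
  calc (Nat.log 2 ⌊x⌋₊ : ℝ) + 1 ≤ x ^ ε / (ε * Real.log 2) + x ^ ε := add_le_add hlog hone
    _ = _ := by ring

lemma reducible_subset_iUnion {n : ℕ} (hn : 0 < n) (H : ℝ) :
    {f ∈ monicBox n H | ¬ Irreducible f} ⊆
      ⋃ q ∈ Finset.Ico 1 n ×ˢ Finset.range (Nat.log 2 ⌊(n + 1) * H⌋₊ + 1),
        Set.image2 (· * ·) (monicBox q.1 (2 ^ (n + 1) * 2 ^ q.2))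
          (monicBox (n - q.1) (2 ^ (n + 1) * ((n + 1) * H / 2 ^ q.2))) := by
  rintro f ⟨⟨hf, hfn, hfH⟩, hred⟩
  have hf1 : f ≠ 1 := by
    rintro rfl
    exact hn.ne' (hfn ▸ natDegree_one)
  rw [hf.irreducible_iff_natDegree'] at hred
  push Not at hred
  obtain ⟨g, h, hg, hh, rfl, hdeg⟩ := hred hf1
  have hsum := hg.natDegree_mul hh
  rw [Finset.mem_Ioc] at hdeg
  obtain ⟨i, hi, hgi, hhi⟩ :=
    exists_dyadic_factor_box hg hh (mahlerMeasure_le_of_abs_coeff_le _ hfH)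
  rw [hfn] at hi hgi hhi
  have hlog : i ≤ Nat.log 2 ⌊(n + 1) * H⌋₊ :=
    Nat.le_log_of_pow_le one_lt_two (Nat.le_floor (by exact_mod_cast hi))
  refine Set.mem_biUnion (x := (g.natDegree, i)) ?_ (Set.mem_image2_of_mem hgi ?_)
  · simp only [Finset.coe_product, Set.mem_prod, Finset.mem_coe, Finset.mem_Ico, Finset.mem_range]
    lia
  · rwa [show n - g.natDegree = h.natDegree by lia]

theorem exists_ncard_reducible_le {n : ℕ} (hn : 0 < n) {ε : ℝ} (hε : 0 < ε) :
    ∃ K : ℝ, 0 ≤ K ∧ ∀ H : ℝ, 1 ≤ H →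
      ({f ∈ monicBox n H | ¬ Irreducible f}.ncard : ℝ) ≤ K * H ^ ((n : ℝ) - 1 + ε) := by
  have : 0 < Real.log 2 := Real.log_pos one_lt_two
  refine ⟨n * ((1 + 1 / (ε * Real.log 2)) * (n + 1) ^ ε) *
    ((3 * 2 ^ (n + 1)) ^ n * (n + 1) ^ (n - 1)), by positivity, fun H hH => ?_⟩
  have hH0 : 0 < H := by linarith
  let x : ℝ := (n + 1) * H
  have hx : 1 ≤ x := one_le_mul_of_one_le_of_one_le (by simp) hH
  let J := Finset.Ico 1 n ×ˢ Finset.range (Nat.log 2 ⌊x⌋₊ + 1)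
  let P (q : ℕ × ℕ) : Set ℤ[X] := Set.image2 (· * ·) (monicBox q.1 (2 ^ (n + 1) * 2 ^ q.2))
    (monicBox (n - q.1) (2 ^ (n + 1) * (x / 2 ^ q.2)))
  have hfin : (⋃ q ∈ J, P q).Finite := J.finite_toSet.biUnion fun q _ =>
    (finite_monicBox _ (by positivity)).image2 _ (finite_monicBox _ (by positivity))
  have hP : ∀ q ∈ J, ((P q).ncard : ℝ) ≤ (3 * 2 ^ (n + 1)) ^ n * x ^ (n - 1) := by
    rintro ⟨k, i⟩ hq
    simp only [J, Finset.mem_product, Finset.mem_Ico, Finset.mem_range, Nat.lt_succ_iff] at hq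
    have hi : (2 : ℝ) ^ i ≤ x := by
      refine le_trans ?_ (Nat.floor_le (by linarith))
      exact_mod_cast Nat.pow_le_of_le_log (Nat.floor_pos.2 hx).ne' hq.2
    have hbound := ncard_mul_monicBox_le (c := 2 ^ (n + 1)) (Y := 2 ^ i) hq.1.1 hq.1.2
      (one_le_pow₀ one_le_two) (one_le_pow₀ one_le_two) ((one_le_div₀ (by positivity)).2 hi)
    rwa [mul_div_cancel₀ _ (by positivity)] at hbound
  have hJ : (J.card : ℝ) ≤ n * ((1 + 1 / (ε * Real.log 2)) * x ^ ε) := by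
    rw [Finset.card_product, Nat.card_Ico, Finset.card_range, Nat.cast_mul]
    gcongr
    exacts [Nat.sub_le n 1, natLog_two_add_one_le hx hε]
  calc _ ≤ ((⋃ q ∈ J, P q).ncard : ℝ) :=
        Nat.cast_le.2 (Set.ncard_le_ncard (reducible_subset_iUnion hn H) hfin)
    _ ≤ ∑ q ∈ J, ((P q).ncard : ℝ) := by exact_mod_cast J.set_ncard_biUnion_le P
    _ ≤ J.card * ((3 * 2 ^ (n + 1)) ^ n * x ^ (n - 1)) := by
        simpa only [nsmul_eq_mul] using Finset.sum_le_card_nsmul J _ _ hP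
    _ ≤ n * ((1 + 1 / (ε * Real.log 2)) * x ^ ε) * ((3 * 2 ^ (n + 1)) ^ n * x ^ (n - 1)) := by
        gcongr
    _ = _ := by
        rw [Real.rpow_add hH0, ← Nat.cast_pred hn, Real.rpow_natCast,
          Real.mul_rpow (by positivity) hH0.le, mul_pow _ H]
        ring

/-! ### The index of a permutation group -/

section Imprimitive

open MulAction Pointwise
open scoped Nat

lemma choose_half_succ_le (m : ℕ) : (m + 1).choose ((m + 1) / 2) ≤ 2 * m.choose (m / 2) := by
  rcases Nat.eq_zero_or_pos m with rfl | hm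
  · simp
  obtain ⟨k, hk⟩ : ∃ k, (m + 1) / 2 = k + 1 := ⟨(m + 1) / 2 - 1, by lia⟩
  rw [hk, Nat.choose_succ_succ, two_mul]
  exact add_le_add (Nat.choose_le_middle k m) (Nat.choose_le_middle (k + 1) m)

lemma choose_half_add_le (m a : ℕ) : (m + a).choose ((m + a) / 2) ≤ 2 ^ a * m.choose (m / 2) := by
  induction a with
  | zero => simp
  | succ a ih =>
    rw [pow_succ', mul_assoc]
    exact (choose_half_succ_le (m + a)).trans (Nat.mul_le_mul_left 2 ih)

lemma two_pow_mul_factorial_mul_factorial_le {m k : ℕ} (hm : 3 ≤ m) (hk : 0 < k)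
    (hkm : k ≤ m) : 2 ^ (k + 1) * k ! * m ! ≤ (m + k)! := by
  induction k, hk using Nat.le_induction with
  | base =>
    rw [Nat.factorial_succ m]
    exact Nat.mul_le_mul_right _ (by simpa using hm)
  | succ k _ ih =>
    calc 2 ^ (k + 1 + 1) * (k + 1)! * m ! = (2 * (k + 1)) * (2 ^ (k + 1) * k ! * m !) := by
          rw [Nat.factorial_succ k]
          ring
      _ ≤ (m + k + 1) * (m + k)! := Nat.mul_le_mul (by lia) (ih (by lia))
      _ = (m + (k + 1))! := (Nat.factorial_succ (m + k)).symm

lemma choose_half_mul_wreath_card_le {a b : ℕ} (ha : 2 ≤ a) (hb : 2 ≤ b) :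
    (a * b).choose (a * b / 2) * (a ! ^ b * b !) ≤ 2 * (a * b)! := by
  induction b, hb using Nat.le_induction with
  | base =>
    have hchoose := Nat.choose_mul_factorial_mul_factorial (Nat.le_mul_of_pos_right a two_pos)
    rw [show a * 2 - a = a by lia] at hchoose
    rw [Nat.mul_div_cancel a two_pos, ← hchoose, Nat.factorial_two]
    exact (by ring : _ = _).le
  | succ b hb ih =>
    have hab : 2 * a ≤ a * b := by nlinarith
    have hfac : 2 ^ a * ((b + 1) * a !) * (a * b)! ≤ (a * b + a)! := by
      obtain ⟨c, rfl⟩ : ∃ c, a = c + 1 := ⟨a - 1, by lia⟩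
      calc 2 ^ (c + 1) * ((b + 1) * (c + 1)!) * ((c + 1) * b)!
          = ((c + 1) * b + c + 1) * (2 ^ (c + 1) * c ! * ((c + 1) * b)!) := by
            rw [Nat.factorial_succ c]
            ring
        _ ≤ ((c + 1) * b + c + 1) * ((c + 1) * b + c)! := Nat.mul_le_mul_left _
            (two_pow_mul_factorial_mul_factorial_le (by lia) (by lia) (by lia))
        _ = ((c + 1) * b + (c + 1))! := (Nat.factorial_succ _).symm
    rw [mul_add, mul_one, pow_succ, Nat.factorial_succ]
    calc (a * b + a).choose ((a * b + a) / 2) * (a ! ^ b * a ! * ((b + 1) * b !))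
        ≤ (2 ^ a * (a * b).choose (a * b / 2)) * (a ! ^ b * a ! * ((b + 1) * b !)) :=
          Nat.mul_le_mul_right _ (choose_half_add_le (a * b) a)
      _ = (2 ^ a * ((b + 1) * a !)) * ((a * b).choose (a * b / 2) * (a ! ^ b * b !)) := by ring
      _ ≤ (2 ^ a * ((b + 1) * a !)) * (2 * (a * b)!) := Nat.mul_le_mul_left _ ih
      _ = 2 * (2 ^ a * ((b + 1) * a !) * (a * b)!) := by ring
      _ ≤ 2 * (a * b + a)! := Nat.mul_le_mul_left _ hfac

lemma card_le_of_equivariant {G α β : Type*} [Group G] [Finite G] [MulAction G α]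
    [FaithfulSMul G α] [MulAction G β] [Finite α] [Finite β] {f : α → β} {a : ℕ}
    (hf : ∀ (g : G) x, f (g • x) = g • f x) (ha : ∀ y, Nat.card {x // f x = y} = a) :
    Nat.card G ≤ a ! ^ Nat.card β * (Nat.card β)! := by
  classical
  have := Fintype.ofFinite α
  have := Fintype.ofFinite β
  let ρ : G →* Equiv.Perm β := toPermHom G β
  have hrange : Nat.card ρ.range ≤ (Nat.card β)! :=
    (Subgroup.card_le_card_group _).trans_eq Nat.card_perm
  have hker : Nat.card ρ.ker ≤ a ! ^ Nat.card β := by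
    let ι (k : ρ.ker) : {σ : Equiv.Perm α // f ∘ σ = f} := ⟨toPerm (k : G), funext fun x =>
      (hf k x).trans (congrFun (congrArg DFunLike.coe (show ρ k = 1 from k.2)) (f x))⟩
    have hι : Function.Injective ι := fun k k' h =>
      Subtype.ext (toPerm_injective (Subtype.ext_iff.1 h))
    refine (Nat.card_le_card_of_injective ι hι).trans_eq ?_
    simp only [Nat.card_eq_fintype_card, DomMulAct.stabilizer_card]
    simp [← Nat.card_eq_fintype_card, ha]
  calc Nat.card G = Nat.card ρ.ker * Nat.card ρ.range := by
        rw [← Subgroup.index_ker, Subgroup.card_mul_index]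
    _ ≤ _ := Nat.mul_le_mul hker hrange

lemma card_le_of_isBlock {G α : Type*} [Group G] [Finite G] [MulAction G α] [FaithfulSMul G α]
    [IsPretransitive G α] [Finite α] {B : Set α} (hB : IsBlock G B) (hne : B.Nonempty) :
    Nat.card G ≤ B.ncard ! ^ (orbit G B).ncard * (orbit G B).ncard ! := by
  obtain ⟨x₀, hx₀⟩ := hne
  choose γ hγ using fun x : α => exists_smul_eq G x₀ x
  let f (x : α) : orbit G B := ⟨γ x • B, mem_orbit _ _⟩
  have hmem (x : α) : x ∈ (f x : Set α) := by
    simpa only [hγ] using Set.smul_mem_smul_set (a := γ x) hx₀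
  have hf_iff (c : orbit G B) (x : α) : f x = c ↔ x ∈ (c : Set α) := by
    refine ⟨fun h => h ▸ hmem x, fun hx => ?_⟩
    obtain ⟨_, g, rfl⟩ := c
    exact Subtype.ext (hB.smul_eq_smul_of_nonempty ⟨x, hmem x, hx⟩)
  refine card_le_of_equivariant (f := f)
    (fun g x => (hf_iff _ _).2 (Set.smul_mem_smul_set (hmem x))) fun c => ?_
  simp only [hf_iff]
  obtain ⟨_, g, rfl⟩ := c
  exact Set.ncard_smul_set g B

theorem choose_half_le_two_mul_index_of_isBlock {α : Type*} [Finite α]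
    (G : Subgroup (Equiv.Perm α)) [IsPretransitive G α] {B : Set α} (hB : IsBlock G B)
    (hnt : ¬ IsTrivialBlock B) :
    (Nat.card α).choose (Nat.card α / 2) ≤ 2 * G.index := by
  rw [IsTrivialBlock, not_or, Set.not_subsingleton_iff] at hnt
  have hmul := hB.ncard_block_mul_ncard_orbit_eq hnt.1.nonempty
  have hsize : 2 ≤ B.ncard := (Set.one_lt_ncard_iff_nontrivial (s := B)).2 hnt.1
  have hlt : B.ncard < Nat.card α := by
    rw [← Set.ncard_univ]
    exact Set.ncard_lt_ncard (Set.ssubset_univ_iff.2 hnt.2)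
  have hcount : 2 ≤ (orbit G B).ncard := by
    by_contra!
    have := Nat.mul_le_mul_left B.ncard (Nat.le_of_lt_succ this)
    lia
  have hchoose := choose_half_mul_wreath_card_le hsize hcount
  rw [hmul] at hchoose
  refine Nat.le_of_mul_le_mul_left ?_ (Nat.card_pos (α := G))
  calc Nat.card G * (Nat.card α).choose (Nat.card α / 2)
      ≤ _ * (Nat.card α).choose (Nat.card α / 2) :=
        Nat.mul_le_mul_right _ (card_le_of_isBlock hB hnt.1.nonempty)
    _ ≤ 2 * (Nat.card α)! := (mul_comm _ _).trans_le hchoose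
    _ = Nat.card G * (2 * G.index) := by
        rw [← Nat.card_perm, ← G.card_mul_index]
        ring

end Imprimitive

section Primitive

open MulAction
open scoped Nat

lemma isThreeCycle_mul_mul_inv_mul_inv {α : Type*} [Fintype α] [DecidableEq α]
    {x y : Equiv.Perm α} {a : α} (hx : x a ≠ a) (hy : y a ≠ a)
    (hxy : ∀ b, x b ≠ b → y b ≠ b → b = a) : (x * y * x⁻¹ * y⁻¹).IsThreeCycle := by
  have hxi {b c} : x b = x c ↔ b = c := x.injective.eq_iff
  have hyi {b c} : y b = y c ↔ b = c := y.injective.eq_iff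
  have hne : x a ≠ y a := fun h => hx (hxy _ (hxi.not.2 hx) (h ▸ hyi.not.2 hy))
  have hswap : x * y * x⁻¹ * y⁻¹ = Equiv.swap (x a) a * Equiv.swap (x a) (y a) := by
    rw [mul_inv_eq_iff_eq_mul, mul_inv_eq_iff_eq_mul]
    ext d
    simp only [Equiv.Perm.mul_apply]
    by_cases hd : x d = d <;> by_cases hd' : y d = d <;> grind
  rw [hswap]
  exact Equiv.Perm.isThreeCycle_swap_mul_swap_same hx hne hy.symm

/-- Bochert's argument: if a base `Δ` of minimal size had `#Δᶜ < #Δ`, then neither `Δᶜ` nor `Δ`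
minus a point would be a base, and the resulting elements of `G` would have a 3-cycle as
commutator. -/
lemma exists_two_mul_card_le_fixingSubgroup_eq_bot {α : Type*} [Fintype α] [DecidableEq α]
    {G : Subgroup (Equiv.Perm α)} (hG : IsPreprimitive G α) (hA : ¬ alternatingGroup α ≤ G) :
    ∃ Δ : Finset α, 2 * Δ.card ≤ Fintype.card α ∧ fixingSubgroup G (Δ : Set α) = ⊥ := by
  have hfix (Δ : Finset α) : fixingSubgroup G (Δ : Set α) = ⊥ ↔
      ∀ g ∈ G, (∀ x ∈ Δ, g x = x) → g = 1 := by
    simp [Subgroup.eq_bot_iff_forall, mem_fixingSubgroup_iff, Subgroup.smul_def]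
  obtain ⟨Δ, hΔ, hmin⟩ := exists_minimalFor_of_wellFoundedLT
    (fun Δ : Finset α => fixingSubgroup G (Δ : Set α) = ⊥) Finset.card
    ⟨Finset.univ, (hfix _).2 fun g _ h => Equiv.ext fun x => h x (Finset.mem_univ x)⟩
  have hmoved {Δ' : Finset α} (hcard : Δ'.card < Δ.card) :
      ∃ g ∈ G, (∀ x ∈ Δ', g x = x) ∧ g ≠ 1 := by
    by_contra! h
    exact hcard.not_ge (hmin ((hfix _).2 h) hcard.le)
  refine ⟨Δ, ?_, hΔ⟩
  by_contra! hlarge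
  obtain ⟨x, hxG, hx, hx1⟩ := hmoved (Δ' := Δᶜ) (by rw [Finset.card_compl]; lia)
  obtain ⟨a, hxa⟩ : ∃ a, x a ≠ a := by
    by_contra! h
    exact hx1 (Equiv.ext h)
  have haΔ : a ∈ Δ := by_contra fun h => hxa (hx a (Finset.mem_compl.2 h))
  obtain ⟨y, hyG, hy, hy1⟩ := hmoved (Finset.card_erase_lt_of_mem haΔ)
  have hya : y a ≠ a := fun h => hy1 <| (hfix Δ).1 hΔ y hyG fun z hz => by
    rcases eq_or_ne z a with rfl | hza
    · exact h
    · exact hy z (Finset.mem_erase.2 ⟨hza, hz⟩)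
  refine hA (Equiv.Perm.alternatingGroup_le_of_isPreprimitive_of_isThreeCycle_mem hG
    (isThreeCycle_mul_mul_inv_mul_inv hxa hya fun b hxb hyb => ?_)
    (G.mul_mem (G.mul_mem (G.mul_mem hxG hyG) (G.inv_mem hxG)) (G.inv_mem hyG)))
  by_contra hba
  have hbΔ : b ∈ Δ := by_contra fun h => hxb (hx b (Finset.mem_compl.2 h))
  exact hyb (hy b (Finset.mem_erase.2 ⟨hba, hbΔ⟩))

lemma exists_embedding_stabilizer_eq_bot {α : Type*} [Fintype α] [DecidableEq α]
    {G : Subgroup (Equiv.Perm α)} (hG : IsPreprimitive G α) (hA : ¬ alternatingGroup α ≤ G) :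
    ∃ k, 2 * k ≤ Fintype.card α ∧ ∃ w : Fin k ↪ α, stabilizer G w = ⊥ := by
  obtain ⟨Δ, hcard, hΔ⟩ := exists_two_mul_card_le_fixingSubgroup_eq_bot hG hA
  refine ⟨Δ.card, hcard, Δ.equivFin.symm.toEmbedding.trans (.subtype _), ?_⟩
  rw [eq_bot_iff, ← hΔ]
  intro g hg
  refine (mem_fixingSubgroup_iff _).2 fun x hx => ?_
  have hgx : g • (Δ.equivFin.symm (Δ.equivFin ⟨x, hx⟩) : α) =
      Δ.equivFin.symm (Δ.equivFin ⟨x, hx⟩) := DFunLike.congr_fun hg _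
  simpa only [Equiv.symm_apply_apply] using hgx

lemma card_eq_ncard_orbit {G X : Type*} [Group G] [MulAction G X] {x : X}
    (hx : stabilizer G x = ⊥) : Nat.card G = (orbit G x).ncard := by
  rw [← index_stabilizer, hx, Subgroup.index_bot]

lemma existsUnique_smul_eq {G X : Type*} [Group G] [MulAction G X] [Finite X] {x : X}
    (hx : stabilizer G x = ⊥) (hcard : Nat.card X ≤ Nat.card G) (u v : X) :
    ∃! g : G, g • u = v := by
  have horbit : orbit G x = Set.univ := Set.eq_of_subset_of_ncard_le (Set.subset_univ _)
    (by rwa [Set.ncard_univ, ← card_eq_ncard_orbit hx])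
  obtain ⟨a, rfl⟩ : u ∈ orbit G x := horbit ▸ Set.mem_univ u
  obtain ⟨b, rfl⟩ : v ∈ orbit G x := horbit ▸ Set.mem_univ v
  refine ⟨b * a⁻¹, by simp [smul_smul], fun g hg => ?_⟩
  have : b⁻¹ * (g * a) ∈ stabilizer G x := by
    simpa [mem_stabilizer_iff, mul_smul, inv_smul_eq_iff] using hg
  rw [hx, Subgroup.mem_bot, inv_mul_eq_one] at this
  exact eq_mul_inv_of_mul_eq this.symm

lemma factorial_sub_le_index {α : Type*} [Fintype α] {G : Subgroup (Equiv.Perm α)} {k : ℕ}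
    {w : Fin k ↪ α} (hw : stabilizer G w = ⊥) : (Fintype.card α - k)! ≤ G.index := by
  classical
  have hk : k ≤ Fintype.card α := by simpa using Fintype.card_le_of_embedding w
  have hcard : Nat.card G ≤ (Fintype.card α).descFactorial k := by
    rw [card_eq_ncard_orbit hw]
    refine (Set.ncard_le_card _).trans_eq ?_
    simp [Nat.card_eq_fintype_card, Fintype.card_embedding_eq]
  refine Nat.le_of_mul_le_mul_left ?_ (Nat.card_pos (α := G))
  calc Nat.card G * (Fintype.card α - k)!
      ≤ (Fintype.card α).descFactorial k * (Fintype.card α - k)! := Nat.mul_le_mul_right _ hcard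
    _ = Nat.card G * G.index := by
      rw [mul_comm, Nat.factorial_mul_descFactorial hk, G.card_mul_index, Nat.card_perm,
        Nat.card_eq_fintype_card]

lemma choose_half_le_two_mul_factorial {n : ℕ} (hn : 9 ≤ n) (h10 : n ≠ 10) :
    n.choose (n / 2) ≤ 2 * (n - n / 2)! := by
  induction n using Nat.strong_induction_on with
  | _ n ih =>
    obtain rfl | rfl | rfl | ⟨m, rfl, hm⟩ :
        n = 9 ∨ n = 11 ∨ n = 12 ∨ ∃ m, n = m + 2 ∧ 11 ≤ m := by
      rcases lt_or_ge n 13 with h | h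
      · lia
      · exact .inr (.inr (.inr ⟨n - 2, by lia, by lia⟩))
    · decide
    · decide
    · decide
    · calc (m + 2).choose ((m + 2) / 2) ≤ 2 ^ 2 * m.choose (m / 2) := choose_half_add_le m 2
        _ ≤ 2 ^ 2 * (2 * (m - m / 2)!) := Nat.mul_le_mul_left _ (ih m (by lia) (by lia) (by lia))
        _ ≤ 2 * ((m - m / 2 + 1) * (m - m / 2)!) := by
          have : 4 ≤ m - m / 2 + 1 := by lia
          nlinarith [(m - m / 2).factorial_pos]
        _ = 2 * (m + 2 - (m + 2) / 2)! := by
          rw [← Nat.factorial_succ, show m - m / 2 + 1 = m + 2 - (m + 2) / 2 by lia]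

section SharplyFiveTransitive

variable {α : Type*} {G : Subgroup (Equiv.Perm α)}

lemma eq_of_forall_mem_smul_eq (hG : ∀ u v : Fin 5 ↪ α, ∃! g : G, g • u = v) {g h : G}
    {s : Finset α} (hs : 5 ≤ s.card) (hgh : ∀ x ∈ s, g • x = h • x) : g = h := by
  obtain ⟨t, hts, ht⟩ := Finset.exists_subset_card_eq hs
  let u : Fin 5 ↪ α := (t.equivFinOfCardEq ht).symm.toEmbedding.trans (.subtype _)
  exact (hG u (h • u)).unique (DFunLike.ext _ _ fun i => hgh _ (hts (Subtype.prop _))) rfl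

lemma existsUnique_rotate_fix_fix (hG : ∀ u v : Fin 5 ↪ α, ∃! g : G, g • u = v) (p : Fin 3 ↪ α)
    {a b : α} (hab : a ≠ b) (ha : a ∉ Set.range p) (hb : b ∉ Set.range p) :
    ∃! g : G, (∀ i, g • p i = p (i + 1)) ∧ g • a = a ∧ g • b = b := by
  have hinj {q : Fin 3 → α} (hq : Function.Injective q) (hqp : ∀ i, q i ∈ Set.range p) :
      Function.Injective (Fin.append q ![a, b]) := by
    refine Fin.append_injective_iff.2 ⟨hq, ?_, fun i j => ?_⟩
    · simpa [Function.Injective] using ⟨hab, hab.symm⟩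
    · have := hqp i
      fin_cases j
      · exact ne_of_mem_of_not_mem this ha
      · exact ne_of_mem_of_not_mem this hb
  let u : Fin 5 ↪ α := ⟨Fin.append p ![a, b], hinj p.injective (by simp)⟩
  let v : Fin 5 ↪ α := ⟨Fin.append (fun i => p (i + 1)) ![a, b],
    hinj (p.injective.comp (add_left_injective 1)) (by simp)⟩
  refine (existsUnique_congr fun g => ?_).1 (hG u v)
  have hiff : g • u = v ↔ ∀ i, g • u i = v i := DFunLike.ext_iff
  rw [hiff]
  simp [u, v, Fin.forall_fin_succ, Fin.append, Fin.addCases, and_assoc]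

variable [Fintype α]

lemma disjoint_map_fixed [DecidableEq α] {p : Fin 3 ↪ α} {g : G}
    (hgp : ∀ i, g • p i = p (i + 1)) :
    Disjoint (Finset.univ.map p) (Finset.univ.filter fun x : α => g • x = x) := by
  simp [Finset.disjoint_left, hgp]

lemma card_fixed_eq_four [DecidableEq α] (hα : Fintype.card α = 10)
    (hG : ∀ u v : Fin 5 ↪ α, ∃! g : G, g • u = v) {p : Fin 3 ↪ α} {g : G}
    (hgp : ∀ i, g • p i = p (i + 1)) (hg : 2 ≤ (Finset.univ.filter fun x : α => g • x = x).card) :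
    (Finset.univ.filter fun x : α => g • x = x).card = 4 := by
  have hg3 : g ^ 3 = 1 := by
    refine eq_of_forall_mem_smul_eq hG
      (s := Finset.univ.map p ∪ Finset.univ.filter fun x : α => g • x = x) ?_ fun x hx => ?_
    · rw [Finset.card_union_of_disjoint (disjoint_map_fixed hgp), Finset.card_map, Finset.card_fin]
      lia
    · rw [pow_three, mul_smul, mul_smul, one_smul]
      obtain hx | hx := Finset.mem_union.1 hx
      · obtain ⟨i, -, rfl⟩ := Finset.mem_map.1 hx
        rw [hgp, hgp, hgp]
        fin_cases i <;> rfl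
      · simp only [(Finset.mem_filter.1 hx).2]
  have hlt : (Finset.univ.filter fun x : α => g • x = x).card < 5 := by
    by_contra! h5
    have : g = 1 := eq_of_forall_mem_smul_eq hG h5 fun x hx => by simpa using hx
    simpa [this] using hgp 0
  have hmod : (Finset.univ.filter fun x : α => g • x = x).card ≡ 10 [MOD 3] := by
    have : Fact (Nat.Prime 3) := ⟨Nat.prime_three⟩
    have hσ : (g : Equiv.Perm α) ^ 3 ^ 1 = 1 := by
      rw [pow_one, ← Subgroup.coe_pow, hg3, Subgroup.coe_one]
    convert Equiv.Perm.card_compl_support_modEq hσ using 2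
    · ext x
      simp [Subgroup.smul_def]
    · exact hα.symm
  rw [Nat.ModEq] at hmod
  lia

/-- The fixed-point sets of the elements rotating three given points would be the blocks of a
Steiner system `S(2, 4, 7)`, but `12 ∤ 42`. -/
lemma not_sharply_five_transitive (hα : Fintype.card α = 10) :
    ¬ ∀ u v : Fin 5 ↪ α, ∃! g : G, g • u = v := by
  classical
  intro hG
  obtain ⟨p⟩ : Nonempty (Fin 3 ↪ α) := Function.Embedding.nonempty_of_card_le (by simp [hα])
  have := Fintype.ofFinite G
  let F (g : G) : Finset α := {x | g • x = x}
  let T : Finset G := {g | ∀ i, g • p i = p (i + 1)}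
  let R : Finset (α × α) := (Finset.univ.map p)ᶜ.offDiag
  have hunique : ∀ ab ∈ R, (T.filter fun g => ab ∈ (F g).offDiag).card = 1 := by
    rintro ⟨a, b⟩ hab
    simp only [R, Finset.mem_offDiag, Finset.mem_compl, Finset.mem_map, Finset.mem_univ,
      true_and] at hab
    obtain ⟨g, hg, hguniq⟩ := existsUnique_rotate_fix_fix hG p hab.2.2 hab.1 hab.2.1
    refine Finset.card_eq_one.2 ⟨g, Finset.eq_singleton_iff_unique_mem.2 ?_⟩
    simp only [T, F, Finset.mem_filter, Finset.mem_offDiag, Finset.mem_univ, true_and]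
    exact ⟨⟨hg.1, hg.2.1, hg.2.2, hab.2.2⟩, fun h hh => hguniq h ⟨hh.1, hh.2.1, hh.2.2.1⟩⟩
  have hblock : ∀ g ∈ T, 12 ∣ (R.filter fun ab => ab ∈ (F g).offDiag).card := by
    intro g hg
    have hgp : ∀ i, g • p i = p (i + 1) := (Finset.mem_filter.1 hg).2
    have hFR : (F g).offDiag ⊆ R := Finset.offDiag_mono fun x hx =>
      Finset.mem_compl.2 (Finset.disjoint_right.1 (disjoint_map_fixed hgp) hx)
    rw [Finset.filter_mem_eq_inter, Finset.inter_eq_right.2 hFR, Finset.offDiag_card]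
    rcases lt_or_ge (F g).card 2 with hlt | hge
    · interval_cases (F g).card <;> simp
    · rw [card_fixed_eq_four hα hG hgp hge]
  have hcount : ∑ g ∈ T, (R.filter fun ab => ab ∈ (F g).offDiag).card = 42 := by
    refine (Finset.sum_card_bipartiteAbove_eq_sum_card_bipartiteBelow
      fun g ab => ab ∈ (F g).offDiag).trans ((Finset.sum_congr rfl hunique).trans ?_)
    simp [R, Finset.offDiag_card, Finset.card_compl, hα]
  have := hcount ▸ Finset.dvd_sum hblock
  lia

end SharplyFiveTransitive

lemma le_index_of_card_eq_ten {α : Type*} [Fintype α] (hα : Fintype.card α = 10)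
    {G : Subgroup (Equiv.Perm α)} {k : ℕ} (hk : k ≤ 5) {w : Fin k ↪ α} (hw : stabilizer G w = ⊥) :
    126 ≤ G.index := by
  classical
  have hindex := factorial_sub_le_index hw
  have hmul : Nat.card G * G.index = 10 ! := by
    rw [G.card_mul_index, Nat.card_perm, Nat.card_eq_fintype_card, hα]
  by_contra! hlt
  rw [hα] at hindex
  obtain rfl : k = 5 := by
    by_contra hk5
    have : 6 ! ≤ (10 - k)! := Nat.factorial_le (by lia)
    have : 6 ! = 720 := rfl
    lia
  have h120 : G.index = 120 := by
    have hdvd : G.index ∣ 10 ! := Dvd.intro_left _ hmul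
    have : 120 ≤ G.index := hindex
    interval_cases G.index <;> first | rfl | exact absurd hdvd (by decide)
  refine not_sharply_five_transitive hα (existsUnique_smul_eq hw ?_)
  rw [h120, show 10 ! = 30240 * 120 from rfl] at hmul
  rw [Nat.eq_of_mul_eq_mul_right (by norm_num) hmul, Nat.card_eq_fintype_card,
    Fintype.card_embedding_eq, hα, Fintype.card_fin]
  decide

lemma choose_half_le_two_mul_index_of_isPreprimitive {α : Type*} [Fintype α] [DecidableEq α]
    (hα : 9 ≤ Fintype.card α) {G : Subgroup (Equiv.Perm α)} (hG : IsPreprimitive G α)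
    (hA : ¬ alternatingGroup α ≤ G) :
    (Fintype.card α).choose (Fintype.card α / 2) ≤ 2 * G.index := by
  obtain ⟨k, hk, w, hw⟩ := exists_embedding_stabilizer_eq_bot hG hA
  by_cases h10 : Fintype.card α = 10
  · have hindex := le_index_of_card_eq_ten h10 (by lia) hw
    rw [h10]
    exact Nat.mul_le_mul_left 2 hindex
  · calc _ ≤ 2 * (Fintype.card α - Fintype.card α / 2)! := choose_half_le_two_mul_factorial hα h10
      _ ≤ 2 * (Fintype.card α - k)! := Nat.mul_le_mul_left 2 (Nat.factorial_le (by lia))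
      _ ≤ 2 * G.index := Nat.mul_le_mul_left 2 (factorial_sub_le_index hw)

theorem choose_half_le_two_mul_index {α : Type*} [Fintype α] [DecidableEq α]
    (hα : 9 ≤ Fintype.card α) (G : Subgroup (Equiv.Perm α)) [IsPretransitive G α]
    (hA : ¬ alternatingGroup α ≤ G) :
    (Fintype.card α).choose (Fintype.card α / 2) ≤ 2 * G.index := by
  by_cases hG : IsPreprimitive G α
  · exact choose_half_le_two_mul_index_of_isPreprimitive hα hG hA
  · obtain ⟨B, hB, hnt⟩ : ∃ B : Set α, IsBlock G B ∧ ¬ IsTrivialBlock B := by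
      by_contra! hblock
      exact hG ⟨fun {B} => hblock B⟩
    simpa only [Nat.card_eq_fintype_card] using choose_half_le_two_mul_index_of_isBlock G hB hnt

end Primitive

/-! ### Lifting simple roots to power series -/

section Hensel

variable {R : Type*} [CommRing R] {I : Ideal R} {F : R[X]} {a x c : R}

lemma eval_mem_of_sub_mem (hF : F.eval a ∈ I) (hx : x - a ∈ I) : F.eval x ∈ I :=
  (I.sub_mem_iff_left hF).1 (I.mem_of_dvd (sub_dvd_eval_sub x a F) hx)

lemma newtonStep_eval_mem_pow (hF : F.eval a ∈ I) (hc : c * (derivative F).eval a = 1)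
    (hx : x - a ∈ I) {k : ℕ} (hxk : F.eval x ∈ I ^ k) :
    F.eval (x - c * F.eval x) ∈ I ^ (k + 1) := by
  obtain ⟨q, hq⟩ := F.binomExpansion x (-(c * F.eval x))
  have hfactor : F.eval (x - c * F.eval x) = F.eval x *
      (c * (derivative F).eval a - c * (derivative F).eval x + q * c ^ 2 * F.eval x) := by
    rw [sub_eq_add_neg, hq, hc]
    ring
  rw [hfactor, pow_succ, ← mul_sub]
  refine Ideal.mul_mem_mul hxk (I.add_mem (I.mul_mem_left _ ?_) (I.mul_mem_left _ ?_))
  · rw [← neg_mem_iff, neg_sub]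
    exact I.mem_of_dvd (sub_dvd_eval_sub x a _) hx
  · exact eval_mem_of_sub_mem hF hx

theorem exists_eval_eq_zero_of_isAdicComplete [IsAdicComplete I R] (hF : F.eval a ∈ I)
    (hF' : IsUnit ((derivative F).eval a)) : ∃ b, F.eval b = 0 ∧ b - a ∈ I := by
  obtain ⟨c, hc⟩ := hF'.exists_left_inv
  let b : ℕ → R := fun k => (fun x => x - c * F.eval x)^[k] a
  have hb_succ (k : ℕ) : b (k + 1) = b k - c * F.eval (b k) := Function.iterate_succ_apply' ..
  have hb (k : ℕ) : b k - a ∈ I ∧ F.eval (b k) ∈ I ^ (k + 1) := by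
    induction k with
    | zero => exact ⟨by simp [b], by simpa [b] using hF⟩
    | succ k ih =>
      rw [hb_succ]
      refine ⟨?_, newtonStep_eval_mem_pow hF hc ih.1 ih.2⟩
      rw [sub_right_comm]
      exact I.sub_mem ih.1 (I.mul_mem_left _ (Ideal.pow_le_self k.succ_ne_zero ih.2))
  have hcauchy {m n : ℕ} (hmn : m ≤ n) : b m ≡ b n [SMOD (I ^ m • ⊤ : Ideal R)] := by
    induction n, hmn using Nat.le_induction with
    | base => rfl
    | succ n hmn ih =>
      refine ih.trans (SModEq.sub_mem.2 ?_)
      rw [hb_succ, sub_sub_cancel, smul_eq_mul, Ideal.mul_top]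
      exact Ideal.mul_mem_left _ _ (Ideal.pow_le_pow_right (by lia) (hb n).2)
  obtain ⟨L, hL⟩ := IsPrecomplete.prec' b hcauchy
  have hL_sub (n : ℕ) : L - b n ∈ I ^ n := by
    have := SModEq.sub_mem.1 (hL n).symm
    rwa [smul_eq_mul, Ideal.mul_top] at this
  refine ⟨L, IsHausdorff.haus' (I := I) _ fun n => SModEq.zero.2 ?_, ?_⟩
  · rw [smul_eq_mul, Ideal.mul_top]
    exact eval_mem_of_sub_mem (Ideal.pow_le_pow_right n.le_succ (hb n).2) (hL_sub n)
  · rw [← sub_add_sub_cancel L (b 1) a]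
    exact I.add_mem (by simpa only [pow_one] using hL_sub 1) (hb 1).1

theorem exists_powerSeries_root {k : Type*} [Field k] {F : (PowerSeries k)[X]} {w : k}
    (hw : (F.map PowerSeries.constantCoeff).eval w = 0)
    (hw' : (derivative (F.map PowerSeries.constantCoeff)).eval w ≠ 0) :
    ∃ a, PowerSeries.constantCoeff a = w ∧ F.eval a = 0 := by
  have heval (G : (PowerSeries k)[X]) : PowerSeries.constantCoeff (G.eval (PowerSeries.C w)) =
      (G.map PowerSeries.constantCoeff).eval w := by
    rw [← PowerSeries.constantCoeff_C w, eval_map, eval₂_at_apply, PowerSeries.constantCoeff_C]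
  obtain ⟨a, ha, hmem⟩ := exists_eval_eq_zero_of_isAdicComplete
    (I := Ideal.span {(PowerSeries.X : PowerSeries k)}) (a := PowerSeries.C w) (F := F)
    (by rw [Ideal.mem_span_singleton, PowerSeries.X_dvd_iff, heval, hw])
    (by rwa [PowerSeries.isUnit_iff_constantCoeff, heval, ← derivative_map, isUnit_iff_ne_zero])
  rw [Ideal.mem_span_singleton, PowerSeries.X_dvd_iff, map_sub, PowerSeries.constantCoeff_C,
    sub_eq_zero] at hmem
  exact ⟨a, hmem, ha⟩

end Hensel

/-! ### Transitive groups containing a transposition -/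

section Transposition

open Equiv MulAction

variable {Ω : Type*} [DecidableEq Ω] {G : Subgroup (Perm Ω)} {a b c : Ω}

lemma swap_mem_trans (hab : swap a b ∈ G) (hbc : swap b c ∈ G) : swap a c ∈ G := by
  rcases eq_or_ne a b with rfl | hne
  · exact hbc
  rcases eq_or_ne a c with rfl | hne'
  · rw [swap_self]; exact G.one_mem
  rw [swap_comm, ← swap_mul_swap_mul_swap hne hne']
  exact G.mul_mem (G.mul_mem hbc hab) hbc

lemma swap_mem_apply {g : Perm Ω} (hg : g ∈ G) : swap (g a) (g b) ∈ G ↔ swap a b ∈ G := by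
  rw [swap_apply_apply, G.mul_mem_cancel_right (G.inv_mem hg), G.mul_mem_cancel_left hg]

lemma isBlock_swap_mem (G : Subgroup (Perm Ω)) (a : Ω) : IsBlock G {x | swap a x ∈ G} := by
  rw [isBlock_iff_smul_eq_of_mem]
  rintro ⟨g, hg⟩ b (hb : swap a b ∈ G) (hgb : swap a (g b) ∈ G)
  have hga : swap (g a) a ∈ G :=
    swap_mem_trans ((swap_mem_apply hg).2 hb) (swap_comm a _ ▸ hgb)
  ext x
  rw [Set.mem_smul_set_iff_inv_smul_mem]
  change swap a (g⁻¹ x) ∈ G ↔ swap a x ∈ G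
  rw [← swap_mem_apply hg, ← Perm.mul_apply, mul_inv_cancel, Perm.one_apply]
  exact ⟨swap_mem_trans (swap_comm (g a) a ▸ hga), swap_mem_trans hga⟩

lemma eq_top_of_forall_swap_mem [Finite Ω] (h : ∀ b, swap a b ∈ G) : G = ⊤ := by
  rw [eq_top_iff, ← Perm.closure_isSwap, Subgroup.closure_le]
  rintro _ ⟨b, c, -, rfl⟩
  exact swap_mem_trans (swap_comm a b ▸ h b) (h c)

lemma existsUnique_swap_mem [IsPretransitive G Ω]
    (h : ∃! b, b ≠ a ∧ swap a b ∈ G) (c : Ω) : ∃! d, d ≠ c ∧ swap c d ∈ G := by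
  obtain ⟨⟨g, hg⟩, rfl⟩ := exists_smul_eq G a c
  obtain ⟨b, hb, hunique⟩ := h
  refine ⟨g b, ⟨g.injective.ne hb.1, (swap_mem_apply hg).2 hb.2⟩, fun d hd => ?_⟩
  rw [← Perm.inv_eq_iff_eq]
  refine hunique _ ⟨fun hd' => hd.1 (Perm.inv_eq_iff_eq.1 hd'), ?_⟩
  rw [← swap_mem_apply hg, ← Perm.mul_apply, mul_inv_cancel, Perm.one_apply]
  exact hd.2

lemma even_card_of_involutive {α : Type*} [Fintype α] {s : α → α} (hs : s.Involutive)
    (hfix : ∀ x, s x ≠ x) : Even (Fintype.card α) := by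
  classical
  have hcard : Fintype.card α ≡ Fintype.card (Function.fixedPoints s) [MOD 2] :=
    Perm.card_fixedPoints_modEq (f := (s : Function.End α)) (n := 1) (funext hs)
  have : IsEmpty (Function.fixedPoints s) := ⟨fun x => hfix x x.2⟩
  rw [Fintype.card_eq_zero (α := Function.fixedPoints s)] at hcard
  exact Nat.even_iff.2 hcard

end Transposition

section TwoOrbits

open Equiv MulAction

variable {α β : Type*} [Fintype α] [Fintype β]

lemma even_card_of_involutive_sum {s : α ⊕ β → α ⊕ β} (hs : s.Involutive) (hfix : ∀ x, s x ≠ x)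
    (hβ : ∀ b b' : β, ∃ (f : α → α) (g : β → β),
      (∀ x, s (Sum.map f g x) = Sum.map f g (s x)) ∧ g b = b')
    (hlt : Fintype.card α < Fintype.card β) :
    Even (Fintype.card α) ∧ Even (Fintype.card β) := by
  have hββ (b : β) : ∃ b', s (.inr b) = .inr b' := by
    by_contra! hb
    obtain ⟨a, ha⟩ : ∃ a, s (.inr b) = .inl a := by
      rcases hsb : s (.inr b) with a | b'
      exacts [⟨a, rfl⟩, absurd hsb (hb b')]
    have hβα (b' : β) : ∃ a', s (.inr b') = .inl a' := by
      obtain ⟨f, g, hcomm, rfl⟩ := hβ b b'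
      exact ⟨f a, by simpa [ha] using hcomm (.inr b)⟩
    choose φ hφ using hβα
    refine hlt.not_ge (Fintype.card_le_of_injective φ fun b₁ b₂ h => ?_)
    exact Sum.inr_injective (hs.injective (by rw [hφ, hφ, h]))
  have hαα (a : α) : ∃ a', s (.inl a) = .inl a' := by
    rcases hsa : s (.inl a) with a' | b
    · exact ⟨a', rfl⟩
    · obtain ⟨b', hb'⟩ := hββ b
      simp [← hsa, hs (.inl a)] at hb'
  choose φ hφ using hαα
  choose ψ hψ using hββ
  refine ⟨even_card_of_involutive (s := φ) (fun a => ?_) fun a ha => hfix (.inl a) ?_,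
    even_card_of_involutive (s := ψ) (fun b => ?_) fun b hb => hfix (.inr b) ?_⟩
  · exact Sum.inl_injective (by rw [← hφ, ← hφ, hs])
  · rw [hφ, ha]
  · exact Sum.inr_injective (by rw [← hψ, ← hψ, hs])
  · rw [hψ, hb]

variable [DecidableEq α] [DecidableEq β] {G : Subgroup (Perm (Bool ⊕ α ⊕ β))}

lemma even_card_of_existsUnique_swap_mem (hswap : swap (.inl true) (.inl false) ∈ G)
    (hG : ∀ x, ∃! y, y ≠ x ∧ swap x y ∈ G)
    (hβ : ∀ b b' : β, ∃ t s₁ s₂, Perm.sumCongr t (Perm.sumCongr s₁ s₂) ∈ G ∧ s₂ b = b')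
    (hlt : Fintype.card α < Fintype.card β) :
    Even (Fintype.card α) ∧ Even (Fintype.card β) := by
  choose s hs hunique using hG
  have hinv (x) : s (s x) = x := (hunique _ x ⟨(hs x).1.symm, swap_comm x _ ▸ (hs x).2⟩).symm
  have hcomm (g) (hg : g ∈ G) (x) : s (g x) = g (s x) :=
    (hunique _ _ ⟨g.injective.ne (hs x).1, (swap_mem_apply hg).2 (hs x).2⟩).symm
  have hinl (i : Bool) : s (.inl i) = .inl !i := by
    refine (hunique _ _ ⟨by simp, ?_⟩).symm
    cases i
    exacts [swap_comm (Sum.inl true) (Sum.inl false : Bool ⊕ α ⊕ β) ▸ hswap, hswap]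
  have hinr (x : α ⊕ β) : ∃ y, s (.inr x) = .inr y := by
    rcases h : s (.inr x) with i | y
    · have := hinv (.inr x)
      simp [h, hinl] at this
    · exact ⟨y, rfl⟩
  choose σ hσ using hinr
  refine even_card_of_involutive_sum (s := σ) (fun x => ?_) (fun x hx => (hs (.inr x)).1 ?_)
    (fun b b' => ?_) hlt
  · exact Sum.inr_injective (by rw [← hσ, ← hσ, hinv])
  · rw [hσ, hx]
  · obtain ⟨t, s₁, s₂, hg, rfl⟩ := hβ b b'
    refine ⟨s₁, s₂, fun x => Sum.inr_injective (α := Bool) ?_, rfl⟩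
    simpa [hσ] using hcomm _ hg (.inr x)

lemma forall_swap_mem_or_forall_notMem {Ω γ : Type*} [DecidableEq Ω] {G : Subgroup (Perm Ω)}
    {p : Ω} {i : γ → Ω} (h : ∀ c c' : γ, ∃ g ∈ G, swap p (g p) ∈ G ∧ g (i c) = i c') :
    (∀ c, swap p (i c) ∈ G) ∨ ∀ c, swap p (i c) ∉ G := by
  by_contra! hne
  obtain ⟨⟨c', hc'⟩, c, hc⟩ := hne
  obtain ⟨g, hg, hp, hgc⟩ := h c c'
  exact hc' (hgc ▸ swap_mem_trans hp ((swap_mem_apply hg).2 hc))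

lemma forall_swap_mem_or_forall_swap_notMem [IsPretransitive G (Bool ⊕ α ⊕ β)]
    (hinl : ∀ i, swap (.inl true) (.inl i) ∈ G)
    (hα : ∀ a a' : α, ∃ t s₁ s₂, Perm.sumCongr t (Perm.sumCongr s₁ s₂) ∈ G ∧ s₁ a = a')
    (hβ : ∀ b b' : β, ∃ t s₁ s₂, Perm.sumCongr t (Perm.sumCongr s₁ s₂) ∈ G ∧ s₂ b = b')
    (hlt : Fintype.card α < Fintype.card β) (hdvd : ¬ 2 + Fintype.card α ∣ Fintype.card β) :
    (∀ x, swap (.inl true) (.inr x) ∈ G) ∨ ∀ x, swap (.inl true) (.inr x) ∉ G := by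
  have hblock_dvd : {x | swap (.inl true) x ∈ G}.ncard ∣
      2 + Fintype.card α + Fintype.card β := by
    simpa [add_assoc] using (isBlock_swap_mem G (.inl true)).ncard_dvd_card ⟨_, hinl true⟩
  have hcases_α := forall_swap_mem_or_forall_notMem (G := G) (p := .inl true)
    (i := fun a : α => .inr (.inl a)) fun a a' => by
      obtain ⟨t, s₁, s₂, hg, rfl⟩ := hα a a'
      exact ⟨_, hg, hinl _, rfl⟩
  have hcases_β := forall_swap_mem_or_forall_notMem (G := G) (p := .inl true)
    (i := fun b : β => .inr (.inr b)) fun b b' => by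
      obtain ⟨t, s₁, s₂, hg, rfl⟩ := hβ b b'
      exact ⟨_, hg, hinl _, rfl⟩
  rcases hcases_α with hA | hA <;> rcases hcases_β with hB | hB
  · exact .inl (Sum.forall.2 ⟨hA, hB⟩)
  · have hblock : {x | swap (.inl true) x ∈ G} = Set.range (Sum.map id Sum.inl) := by
      ext (i | a | b) <;> simp [hinl, hA, hB]
    rw [hblock, Set.ncard_range_of_injective (Function.injective_id.sumMap Sum.inl_injective)]
      at hblock_dvd
    simp [hdvd] at hblock_dvd
  · have hblock : {x | swap (.inl true) x ∈ G} = Set.range (Sum.map id Sum.inr) := by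
      ext (i | a | b) <;> simp [hinl, hA, hB]
    rw [hblock, Set.ncard_range_of_injective (Function.injective_id.sumMap Sum.inr_injective),
      add_right_comm] at hblock_dvd
    have : IsEmpty α := by
      by_contra hα0
      have : 0 < Fintype.card α := Fintype.card_pos_iff.2 (not_isEmpty_iff.1 hα0)
      have : 2 + Fintype.card β ≤ Fintype.card α := Nat.le_of_dvd this (by simpa using hblock_dvd)
      lia
    exact .inl (Sum.forall.2 ⟨isEmptyElim, hB⟩)
  · exact .inr (Sum.forall.2 ⟨hA, hB⟩)

theorem eq_top_of_swap_mem [IsPretransitive G (Bool ⊕ α ⊕ β)]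
    (hswap : swap (.inl true) (.inl false) ∈ G)
    (hα : ∀ a a' : α, ∃ t s₁ s₂, Perm.sumCongr t (Perm.sumCongr s₁ s₂) ∈ G ∧ s₁ a = a')
    (hβ : ∀ b b' : β, ∃ t s₁ s₂, Perm.sumCongr t (Perm.sumCongr s₁ s₂) ∈ G ∧ s₂ b = b')
    (hlt : Fintype.card α < Fintype.card β) (hdvd : ¬ 2 + Fintype.card α ∣ Fintype.card β)
    (hodd : Odd (Fintype.card α) ∨ Odd (Fintype.card β)) : G = ⊤ := by
  have hinl (i : Bool) : swap (.inl true) (.inl i) ∈ G := by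
    cases i
    exacts [hswap, by rw [swap_self]; exact G.one_mem]
  rcases forall_swap_mem_or_forall_swap_notMem hinl hα hβ hlt hdvd with hall | hnone
  · exact eq_top_of_forall_swap_mem (Sum.forall.2 ⟨hinl, hall⟩)
  · have hunique : ∃! y, y ≠ .inl true ∧ swap (.inl true) y ∈ G := by
      refine ⟨.inl false, ⟨by simp, hswap⟩, ?_⟩
      rintro (i | x) ⟨hne, hy⟩
      · cases i
        exacts [rfl, absurd rfl hne]
      · exact absurd hy (hnone x)
    have := even_card_of_existsUnique_swap_mem hswap (existsUnique_swap_mem hunique) hβ hlt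
    grind

end TwoOrbits

/-! ### Galois groups as permutation groups of the roots -/

section GaloisPermutations

open Equiv MulAction

/-- The family `x` lists the roots of `P`, which are simple, and `P` splits: the roots are labelled
by an arbitrary type so that a partition of them can be recorded in the labels. -/
structure IsRootLabelling {K L Ω : Type*} [Field K] [Field L] [Algebra K L] [Fintype Ω]
    (P : K[X]) (x : Ω → L) : Prop where
  injective : Function.Injective x
  map_eq_prod : P.map (algebraMap K L) = ∏ ω, (X - C (x ω))

/-- The group of those permutations of the labels of a family `x` in `L` that are induced by
automorphisms of `L` over `K`; for the roots of a polynomial this is its Galois group. -/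
def galPerm (K : Type*) {L Ω : Type*} [Field K] [Field L] [Algebra K L] (x : Ω → L) :
    Subgroup (Perm Ω) where
  carrier := {π | ∃ γ : L ≃ₐ[K] L, ∀ ω, γ (x ω) = x (π ω)}
  mul_mem' := by
    rintro π ρ ⟨γ, hγ⟩ ⟨δ, hδ⟩
    exact ⟨γ * δ, fun ω => by rw [AlgEquiv.mul_apply, hδ, hγ, Perm.mul_apply]⟩
  one_mem' := ⟨1, fun _ => rfl⟩
  inv_mem' := by
    rintro π ⟨γ, hγ⟩
    refine ⟨γ⁻¹, fun ω => γ.injective ?_⟩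
    rw [hγ, ← Perm.mul_apply, mul_inv_cancel, Perm.one_apply, ← AlgEquiv.mul_apply,
      mul_inv_cancel, AlgEquiv.one_apply]

variable {K L E Ω Ω' : Type*} [Field K] [Field L] [Field E] [Algebra K L] [Algebra K E]
  {P : K[X]} {x : Ω → L}

lemma mem_galPerm {π : Perm Ω} :
    π ∈ galPerm K x ↔ ∃ γ : L ≃ₐ[K] L, ∀ ω, γ (x ω) = x (π ω) :=
  Iff.rfl

lemma galPerm_comp_le [Normal K L] (ι : L →ₐ[K] E) (x : Ω → L) :
    galPerm K (ι ∘ x) ≤ galPerm K x := by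
  rintro π ⟨γ, hγ⟩
  let := ι.toRingHom.toAlgebra
  have : IsScalarTower K L E := IsScalarTower.of_algebraMap_eq' ι.comp_algebraMap.symm
  exact ⟨γ.restrictNormal L, fun ω =>
    ι.injective ((γ.restrictNormal_commutes L (x ω)).trans (hγ ω))⟩

lemma galPerm_comp_equiv_eq_top (e : Ω' ≃ Ω) (hx : galPerm K x = ⊤) :
    galPerm K (x ∘ e) = ⊤ := by
  refine (Subgroup.eq_top_iff' _).2 fun π => ?_
  obtain ⟨γ, hγ⟩ := mem_galPerm.1 (hx ▸ Subgroup.mem_top (e.permCongr π))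
  exact ⟨γ, fun ω => by simp [hγ]⟩

namespace IsRootLabelling

variable [Fintype Ω] [Fintype Ω']

lemma aeval_eq_zero_iff (hx : IsRootLabelling P x) {y : L} :
    aeval y P = 0 ↔ ∃ ω, x ω = y := by
  rw [← eval_map_algebraMap, hx.map_eq_prod, eval_prod, Finset.prod_eq_zero_iff]
  simp [sub_eq_zero, eq_comm]

lemma aeval_derivative_ne_zero (hx : IsRootLabelling P x) (ω : Ω) :
    aeval (x ω) (derivative P) ≠ 0 := by
  have hsep : P.Separable := by
    rw [← separable_map (algebraMap K L), hx.map_eq_prod]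
    exact separable_prod_X_sub_C_iff.2 hx.injective
  exact hsep.aeval_derivative_ne_zero (hx.aeval_eq_zero_iff.2 ⟨ω, rfl⟩)

lemma natDegree_eq_card (hx : IsRootLabelling P x) : P.natDegree = Fintype.card Ω := by
  rw [← natDegree_map (algebraMap K L), hx.map_eq_prod, natDegree_finsetProd_X_sub_C_eq_card,
    Finset.card_univ]

lemma of_natDegree_eq_card (hP : P.Monic) (hinj : Function.Injective x)
    (hcard : P.natDegree = Fintype.card Ω) (hroot : ∀ ω, aeval (x ω) P = 0) :
    IsRootLabelling P x := by
  have hmonic := hP.map (algebraMap K L)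
  refine ⟨hinj, eq_of_monic_of_dvd_of_natDegree_le (monic_prod_X_sub_C x _) hmonic ?_ ?_⟩
  · refine Finset.prod_dvd_of_coprime (fun a _ b _ hab => pairwise_coprime_X_sub_C hinj hab)
      fun ω _ => dvd_iff_isRoot.2 ?_
    rw [IsRoot, eval_map_algebraMap, hroot]
  · rw [natDegree_finsetProd_X_sub_C_eq_card, hP.natDegree_map, hcard, Finset.card_univ]

lemma comp_equiv (hx : IsRootLabelling P x) (e : Ω' ≃ Ω) : IsRootLabelling P (x ∘ e) where
  injective := hx.injective.comp e.injective
  map_eq_prod := hx.map_eq_prod.trans (e.prod_comp fun ω => X - C (x ω)).symm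

lemma sumElim {y : Ω' → L} {Q : K[X]} (hx : IsRootLabelling P x) (hy : IsRootLabelling Q y)
    (hPQ : IsCoprime P Q) : IsRootLabelling (P * Q) (Sum.elim x y) where
  injective := by
    refine hx.injective.sumElim hy.injective fun a b hab => ?_
    obtain ⟨c, d, hcd⟩ := hPQ
    have h := congrArg (aeval (x a)) hcd
    simp [hx.aeval_eq_zero_iff.2 ⟨a, rfl⟩, hy.aeval_eq_zero_iff.2 ⟨b, hab.symm⟩] at h
  map_eq_prod := by simp [hx.map_eq_prod, hy.map_eq_prod]

lemma rootSet (hP : P.Monic) (hsep : P.Separable) (hL : (P.map (algebraMap K L)).Splits) :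
    IsRootLabelling P ((↑) : P.rootSet L → L) :=
  .of_natDegree_eq_card hP Subtype.val_injective (card_rootSet_eq_natDegree hsep hL).symm
    fun ω => (mem_rootSet.1 ω.2).2

lemma exists_perm (hx : IsRootLabelling P x) (γ : L ≃ₐ[K] L) :
    ∃ π : Perm Ω, ∀ ω, γ (x ω) = x (π ω) := by
  have hmem (ω : Ω) : ∃ ω', x ω' = γ (x ω) := by
    rw [← hx.aeval_eq_zero_iff, ← AlgEquiv.coe_toAlgHom, aeval_algHom_apply,
      hx.aeval_eq_zero_iff.2 ⟨ω, rfl⟩, map_zero]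
  choose f hf using hmem
  have hinj : Function.Injective f := fun a b hab =>
    hx.injective (γ.injective (by rw [← hf, ← hf, hab]))
  exact ⟨.ofBijective f (Finite.injective_iff_bijective.1 hinj), fun ω => (hf ω).symm⟩

lemma nonempty_mulEquiv_galPerm [P.IsSplittingField K L] (hx : IsRootLabelling P x) :
    Nonempty ((L ≃ₐ[K] L) ≃* galPerm K x) := by
  choose p hp using hx.exists_perm
  have hp_unique {γ : L ≃ₐ[K] L} {π : Perm Ω} (h : ∀ ω, γ (x ω) = x (π ω)) : p γ = π :=
    Equiv.ext fun ω => hx.injective ((hp γ ω).symm.trans (h ω))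
  let φ : (L ≃ₐ[K] L) →* galPerm K x := .mk' (fun γ => ⟨p γ, γ, hp γ⟩) fun γ δ =>
    Subtype.ext <| hp_unique fun ω => by
      rw [AlgEquiv.mul_apply, hp, hp, Subgroup.coe_mul, Perm.mul_apply]
  refine ⟨.ofBijective φ ⟨(injective_iff_map_eq_one φ).2 fun γ hγ => ?_, fun ⟨π, γ, hγ⟩ =>
    ⟨γ, Subtype.ext (hp_unique hγ)⟩⟩⟩
  have hid : (γ : L →ₐ[K] L) = AlgHom.id K L := by
    refine AlgHom.ext_of_adjoin_eq_top (IsSplittingField.adjoin_rootSet L P) fun r hr => ?_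
    obtain ⟨ω, rfl⟩ := hx.aeval_eq_zero_iff.1 (aeval_eq_zero_of_mem_rootSet hr)
    have hpγ : p γ = 1 := congrArg Subtype.val hγ
    exact (hp γ ω).trans (by rw [hpγ, Perm.one_apply, AlgHom.id_apply])
  exact AlgEquiv.ext fun r => DFunLike.congr_fun hid r

lemma exists_algEquiv_apply_eq [Normal K L] (hx : IsRootLabelling P x) (hP : Irreducible P)
    (a b : Ω) : ∃ γ : L ≃ₐ[K] L, γ (x a) = x b := by
  have hconj : IsConjRoot K (x b) (x a) := by
    rw [IsConjRoot, ← minpoly.eq_of_irreducible hP (hx.aeval_eq_zero_iff.2 ⟨a, rfl⟩),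
      ← minpoly.eq_of_irreducible hP (hx.aeval_eq_zero_iff.2 ⟨b, rfl⟩)]
  exact hconj.exists_algEquiv

lemma isPretransitive_galPerm [Normal K L] (hx : IsRootLabelling P x) (hP : Irreducible P) :
    IsPretransitive (galPerm K x) Ω where
  exists_smul_eq a b := by
    obtain ⟨γ, hγ⟩ := hx.exists_algEquiv_apply_eq hP a b
    obtain ⟨π, hπ⟩ := hx.exists_perm γ
    exact ⟨⟨π, γ, hπ⟩, hx.injective ((hπ a).symm.trans hγ)⟩

lemma exists_splittingField {r : Ω → E} (hr : IsRootLabelling P r) :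
    ∃ (ι : P.SplittingField →ₐ[K] E) (x : Ω → P.SplittingField),
      IsRootLabelling P x ∧ ι ∘ x = r := by
  have hsplits : (P.map (algebraMap K E)).Splits :=
    hr.map_eq_prod ▸ Splits.prod fun ω _ => Splits.X_sub_C _
  let ι : P.SplittingField →ₐ[K] E := SplittingField.lift P hsplits
  have hι : (P.map (algebraMap K P.SplittingField)).map ι.toRingHom = P.map (algebraMap K E) := by
    rw [Polynomial.map_map, AlgHom.toRingHom_eq_coe, AlgHom.comp_algebraMap]
  have hne : P.map (algebraMap K P.SplittingField) ≠ 0 := by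
    intro h
    rw [h, Polynomial.map_zero, hr.map_eq_prod] at hι
    exact (monic_prod_X_sub_C r _).ne_zero hι.symm
  have hrange (ω : Ω) : ∃ y, ι y = r ω :=
    (SplittingField.splits P).mem_range_of_isRoot hne (i := ι.toRingHom) (by
      rw [hι, IsRoot, eval_map_algebraMap]
      exact hr.aeval_eq_zero_iff.2 ⟨ω, rfl⟩)
  choose x hx using hrange
  refine ⟨ι, x, ⟨.of_comp (f := ι) (by simpa [Function.comp_def, hx] using hr.injective), ?_⟩,
    funext hx⟩
  refine Polynomial.map_injective ι.toRingHom ι.injective ?_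
  rw [hι, hr.map_eq_prod]
  simp [Polynomial.map_prod, hx]

end IsRootLabelling

/-- The roots of `P` are distinct and can be numbered in such a way that the Galois group of `P`
becomes the permutation group `G`. -/
def HasGaloisGroup {n : ℕ} (G : Subgroup (Perm (Fin n))) (P : K[X]) : Prop :=
  ∃ x : Fin n → P.SplittingField, IsRootLabelling P x ∧ galPerm K x = G

lemma exists_hasGaloisGroup {n : ℕ} (hP : P.Monic) (hsep : P.Separable) (hn : P.natDegree = n) :
    ∃ G : Subgroup (Perm (Fin n)), HasGaloisGroup G P := by
  have hx := IsRootLabelling.rootSet hP hsep (SplittingField.splits P)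
  exact ⟨_, _, hx.comp_equiv (Fintype.equivFinOfCardEq (hx.natDegree_eq_card.symm.trans hn)).symm,
    rfl⟩

variable [Fintype Ω]

lemma hasGaloisGroup_top_of_forall_galPerm_le {n : ℕ} {r : Ω → E} (hr : IsRootLabelling P r)
    (hn : Fintype.card Ω = n) (htop : ∀ G : Subgroup (Perm Ω), galPerm K r ≤ G →
      IsPretransitive G Ω → G = ⊤) (hP : Irreducible P) :
    HasGaloisGroup (⊤ : Subgroup (Perm (Fin n))) P := by
  obtain ⟨ι, x, hx, rfl⟩ := hr.exists_splittingField
  let e : Fin n ≃ Ω := (Fintype.equivFinOfCardEq hn).symm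
  exact ⟨x ∘ e, hx.comp_equiv e, galPerm_comp_equiv_eq_top e
    (htop _ (galPerm_comp_le ι x) (hx.isPretransitive_galPerm hP))⟩

end GaloisPermutations

/-! ### The Galois group of a pencil -/

section Pencil

/-- The generic member `f + T v` of the pencil spanned by `f` and `v`; the parameter `T` is the
variable of the coefficient ring `R[X]`. -/
noncomputable def pencil {R : Type*} [CommRing R] (f v : R[X]) : R[X][X] :=
  f.map C + C X * v.map C

variable {R : Type*} [CommRing R] {f v : R[X]}

lemma map_pencil_evalRingHom (f v : R[X]) (t : R) :
    (pencil f v).map (evalRingHom t) = f + C t * v := by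
  have hC : (evalRingHom t).comp C = RingHom.id R := by
    ext
    simp
  simp [pencil, Polynomial.map_map, hC]

lemma coeff_pencil (f v : R[X]) (j : ℕ) :
    (pencil f v).coeff j = C (f.coeff j) + X * C (v.coeff j) := by
  simp [pencil]

lemma natDegree_map_C (p : R[X]) : (p.map C).natDegree = p.natDegree :=
  natDegree_map_eq_of_injective C_injective p

lemma natDegree_pencil (h : v.natDegree < f.natDegree) :
    (pencil f v).natDegree = f.natDegree := by
  rw [pencil, natDegree_add_eq_left_of_natDegree_lt, natDegree_map_C]
  rw [natDegree_map_C]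
  exact (natDegree_C_mul_le _ _).trans_lt (by rwa [natDegree_map_C])

lemma monic_pencil (hf : f.Monic) (h : v.natDegree < f.natDegree) : (pencil f v).Monic := by
  rw [Monic, leadingCoeff, natDegree_pencil h, coeff_pencil, hf.coeff_natDegree,
    coeff_eq_zero_of_natDegree_lt h]
  simp

lemma irreducible_pencil [IsDomain R] (hf : Irreducible f) (hv : v ≠ 0)
    (h : v.natDegree < f.natDegree) : Irreducible (pencil f v) := by
  have hswap : Bivariate.swap (R := R) (pencil f v) = C v * X + C f := by
    rw [pencil, map_add, map_mul, Bivariate.swap_map_C, Bivariate.swap_map_C]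
    simp only [Bivariate.swap_C, map_X]
    ring
  rw [← MulEquiv.irreducible_iff (Bivariate.swap (R := R)), hswap]
  refine irreducible_C_mul_X_add_C hv (IsRelPrime.symm ?_)
  rw [hf.isRelPrime_iff_not_dvd]
  exact fun hdvd => (natDegree_le_of_dvd hdvd hv).not_gt h

end Pencil

section Infinity

variable {k K E : Type*} [Field k] [Field K] [Field E] [Algebra ℤ[X] K] [IsFractionRing ℤ[X] K]
  [Algebra (PowerSeries k) E] [IsFractionRing (PowerSeries k) E]

variable (k E) in
lemma transcendental_powerSeries_X [CharZero k] :
    Transcendental ℤ (algebraMap (PowerSeries k) E PowerSeries.X) := by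
  have haeval : (aeval (R := ℤ) (algebraMap (PowerSeries k) E PowerSeries.X)).toRingHom =
      (algebraMap (PowerSeries k) E).comp
        (coeToPowerSeries.ringHom.comp (mapRingHom (Int.castRingHom k))) :=
    ringHom_ext' (RingHom.ext_int _ _) (by simp)
  rw [transcendental_iff_injective]
  change Function.Injective (aeval (algebraMap (PowerSeries k) E PowerSeries.X)).toRingHom
  rw [haeval]
  exact (IsFractionRing.injective _ _).comp
    ((Polynomial.coe_injective k).comp (map_injective _ (RingHom.injective_int _)))

variable (k K E) in
lemma exists_ringHom_inv_sq [CharZero k] : ∃ φ : K →+* E,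
    φ (algebraMap ℤ[X] K X) = (algebraMap (PowerSeries k) E PowerSeries.X ^ 2)⁻¹ := by
  have htrans : Transcendental ℤ (algebraMap (PowerSeries k) E PowerSeries.X ^ 2)⁻¹ := by
    rw [Transcendental, IsAlgebraic.inv_iff]
    exact (transcendental_powerSeries_X k E).pow two_pos
  exact ⟨IsFractionRing.lift (transcendental_iff_injective.1 htrans), by simp⟩

variable [Algebra K E]

lemma exists_algEquiv_of_powerSeries
    (hT : algebraMap K E (algebraMap ℤ[X] K X) =
      (algebraMap (PowerSeries k) E PowerSeries.X ^ 2)⁻¹)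
    {ρ : PowerSeries k ≃+* PowerSeries k} (hρ : ρ (PowerSeries.X ^ 2) = PowerSeries.X ^ 2) :
    ∃ τ : E ≃ₐ[K] E, ∀ a, τ (algebraMap _ E a) = algebraMap _ E (ρ a) := by
  let τ : E ≃+* E := IsFractionRing.ringEquivOfRingEquiv ρ
  have hτ (a) : τ (algebraMap (PowerSeries k) E a) = algebraMap _ E (ρ a) :=
    IsFractionRing.ringEquivOfRingEquiv_algebraMap ρ a
  have hcomm : (τ : E →+* E).comp (algebraMap K E) = algebraMap K E := by
    refine IsLocalization.ringHom_ext (nonZeroDivisors ℤ[X])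
      (Polynomial.ringHom_ext (fun a => by simp) ?_)
    rw [RingHom.comp_apply, RingHom.comp_apply, RingHom.comp_apply, hT, RingHom.coe_coe, map_inv₀,
      ← map_pow, hτ, hρ]
  exact ⟨.ofRingEquiv (f := τ) (RingHom.congr_fun hcomm), hτ⟩

lemma exists_powerSeries_ringEquiv_map (σ : k ≃+* k) :
    ∃ ρ : PowerSeries k ≃+* PowerSeries k, ρ PowerSeries.X = PowerSeries.X ∧
      ∀ a, PowerSeries.constantCoeff (ρ a) = σ (PowerSeries.constantCoeff a) := by
  refine ⟨.ofRingHom (PowerSeries.map (σ : k →+* k)) (PowerSeries.map (σ.symm : k →+* k)) ?_ ?_,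
    PowerSeries.map_X (σ : k →+* k), fun a => ?_⟩
  · ext; simp
  · ext; simp
  · change PowerSeries.constantCoeff (PowerSeries.map (σ : k →+* k) a) = _
    rw [← PowerSeries.coeff_zero_eq_constantCoeff_apply, PowerSeries.coeff_map]
    simp

lemma exists_powerSeries_ringEquiv_neg : ∃ ρ : PowerSeries k ≃+* PowerSeries k,
    ρ PowerSeries.X = -PowerSeries.X ∧
      ∀ a, PowerSeries.constantCoeff (ρ a) = PowerSeries.constantCoeff a := by
  have hinv : (PowerSeries.rescale (-1 : k)).comp (PowerSeries.rescale (-1)) = .id _ := by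
    ext; simp [PowerSeries.rescale_rescale]
  refine ⟨.ofRingHom _ _ hinv hinv, PowerSeries.rescale_neg_one_X, fun a => ?_⟩
  change PowerSeries.constantCoeff (PowerSeries.rescale (-1 : k) a) = _
  rw [← PowerSeries.coeff_zero_eq_constantCoeff_apply, PowerSeries.coeff_rescale]
  simp

end Infinity

section PencilRoots

variable {k K E : Type*} [Field k] [Field K] [Field E] [Algebra ℤ[X] K] [Algebra (PowerSeries k) E]
  [Algebra K E] {f v : ℤ[X]}

lemma aeval_map_pencil (hT : algebraMap K E (algebraMap ℤ[X] K X) =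
      (algebraMap (PowerSeries k) E PowerSeries.X ^ 2)⁻¹) (f v : ℤ[X]) (y : E) :
    aeval y ((pencil f v).map (algebraMap ℤ[X] K)) =
      aeval y f + (algebraMap (PowerSeries k) E PowerSeries.X ^ 2)⁻¹ * aeval y v := by
  have hconst : ((algebraMap K E).comp (algebraMap ℤ[X] K)).comp C = algebraMap ℤ E :=
    RingHom.ext_int _ _
  rw [pencil, aeval_def, eval₂_map, eval₂_add, eval₂_mul, eval₂_C, eval₂_map, eval₂_map, hconst,
    RingHom.comp_apply, hT, aeval_def, aeval_def]

variable [IsFractionRing (PowerSeries k) E]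

lemma algebraMap_powerSeries_X_ne_zero : algebraMap (PowerSeries k) E PowerSeries.X ≠ 0 :=
  IsFractionRing.to_map_eq_zero_iff.not.2 PowerSeries.X_ne_zero

lemma exists_pencil_root_of_aeval_eq_zero (hT : algebraMap K E (algebraMap ℤ[X] K X) =
      (algebraMap (PowerSeries k) E PowerSeries.X ^ 2)⁻¹) (f : ℤ[X]) {w : k}
    (hw : aeval w v = 0) (hw' : aeval w (derivative v) ≠ 0) :
    ∃ a : PowerSeries k, PowerSeries.constantCoeff a = w ∧
      aeval (algebraMap (PowerSeries k) E a) ((pencil f v).map (algebraMap ℤ[X] K)) = 0 := by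
  let F : (PowerSeries k)[X] := C (PowerSeries.X ^ 2) * f.map (Int.castRingHom _) +
    v.map (Int.castRingHom _)
  have hF : F.map PowerSeries.constantCoeff = v.map (algebraMap ℤ k) := by
    have hℤ : (PowerSeries.constantCoeff (R := k)).comp (Int.castRingHom _) = algebraMap ℤ k :=
      RingHom.ext_int _ _
    simp [F, Polynomial.map_map, hℤ]
  obtain ⟨a, ha, hroot⟩ : ∃ a, PowerSeries.constantCoeff a = w ∧ F.eval a = 0 := by
    refine exists_powerSeries_root ?_ ?_
    · rwa [hF, eval_map_algebraMap]
    · rwa [hF, derivative_map, eval_map_algebraMap]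
  refine ⟨a, ha, ?_⟩
  have hX : algebraMap (PowerSeries k) E PowerSeries.X ^ 2 ≠ 0 :=
    pow_ne_zero 2 algebraMap_powerSeries_X_ne_zero
  have hι : (algebraMap (PowerSeries k) E).comp (Int.castRingHom _) = algebraMap ℤ E :=
    RingHom.ext_int _ _
  have hroot' := congrArg (algebraMap (PowerSeries k) E) hroot
  rw [map_zero, ← eval₂_at_apply, eval₂_add, eval₂_mul, eval₂_C, eval₂_map, eval₂_map, hι,
    map_pow, ← aeval_def, ← aeval_def] at hroot'
  rw [aeval_map_pencil hT]
  refine (mul_eq_zero_iff_left hX).1 ?_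
  rw [← hroot']
  field_simp

lemma exists_pencil_root_of_sq_eq_neg_one [CharZero k]
    (hT : algebraMap K E (algebraMap ℤ[X] K X) =
      (algebraMap (PowerSeries k) E PowerSeries.X ^ 2)⁻¹)
    (hf : f.Monic) (hv : v.Monic) (hdeg : f.natDegree = v.natDegree + 2) {i : k} (hi : i ^ 2 = -1) :
    ∃ a : PowerSeries k, PowerSeries.constantCoeff a = i ∧
      aeval (algebraMap (PowerSeries k) E a / algebraMap (PowerSeries k) E PowerSeries.X)
        ((pencil f v).map (algebraMap ℤ[X] K)) = 0 := by
  let F : (PowerSeries k)[X] := scaleRoots (f.map (Int.castRingHom _)) PowerSeries.X +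
    scaleRoots (v.map (Int.castRingHom _)) PowerSeries.X
  have hreduce {g : ℤ[X]} (hg : g.Monic) : (scaleRoots (g.map (Int.castRingHom _))
      PowerSeries.X).map (PowerSeries.constantCoeff (R := k)) = X ^ g.natDegree := by
    rw [map_scaleRoots _ _ _ (by simp [(hg.map _).leadingCoeff]), PowerSeries.constantCoeff_X,
      scaleRoots_zero, Polynomial.map_map, (hg.map _).leadingCoeff, one_smul, hg.natDegree_map]
  have hF : F.map PowerSeries.constantCoeff = X ^ v.natDegree * (X ^ 2 + 1) := by
    rw [Polynomial.map_add, hreduce hf, hreduce hv, hdeg, pow_add, mul_add, mul_one]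
  have hi0 : i ≠ 0 := by
    rintro rfl
    simp at hi
  obtain ⟨a, ha, hroot⟩ : ∃ a, PowerSeries.constantCoeff a = i ∧ F.eval a = 0 := by
    refine exists_powerSeries_root ?_ ?_
    · simp [hF, hi]
    · simp [hF, derivative_mul, hi, hi0]
  refine ⟨a, ha, ?_⟩
  have hX : algebraMap (PowerSeries k) E PowerSeries.X ≠ 0 := algebraMap_powerSeries_X_ne_zero
  have hι : (algebraMap (PowerSeries k) E).comp (Int.castRingHom _) = algebraMap ℤ E :=
    RingHom.ext_int _ _
  have hroot' := congrArg (algebraMap (PowerSeries k) E) hroot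
  rw [map_zero, ← eval₂_at_apply, eval₂_add, ← mul_div_cancel₀ (algebraMap (PowerSeries k) E a) hX,
    scaleRoots_eval₂_mul, scaleRoots_eval₂_mul, hf.natDegree_map, hv.natDegree_map, eval₂_map,
    eval₂_map, hι, hdeg, ← aeval_def, ← aeval_def] at hroot'
  rw [aeval_map_pencil hT]
  refine (mul_eq_zero_iff_left (pow_ne_zero (v.natDegree + 2) hX)).1 ?_
  rw [← hroot']
  field_simp
  ring

/-- The conjectural roots in `E` of a pencil: the poles `z b / u` at the point at infinity of
the `T`-line, where `T = u⁻²`, and the remaining roots `y x`, given by power series in `u`. -/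
noncomputable def laurentRoots (E : Type*) [Field E] [Algebra (PowerSeries k) E] {V : Type*}
    (z : Bool → PowerSeries k) (y : V → PowerSeries k) : Bool ⊕ V → E :=
  Sum.elim
    (fun b => algebraMap (PowerSeries k) E (z b) / algebraMap (PowerSeries k) E PowerSeries.X)
    fun x => algebraMap (PowerSeries k) E (y x)

variable {V : Type*} {z : Bool → PowerSeries k} {y : V → PowerSeries k} {w : V → k}

lemma exists_eq_inr_of_laurentRoots_eq (hz : ∀ b, PowerSeries.constantCoeff (z b) ≠ 0)
    {ω : Bool ⊕ V} {a : PowerSeries k} (h : laurentRoots E z y ω = algebraMap _ E a) :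
    ∃ x, ω = .inr x ∧ y x = a := by
  rcases ω with b | x
  · rw [laurentRoots, Sum.elim_inl, div_eq_iff algebraMap_powerSeries_X_ne_zero, ← map_mul] at h
    refine absurd ?_ (hz b)
    rw [IsFractionRing.injective _ E h, map_mul, PowerSeries.constantCoeff_X, mul_zero]
  · exact ⟨x, rfl, IsFractionRing.injective _ E h⟩

lemma laurentRoots_injective (hz : ∀ b, PowerSeries.constantCoeff (z b) ≠ 0)
    (hzinj : Function.Injective z) (hyinj : Function.Injective y) :
    Function.Injective (laurentRoots E z y) := by
  have hinj : Function.Injective (algebraMap (PowerSeries k) E) := IsFractionRing.injective _ _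
  refine Function.Injective.sumElim (fun b b' hb => hzinj (hinj ?_)) (hinj.comp hyinj)
    fun b x hbx => ?_
  · exact (div_left_inj' algebraMap_powerSeries_X_ne_zero).1 hb
  · obtain ⟨_, hinr, _⟩ := exists_eq_inr_of_laurentRoots_eq hz (y := y) (ω := .inl b) hbx
    exact Sum.inl_ne_inr hinr

lemma exists_isRootLabelling_laurentRoots [Algebra ℚ k] [IsAlgClosed k] [Fintype V]
    (hT : algebraMap K E (algebraMap ℤ[X] K X) =
      (algebraMap (PowerSeries k) E PowerSeries.X ^ 2)⁻¹)
    (hf : f.Monic) (hv : v.Monic) (hdeg : f.natDegree = v.natDegree + 2)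
    (hw : IsRootLabelling (v.map (algebraMap ℤ ℚ)) w) :
    ∃ (z : Bool → PowerSeries k) (y : V → PowerSeries k),
      (∀ b, PowerSeries.constantCoeff (z b) ≠ 0) ∧ (∀ x, PowerSeries.constantCoeff (y x) = w x) ∧
      IsRootLabelling ((pencil f v).map (algebraMap ℤ[X] K)) (laurentRoots E z y) := by
  have : CharZero k := algebraRat.charZero k
  obtain ⟨i, hi⟩ := IsAlgClosed.exists_pow_nat_eq (-1 : k) two_pos
  have hi0 : i ≠ 0 := by
    rintro rfl
    simp at hi
  obtain ⟨z₁, hz₁, hroot₁⟩ := exists_pencil_root_of_sq_eq_neg_one hT hf hv hdeg hi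
  obtain ⟨z₂, hz₂, hroot₂⟩ :=
    exists_pencil_root_of_sq_eq_neg_one hT hf hv hdeg (i := -i) (by rw [neg_sq, hi])
  have hfinite (x : V) := exists_pencil_root_of_aeval_eq_zero hT f (w := w x) (v := v)
    (by rw [← aeval_map_algebraMap ℚ, hw.aeval_eq_zero_iff.2 ⟨x, rfl⟩])
    (by simpa only [derivative_map, aeval_map_algebraMap] using hw.aeval_derivative_ne_zero x)
  choose y hy hroot using hfinite
  let z : Bool → PowerSeries k := fun b => cond b z₁ z₂
  have hz (b : Bool) : PowerSeries.constantCoeff (z b) ≠ 0 := by cases b <;> simp [z, hz₁, hz₂, hi0]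
  refine ⟨z, y, hz, hy, .of_natDegree_eq_card ((monic_pencil hf (by lia)).map _) ?_ ?_ ?_⟩
  · refine laurentRoots_injective hz (Bool.injective_iff.2 fun h => hi0 ?_) fun a b hab => ?_
    · have hneg := congrArg PowerSeries.constantCoeff h
      simp only [z, cond_true, cond_false, hz₁, hz₂] at hneg
      exact neg_eq_self.1 hneg
    · exact hw.injective (by rw [← hy, ← hy, hab])
  · rw [(monic_pencil hf (by lia)).natDegree_map, natDegree_pencil (by lia), hdeg, Fintype.card_sum,
      Fintype.card_bool, ← hw.natDegree_eq_card, hv.natDegree_map, add_comm]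
  · rintro ((_ | _) | x)
    exacts [hroot₂, hroot₁, hroot x]

lemma exists_sumCongr_algEquiv [IsFractionRing ℤ[X] K] [Fintype V] {P : K[X]}
    (hT : algebraMap K E (algebraMap ℤ[X] K X) =
      (algebraMap (PowerSeries k) E PowerSeries.X ^ 2)⁻¹)
    (hz : ∀ b, PowerSeries.constantCoeff (z b) ≠ 0)
    (hr : IsRootLabelling P (laurentRoots E z y))
    {ρ : PowerSeries k ≃+* PowerSeries k} (hρ : ρ (PowerSeries.X ^ 2) = PowerSeries.X ^ 2) :
    ∃ (τ : E ≃ₐ[K] E) (t : Equiv.Perm Bool) (s : Equiv.Perm V),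
      (∀ a, τ (algebraMap _ E a) = algebraMap _ E (ρ a)) ∧ (∀ x, ρ (y x) = y (s x)) ∧
      ∀ ω, τ (laurentRoots E z y ω) = laurentRoots E z y (Equiv.Perm.sumCongr t s ω) := by
  obtain ⟨τ, hτ⟩ := exists_algEquiv_of_powerSeries hT hρ
  obtain ⟨π, hπ⟩ := hr.exists_perm τ
  have hinr (x : V) : ∃ x', π (.inr x) = .inr x' ∧ y x' = ρ (y x) :=
    exists_eq_inr_of_laurentRoots_eq hz ((hπ _).symm.trans (hτ _))
  have hmaps : Set.MapsTo π (Set.range Sum.inr) (Set.range Sum.inr) := by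
    rintro _ ⟨x, rfl⟩
    obtain ⟨x', hx', _⟩ := hinr x
    exact ⟨x', hx'.symm⟩
  obtain ⟨⟨t, s⟩, rfl⟩ := Equiv.Perm.mem_sumCongrHom_range_of_perm_mapsTo_inl
    ((Equiv.Perm.perm_mapsTo_inl_iff_mapsTo_inr π).2 hmaps)
  refine ⟨τ, t, s, hτ, fun x => ?_, hπ⟩
  obtain ⟨x', hx', hy'⟩ := hinr x
  rw [← hy', ← Sum.inr_injective hx']

end PencilRoots

section PencilGalois

open Equiv

variable {k K E V : Type*} [Field k] [Field K] [Field E] [Algebra ℤ[X] K]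
  [Algebra (PowerSeries k) E] [Algebra K E] [IsFractionRing (PowerSeries k) E]
  [IsFractionRing ℤ[X] K] [Fintype V] {P : K[X]} {z : Bool → PowerSeries k} {y : V → PowerSeries k}

lemma swap_mem_galPerm_laurentRoots [CharZero k] [DecidableEq V]
    (hT : algebraMap K E (algebraMap ℤ[X] K X) =
      (algebraMap (PowerSeries k) E PowerSeries.X ^ 2)⁻¹)
    (hz : ∀ b, PowerSeries.constantCoeff (z b) ≠ 0)
    (hy : Function.Injective fun x => PowerSeries.constantCoeff (y x))
    (hr : IsRootLabelling P (laurentRoots E z y)) :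
    swap (.inl true) (.inl false) ∈ galPerm K (laurentRoots E z y) := by
  obtain ⟨ρ, hρX, hρ⟩ := exists_powerSeries_ringEquiv_neg (k := k)
  obtain ⟨τ, t, s, hτ, hs, hr'⟩ :=
    exists_sumCongr_algEquiv hT hz hr (ρ := ρ) (by rw [map_pow, hρX, neg_sq])
  have hs1 : s = 1 := Equiv.ext fun x => hy (by simp [← hs, hρ])
  have hmoved (t : Perm Bool) : t true ≠ true → t = swap true false := by
    revert t
    decide
  have ht : t = swap true false := by
    refine hmoved t ?_
    intro hfix
    have h := hr' (.inl true)
    rw [Perm.sumCongr_apply, Sum.map_inl, hfix, laurentRoots, Sum.elim_inl, map_div₀, hτ, hτ, hρX,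
      map_neg, div_neg, ← neg_div, div_left_inj' algebraMap_powerSeries_X_ne_zero, ← map_neg] at h
    have hcoeff := congrArg PowerSeries.constantCoeff (IsFractionRing.injective _ E h)
    rw [map_neg, hρ, neg_eq_self] at hcoeff
    exact hz true hcoeff
  exact ⟨τ, by rwa [hs1, ht, Perm.sumCongr_swap_one] at hr'⟩

lemma exists_sumCongr_mem_galPerm_laurentRoots
    (hT : algebraMap K E (algebraMap ℤ[X] K X) =
      (algebraMap (PowerSeries k) E PowerSeries.X ^ 2)⁻¹)
    (hz : ∀ b, PowerSeries.constantCoeff (z b) ≠ 0)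
    (hy : Function.Injective fun x => PowerSeries.constantCoeff (y x))
    (hr : IsRootLabelling P (laurentRoots E z y)) (σ : k ≃+* k) {s : Perm V}
    (hσ : ∀ x, σ (PowerSeries.constantCoeff (y x)) = PowerSeries.constantCoeff (y (s x))) :
    ∃ t, Perm.sumCongr t s ∈ galPerm K (laurentRoots E z y) := by
  obtain ⟨ρ, hρX, hρ⟩ := exists_powerSeries_ringEquiv_map σ
  obtain ⟨τ, t, s', -, hs, hr'⟩ :=
    exists_sumCongr_algEquiv hT hz hr (ρ := ρ) (by rw [map_pow, hρX])
  obtain rfl : s' = s := Equiv.ext fun x => hy (by simp [← hs, hρ, hσ])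
  exact ⟨t, τ, hr'⟩

lemma exists_sumCongr_sumCongr_mem_galPerm_laurentRoots [Algebra ℚ k] {α β : Type*} [Fintype α]
    [Fintype β] {w₁ : α → k} {w₂ : β → k} {y : α ⊕ β → PowerSeries k} {p q : ℚ[X]}
    (hT : algebraMap K E (algebraMap ℤ[X] K X) =
      (algebraMap (PowerSeries k) E PowerSeries.X ^ 2)⁻¹)
    (hz : ∀ b, PowerSeries.constantCoeff (z b) ≠ 0)
    (hy : ∀ x, PowerSeries.constantCoeff (y x) = Sum.elim w₁ w₂ x)
    (hr : IsRootLabelling P (laurentRoots E z y)) (hw : Function.Injective (Sum.elim w₁ w₂))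
    (hw₁ : IsRootLabelling p w₁) (hw₂ : IsRootLabelling q w₂) (γ : k ≃ₐ[ℚ] k) :
    ∃ t s₁ s₂, Perm.sumCongr t (Perm.sumCongr s₁ s₂) ∈ galPerm K (laurentRoots E z y) ∧
      (∀ a, γ (w₁ a) = w₁ (s₁ a)) ∧ ∀ b, γ (w₂ b) = w₂ (s₂ b) := by
  obtain ⟨s₁, hs₁⟩ := hw₁.exists_perm γ
  obtain ⟨s₂, hs₂⟩ := hw₂.exists_perm γ
  obtain ⟨t, ht⟩ := exists_sumCongr_mem_galPerm_laurentRoots hT hz (by simpa only [hy] using hw) hr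
    (γ : k ≃+* k) (s := Perm.sumCongr s₁ s₂) (by simp [hy, hs₁, hs₂])
  exact ⟨t, s₁, s₂, ht, hs₁, hs₂⟩

lemma isCoprime_of_natDegree_lt {F : Type*} [Field F] {p q : F[X]} (hp : p ≠ 0)
    (hq : Irreducible q) (h : p.natDegree < q.natDegree) : IsCoprime p q :=
  (hq.coprime_iff_not_dvd.2 fun hdvd => h.not_ge (natDegree_le_of_dvd hdvd hp)).symm

theorem hasGaloisGroup_top_pencil_of_isAlgClosure (k : Type*) [Field k] [Algebra ℚ k]
    [IsAlgClosure ℚ k] {f v₁ v₂ : ℤ[X]} (hf : f.Monic) (hf' : Irreducible f) (hv₁ : v₁.Monic)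
    (hv₁' : Irreducible v₁) (hv₂ : v₂.Monic) (hv₂' : Irreducible v₂)
    (hdeg : f.natDegree = v₁.natDegree + v₂.natDegree + 2)
    (hlt : v₁.natDegree < v₂.natDegree) (hdvd : ¬ 2 + v₁.natDegree ∣ v₂.natDegree)
    (hodd : Odd v₁.natDegree ∨ Odd v₂.natDegree) :
    HasGaloisGroup (⊤ : Subgroup (Perm (Fin f.natDegree)))
      ((pencil f (v₁ * v₂)).map (algebraMap ℤ[X] (FractionRing ℤ[X]))) := by
  have : CharZero k := algebraRat.charZero k
  have : IsAlgClosed k := IsAlgClosure.isAlgClosed ℚ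
  have : Normal ℚ k := IsAlgClosure.normal ℚ k
  have hirr₁ := (hv₁.irreducible_iff_irreducible_map_fraction_map (K := ℚ)).1 hv₁'
  have hirr₂ := (hv₂.irreducible_iff_irreducible_map_fraction_map (K := ℚ)).1 hv₂'
  have hw₁ := IsRootLabelling.rootSet (L := k) (hv₁.map (algebraMap ℤ ℚ)) hirr₁.separable
    (IsAlgClosed.splits _)
  have hw₂ := IsRootLabelling.rootSet (L := k) (hv₂.map (algebraMap ℤ ℚ)) hirr₂.separable
    (IsAlgClosed.splits _)
  have hcoprime : IsCoprime (v₁.map (algebraMap ℤ ℚ)) (v₂.map (algebraMap ℤ ℚ)) := by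
    refine isCoprime_of_natDegree_lt hirr₁.ne_zero hirr₂ ?_
    rwa [hv₁.natDegree_map, hv₂.natDegree_map]
  have hw := hw₁.sumElim hw₂ hcoprime
  rw [← Polynomial.map_mul] at hw
  obtain ⟨φ, hφ⟩ := exists_ringHom_inv_sq k (FractionRing ℤ[X]) (FractionRing (PowerSeries k))
  let := φ.toAlgebra
  have hdeg' : f.natDegree = (v₁ * v₂).natDegree + 2 := by rw [hv₁.natDegree_mul hv₂, hdeg]
  obtain ⟨z, y, hz, hy, hr⟩ := exists_isRootLabelling_laurentRoots hφ hf (hv₁.mul hv₂) hdeg' hw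
  have hcard₁ := hw₁.natDegree_eq_card.symm.trans (hv₁.natDegree_map _)
  have hcard₂ := hw₂.natDegree_eq_card.symm.trans (hv₂.natDegree_map _)
  have hmonic := monic_pencil hf (v := v₁ * v₂) (by lia)
  have hirr := irreducible_pencil hf' (hv₁.mul hv₂).ne_zero (by lia)
  refine hasGaloisGroup_top_of_forall_galPerm_le hr ?_ (fun G hG _ => ?_)
    ((hmonic.irreducible_iff_irreducible_map_fraction_map).1 hirr)
  · rw [← hr.natDegree_eq_card, hmonic.natDegree_map, natDegree_pencil (by lia)]
  have hgal := exists_sumCongr_sumCongr_mem_galPerm_laurentRoots hφ hz hy hr hw.injective hw₁ hw₂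
  classical
  refine eq_top_of_swap_mem
    (hG (swap_mem_galPerm_laurentRoots hφ hz (by simpa only [hy] using hw.injective) hr))
    (fun a a' => ?_) (fun b b' => ?_) ?_ ?_ ?_
  · obtain ⟨γ, hγ⟩ := hw₁.exists_algEquiv_apply_eq hirr₁ a a'
    obtain ⟨t, s₁, s₂, hmem, h₁, _⟩ := hgal γ
    exact ⟨t, s₁, s₂, hG hmem, hw₁.injective ((h₁ a).symm.trans hγ)⟩
  · obtain ⟨γ, hγ⟩ := hw₂.exists_algEquiv_apply_eq hirr₂ b b'
    obtain ⟨t, s₁, s₂, hmem, _, h₂⟩ := hgal γ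
    exact ⟨t, s₁, s₂, hG hmem, hw₂.injective ((h₂ b).symm.trans hγ)⟩
  · rwa [hcard₁, hcard₂]
  · rwa [hcard₁, hcard₂]
  · rwa [hcard₁, hcard₂]

end PencilGalois

section Direction

lemma irreducible_X_pow_sub_C_of_prime {R : Type*} [CommRing R] [IsDomain R] {p : R} (hp : Prime p)
    {m : ℕ} (hm : m ≠ 0) : Irreducible (X ^ m - C p) := by
  have hmonic : (X ^ m - C p).Monic := monic_X_pow_sub_C p hm
  have hspan : (Ideal.span {p}).IsPrime := (Ideal.span_singleton_prime hp.ne_zero).2 hp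
  have heis : (X ^ m - C p).IsEisensteinAt (Ideal.span {p}) := by
    refine ⟨?_, fun {i} hi => ?_, ?_⟩
    · rw [hmonic.leadingCoeff]
      exact fun h => hspan.ne_top (Ideal.eq_top_of_isUnit_mem _ h isUnit_one)
    · rw [natDegree_X_pow_sub_C] at hi
      rw [coeff_sub, coeff_X_pow, if_neg hi.ne, coeff_C, zero_sub]
      split_ifs
      · exact neg_mem (Ideal.mem_span_singleton_self p)
      · simp
    · rw [coeff_sub, coeff_X_pow, if_neg hm.symm, coeff_C_zero, zero_sub,
        Ideal.span_singleton_pow, Ideal.mem_span_singleton, dvd_neg]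
      intro h
      refine hp.not_isUnit (isUnit_of_dvd_one ((mul_dvd_mul_iff_left hp.ne_zero).1 ?_))
      rwa [mul_one, ← sq]
  exact heis.irreducible hspan hmonic.isPrimitive (by rw [natDegree_X_pow_sub_C]; lia)

lemma exists_not_dvd_of_nine_le {n : ℕ} (hn : 9 ≤ n) :
    ∃ k, 3 ≤ k ∧ 2 * k < n + 2 ∧ ¬ k ∣ n ∧ (Odd k ∨ Odd n) := by
  obtain hn' | hn' := (Nat.even_or_odd n).symm
  · exact ⟨4, by lia, by lia, fun h => by obtain ⟨j, rfl⟩ := hn'; lia, .inr hn'⟩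
  refine ⟨2 * (n / 4) - 1, by lia, by lia, ?_, .inl ⟨n / 4 - 1, by lia⟩⟩
  rintro ⟨j, hj⟩
  have : j ≤ 3 := by
    by_contra! h
    have := Nat.mul_le_mul_left (2 * (n / 4) - 1) h
    lia
  obtain ⟨h, rfl⟩ := hn'
  interval_cases j <;> lia

theorem exists_forall_hasGaloisGroup_top_pencil {n : ℕ} (hn : 9 ≤ n) :
    ∃ v : ℤ[X], v.Monic ∧ v.natDegree + 2 = n ∧ ∀ f : ℤ[X], f.Monic → Irreducible f →
      f.natDegree = n →
        HasGaloisGroup (⊤ : Subgroup (Equiv.Perm (Fin n)))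
          ((pencil f v).map (algebraMap ℤ[X] (FractionRing ℤ[X]))) := by
  obtain ⟨m, l, hsum, hm, hlt, hdvd, hodd⟩ :
      ∃ m l, m + l + 2 = n ∧ 0 < m ∧ m < l ∧ ¬ 2 + m ∣ l ∧ (Odd m ∨ Odd l) := by
    obtain ⟨k, hk, hlt, hdvd, hodd⟩ := exists_not_dvd_of_nine_le hn
    refine ⟨k - 2, n - k, by lia, by lia, by lia, ?_, by grind⟩
    rwa [Nat.add_sub_cancel' (by lia), Nat.dvd_sub_iff_left (by lia) dvd_rfl]
  have hmonic {j : ℕ} (hj : j ≠ 0) : (X ^ j - C 2 : ℤ[X]).Monic := monic_X_pow_sub_C 2 hj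
  have hirr {j : ℕ} (hj : j ≠ 0) := irreducible_X_pow_sub_C_of_prime Int.prime_two hj
  have hdeg (j : ℕ) : (X ^ j - C 2 : ℤ[X]).natDegree = j := natDegree_X_pow_sub_C
  refine ⟨(X ^ m - C 2) * (X ^ l - C 2), (hmonic hm.ne').mul (hmonic (by lia)), ?_, ?_⟩
  · rw [(hmonic hm.ne').natDegree_mul (hmonic (by lia)), hdeg, hdeg, hsum]
  · rintro f hf hf' rfl
    refine @hasGaloisGroup_top_pencil_of_isAlgClosure (AlgebraicClosure ℚ) _ _
      (AlgebraicClosure.instIsAlgClosure ℚ) _ _ _ hf hf' (hmonic hm.ne')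
      (hirr hm.ne') (hmonic (by lia)) (hirr (by lia)) ?_ ?_ ?_ ?_ <;> simpa only [hdeg] using by lia

end Direction

/-! ### Resolvents -/

section Invariants

open Equiv

lemma exists_natCast_eval_eq_imp_eq {L ι : Type*} [CommRing L] [IsDomain L] [CharZero L]
    [Fintype ι] (p : ι → L[X]) {D : ℕ} (hD : ∀ i, (p i).natDegree ≤ D) :
    ∃ M < Fintype.card ι ^ 2 * D + 1,
      ∀ i j, (p i).eval (M : L) = (p j).eval (M : L) → p i = p j := by
  classical
  by_contra! h
  set s : Finset (ι × ι) := Finset.univ.filter fun q => p q.1 ≠ p q.2 with hs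
  have hmem {i j : ι} : (i, j) ∈ s ↔ p i ≠ p j := by simp [hs]
  have hcard : s.card ≤ Fintype.card ι ^ 2 := by
    simpa [Fintype.card_prod, sq] using s.card_le_univ
  have hprod : ∏ q ∈ s, (p q.1 - p q.2) ≠ 0 :=
    Finset.prod_ne_zero_iff.2 fun q hq => sub_ne_zero.2 (hmem.1 hq)
  refine hprod (eq_zero_of_natDegree_lt_card_of_eval_eq_zero' _
    ((Finset.range (Fintype.card ι ^ 2 * D + 1)).map Nat.castEmbedding) ?_ ?_)
  · intro a ha
    obtain ⟨M, hM, rfl⟩ := Finset.mem_map.1 ha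
    obtain ⟨i, j, hij, hne⟩ := h M (Finset.mem_range.1 hM)
    rw [eval_prod]
    exact Finset.prod_eq_zero (hmem.2 hne) (by simpa using sub_eq_zero.2 hij)
  · rw [Finset.card_map, Finset.card_range, Nat.lt_succ_iff]
    calc (∏ q ∈ s, (p q.1 - p q.2)).natDegree ≤ ∑ q ∈ s, (p q.1 - p q.2).natDegree :=
          natDegree_prod_le _ _
      _ ≤ s.card • D := Finset.sum_le_card_nsmul _ _ D fun q _ =>
          (natDegree_sub_le _ _).trans (max_le (hD _) (hD _))
      _ ≤ Fintype.card ι ^ 2 * D := Nat.mul_le_mul_right D hcard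

variable {n : ℕ}

open Classical in
/-- The product over `G` of the conjugates of the linear form `y - ∑ M ^ i X_i`, a polynomial
invariant under `G`. -/
noncomputable def subgroupInvariant (G : Subgroup (Perm (Fin n))) (M y : ℕ) :
    MvPolynomial (Fin n) ℤ :=
  ∏ g : G, ((y : MvPolynomial (Fin n) ℤ) -
    ∑ i : Fin n, (M : MvPolynomial (Fin n) ℤ) ^ (i : ℕ) * MvPolynomial.X (g.1 i))

lemma rename_subgroupInvariant {G : Subgroup (Perm (Fin n))} (M y : ℕ) {h : Perm (Fin n)}
    (hh : h ∈ G) :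
    MvPolynomial.rename h (subgroupInvariant G M y) = subgroupInvariant G M y := by
  classical
  rw [subgroupInvariant, map_prod]
  exact Fintype.prod_equiv (Equiv.mulLeft (⟨h, hh⟩ : G)) _ _ fun g => by simp

lemma exists_aeval_subgroupInvariant_separates {L : Type*} [CommRing L] [IsDomain L] [CharZero L]
    (G : Subgroup (Perm (Fin n))) {x : Fin n → L} (hx : Function.Injective x) :
    ∃ M < Fintype.card (Perm (Fin n)) ^ 2 * n + 1,
      ∃ y < Fintype.card (Perm (Fin n)) ^ 2 * Fintype.card (Perm (Fin n)) + 1,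
        ∀ σ τ : Perm (Fin n), MvPolynomial.aeval (x ∘ σ) (subgroupInvariant G M y) =
          MvPolynomial.aeval (x ∘ τ) (subgroupInvariant G M y) → σ⁻¹ * τ ∈ G := by
  classical
  set form : Perm (Fin n) → L[X] := fun σ => ∑ i : Fin n, C (x (σ i)) * X ^ (i : ℕ) with hform
  have hcoeff (σ : Perm (Fin n)) (i : Fin n) : (form σ).coeff i = x (σ i) := by
    simp [hform, finsetSum_coeff, coeff_X_pow, Fin.val_inj]
  obtain ⟨M, hM, hform_eval⟩ := exists_natCast_eval_eq_imp_eq form (D := n) fun σ =>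
    natDegree_sum_le_of_forall_le _ _ fun i _ => (natDegree_C_mul_X_pow_le _ _).trans i.2.le
  set e : Perm (Fin n) → L := fun σ => (form σ).eval (M : L) with he
  have he_inj : Function.Injective e := fun σ τ h => by
    ext i : 1
    rw [← hx.eq_iff, ← hcoeff, ← hcoeff, hform_eval _ _ h]
  set cosetPoly : Perm (Fin n) → L[X] := fun σ => ∏ g : G, (X - C (e (σ * g))) with hcosetPoly
  have hroot (σ τ : Perm (Fin n)) : (cosetPoly σ).eval (e τ) = 0 ↔ σ⁻¹ * τ ∈ G := by
    simp only [hcosetPoly, eval_prod, Finset.prod_eq_zero_iff, Finset.mem_univ, true_and, eval_sub,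
      eval_X, eval_C, sub_eq_zero, he_inj.eq_iff]
    exact ⟨by rintro ⟨g, rfl⟩; simp, fun h => ⟨⟨_, h⟩, by simp⟩⟩
  obtain ⟨y, hy, hcoset_eval⟩ := exists_natCast_eval_eq_imp_eq cosetPoly
    (D := Fintype.card (Perm (Fin n))) fun σ => by
      rw [hcosetPoly, natDegree_finsetProd_X_sub_C_eq_card]
      exact Fintype.card_subtype_le _
  have haeval (σ : Perm (Fin n)) : MvPolynomial.aeval (x ∘ σ) (subgroupInvariant G M y) =
      (cosetPoly σ).eval (y : L) := by
    rw [subgroupInvariant, map_prod, eval_prod]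
    refine Finset.prod_congr (by congr!) fun g _ => ?_
    simp only [map_sub, map_natCast, map_sum, map_mul, map_pow, MvPolynomial.aeval_X, eval_sub,
      eval_X, eval_C, he, hform, eval_finsetSum, eval_mul, eval_pow, eval_natCast, mul_comm,
      Function.comp_apply, Perm.mul_apply]
  refine ⟨M, hM, y, hy, fun σ τ h => ?_⟩
  rw [haeval, haeval] at h
  rw [← hroot, hcoset_eval _ _ h, hroot, inv_mul_cancel]
  exact one_mem G

lemma exists_finset_separating_invariants.{u} (G : Subgroup (Perm (Fin n))) :
    ∃ S : Finset (MvPolynomial (Fin n) ℤ), (∀ θ ∈ S, ∀ σ ∈ G, MvPolynomial.rename σ θ = θ) ∧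
      ∀ (L : Type u) [CommRing L] [IsDomain L] [CharZero L] (x : Fin n → L), Function.Injective x →
        ∃ θ ∈ S, ∀ σ τ : Perm (Fin n),
          MvPolynomial.aeval (x ∘ σ) θ = MvPolynomial.aeval (x ∘ τ) θ → σ⁻¹ * τ ∈ G := by
  classical
  refine ⟨(Finset.range (Fintype.card (Perm (Fin n)) ^ 2 * n + 1) ×ˢ
    Finset.range (Fintype.card (Perm (Fin n)) ^ 2 * Fintype.card (Perm (Fin n)) + 1)).image
      fun q => subgroupInvariant G q.1 q.2, ?_, fun L _ _ _ x hx => ?_⟩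
  · simp only [Finset.forall_mem_image]
    exact fun q _ σ hσ => rename_subgroupInvariant _ _ hσ
  · obtain ⟨M, hM, y, hy, h⟩ := exists_aeval_subgroupInvariant_separates G hx
    exact ⟨_, Finset.mem_image.2 ⟨(M, y), by simp [hM, hy], rfl⟩, h⟩

end Invariants

section Resolvents

open Equiv

variable {n : ℕ} {A B : Type*} [CommRing A] [CommRing B] {G : Subgroup (Perm (Fin n))}
  {θ : MvPolynomial (Fin n) ℤ} {Φ : (MvPolynomial (Fin n) ℤ)[X]}

/-- The values of the elementary symmetric polynomials `e₁, …, eₙ` at the roots of a monic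
polynomial of degree `n`, read off its coefficients. -/
def rootEsymm (n : ℕ) (f : A[X]) : Fin n → A :=
  fun i => (-1) ^ ((i : ℕ) + 1) * f.coeff (n - 1 - i)

lemma rootEsymm_prod_X_sub_C (x : Fin n → A) (i : Fin n) :
    rootEsymm n (∏ i, (X - C (x i))) i =
      MvPolynomial.aeval x (MvPolynomial.esymm (Fin n) ℤ ((i : ℕ) + 1)) := by
  have hcard : (Finset.univ.val.map x).card = n := by simp
  have hprod : ∏ i, (X - C (x i)) = ((Finset.univ.val.map x).map fun a => X - C a).prod := by
    rw [Multiset.map_map]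
    rfl
  rw [rootEsymm, hprod, Multiset.prod_X_sub_C_coeff _ (by lia), hcard,
    MvPolynomial.aeval_esymm_eq_multiset_esymm, show n - (n - 1 - (i : ℕ)) = i + 1 by lia,
    ← mul_assoc, ← mul_pow, neg_one_mul, neg_neg, one_pow, one_mul]

/-- The polynomial obtained from `Φ` by substituting for the variables of its coefficients the
elementary symmetric functions of the roots of `f`. -/
noncomputable def specialize (Φ : (MvPolynomial (Fin n) ℤ)[X]) (f : A[X]) : A[X] :=
  Φ.map (MvPolynomial.aeval (R := ℤ) (rootEsymm n f)).toRingHom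

lemma coeff_specialize (f : A[X]) (k : ℕ) :
    (specialize Φ f).coeff k = MvPolynomial.aeval (rootEsymm n f) (Φ.coeff k) :=
  coeff_map _ _

lemma map_specialize (f : A[X]) (φ : A →+* B) :
    (specialize Φ f).map φ = specialize Φ (f.map φ) := by
  rw [specialize, specialize, map_map]
  congr 1
  exact MvPolynomial.ringHom_ext (by simp) (by simp [rootEsymm])

/-- `Φ` is the resolvent of the `G`-invariant polynomial `θ`: with its coefficients written in terms
of the elementary symmetric polynomials, its roots are the conjugates of `θ`. -/
structure IsResolvent (G : Subgroup (Perm (Fin n))) (θ : MvPolynomial (Fin n) ℤ)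
    (Φ : (MvPolynomial (Fin n) ℤ)[X]) : Prop where
  monic : Φ.Monic
  invariant : ∀ σ ∈ G, MvPolynomial.rename σ θ = θ
  map_eq_finprod :
    Φ.map (MvPolynomial.aeval (R := ℤ) fun i : Fin n =>
        MvPolynomial.esymm (Fin n) ℤ ((i : ℕ) + 1)).toRingHom =
      ∏ᶠ q : Perm (Fin n) ⧸ G, (X - C (MvPolynomial.rename q.out θ))

lemma rename_out (hθ : ∀ σ ∈ G, MvPolynomial.rename σ θ = θ) (σ : Perm (Fin n)) :
    MvPolynomial.rename (σ : Perm (Fin n) ⧸ G).out θ = MvPolynomial.rename σ θ := by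
  obtain ⟨⟨h, hh⟩, hσ⟩ := QuotientGroup.mk_out_eq_mul G σ
  rw [hσ, Perm.coe_mul, ← MvPolynomial.rename_rename, hθ h hh]

theorem exists_isResolvent (hθ : ∀ σ ∈ G, MvPolynomial.rename σ θ = θ) :
    ∃ Φ, IsResolvent G θ Φ := by
  classical
  have := Fintype.ofFinite (Perm (Fin n) ⧸ G)
  set Ψ : (MvPolynomial (Fin n) ℤ)[X] :=
    ∏ q : Perm (Fin n) ⧸ G, (X - C (MvPolynomial.rename q.out θ)) with hΨ
  have hrename (σ : Perm (Fin n)) : Ψ.map (MvPolynomial.rename σ).toRingHom = Ψ := by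
    rw [hΨ, Polynomial.map_prod]
    refine Fintype.prod_equiv (MulAction.toPerm σ) _ _ fun q => ?_
    induction q using QuotientGroup.induction_on with | H τ => ?_
    rw [MulAction.toPerm_apply, MulAction.Quotient.smul_coe, rename_out hθ, rename_out hθ,
      smul_eq_mul, Perm.coe_mul, ← MvPolynomial.rename_rename]
    simp
  have hlift : Ψ ∈ lifts (MvPolynomial.aeval (R := ℤ) fun i : Fin n =>
      MvPolynomial.esymm (Fin n) ℤ ((i : ℕ) + 1)).toRingHom := by
    refine (lifts_iff_coeff_lifts _).2 fun k => ?_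
    have hsymm : (Ψ.coeff k).IsSymmetric := fun σ => by
      conv_rhs => rw [← hrename σ, coeff_map]
      rfl
    obtain ⟨p, hp⟩ := MvPolynomial.esymmAlgHom_surjective ℤ (Fintype.card_fin n).le
      ⟨Ψ.coeff k, hsymm⟩
    exact ⟨p, (MvPolynomial.esymmAlgHom_apply p).symm.trans (congrArg Subtype.val hp)⟩
  obtain ⟨Φ, hΦ, -, hmonic⟩ :=
    lifts_and_natDegree_eq_and_monic hlift (monic_prod_X_sub_C _ _)
  exact ⟨Φ, hmonic, hθ, by rw [hΦ, finprod_eq_prod_of_fintype]⟩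

lemma natDegree_specialize [Nontrivial A] (hΦ : Φ.Monic) (f : A[X]) :
    (specialize Φ f).natDegree = Φ.natDegree :=
  hΦ.natDegree_map _

lemma map_aeval_eq_of_apply_eq {K L : Type*} [Field K] [Field L] [Algebra K L] {x : Fin n → L}
    {γ : L ≃ₐ[K] L} {π : Perm (Fin n)} (hγ : ∀ i, γ (x i) = x (π i)) :
    γ (MvPolynomial.aeval x θ) = MvPolynomial.aeval (x ∘ π) θ := by
  refine (MvPolynomial.comp_aeval_apply x (γ : L →+* L).toIntAlgHom θ).trans ?_
  exact congrArg (MvPolynomial.aeval · θ) (funext hγ)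

namespace IsResolvent

lemma natDegree_eq_index (hΦ : IsResolvent G θ Φ) : Φ.natDegree = G.index := by
  have := Fintype.ofFinite (Perm (Fin n) ⧸ G)
  rw [← hΦ.monic.natDegree_map (MvPolynomial.aeval (R := ℤ) fun i : Fin n =>
      MvPolynomial.esymm (Fin n) ℤ ((i : ℕ) + 1)).toRingHom, hΦ.map_eq_finprod,
    finprod_eq_prod_of_fintype, natDegree_finsetProd_X_sub_C_eq_card, Finset.card_univ,
    ← Nat.card_eq_fintype_card, Subgroup.index]

lemma monic_specialize (hΦ : IsResolvent G θ Φ) (f : A[X]) : (specialize Φ f).Monic :=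
  hΦ.monic.map _

lemma specialize_prod_X_sub_C (hΦ : IsResolvent G θ Φ) (x : Fin n → A) :
    specialize Φ (∏ i, (X - C (x i))) =
      ∏ᶠ q : Perm (Fin n) ⧸ G, (X - C (MvPolynomial.aeval (x ∘ q.out) θ)) := by
  have := Fintype.ofFinite (Perm (Fin n) ⧸ G)
  calc specialize Φ (∏ i, (X - C (x i)))
      = (Φ.map (MvPolynomial.aeval (R := ℤ) fun i : Fin n =>
          MvPolynomial.esymm (Fin n) ℤ ((i : ℕ) + 1)).toRingHom).map
            (MvPolynomial.aeval (R := ℤ) x).toRingHom := by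
        rw [specialize, map_map]
        congr 1
        exact MvPolynomial.ringHom_ext (by simp) (by simp [rootEsymm_prod_X_sub_C])
    _ = _ := by
        rw [hΦ.map_eq_finprod, finprod_eq_prod_of_fintype, finprod_eq_prod_of_fintype,
          Polynomial.map_prod]
        simp only [Polynomial.map_sub, map_X, map_C, AlgHom.toRingHom_eq_coe, RingHom.coe_coe,
          MvPolynomial.aeval_rename]

variable {K L : Type*} [Field K] [Field L] [Algebra K L] {P : K[X]} {x : Fin n → L}

lemma map_specialize_eq_finprod (hΦ : IsResolvent G θ Φ) (hx : IsRootLabelling P x) :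
    (specialize Φ P).map (algebraMap K L) =
      ∏ᶠ q : Perm (Fin n) ⧸ G, (X - C (MvPolynomial.aeval (x ∘ q.out) θ)) := by
  rw [map_specialize, hx.map_eq_prod, hΦ.specialize_prod_X_sub_C]

lemma aeval_specialize_eq_zero (hΦ : IsResolvent G θ Φ) (hx : IsRootLabelling P x) :
    aeval (MvPolynomial.aeval x θ) (specialize Φ P) = 0 := by
  have := Fintype.ofFinite (Perm (Fin n) ⧸ G)
  rw [← eval_map_algebraMap, hΦ.map_specialize_eq_finprod hx, finprod_eq_prod_of_fintype, eval_prod]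
  refine Finset.prod_eq_zero (Finset.mem_univ ((1 : Perm (Fin n)) : Perm (Fin n) ⧸ G)) ?_
  rw [← MvPolynomial.aeval_rename, rename_out hΦ.invariant, MvPolynomial.aeval_rename]
  rw [Perm.coe_one, Function.comp_id, eval_sub, eval_X, eval_C, sub_self]

lemma irreducible_specialize [CharZero K] (hΦ : IsResolvent G θ Φ) (hx : IsRootLabelling P x)
    (htop : galPerm K x = ⊤)
    (hθ : ∀ σ τ : Perm (Fin n),
      MvPolynomial.aeval (x ∘ σ) θ = MvPolynomial.aeval (x ∘ τ) θ → σ⁻¹ * τ ∈ G) :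
    Irreducible (specialize Φ P) := by
  have := Fintype.ofFinite (Perm (Fin n) ⧸ G)
  set α := MvPolynomial.aeval x θ
  have hroot := hΦ.aeval_specialize_eq_zero hx
  have hint : IsIntegral K α := ⟨specialize Φ P, hΦ.monic_specialize P, hroot⟩
  have hinj : Function.Injective fun q : Perm (Fin n) ⧸ G => MvPolynomial.aeval (x ∘ q.out) θ :=
    fun q q' h => by
      rw [← q.out_eq', ← q'.out_eq']
      exact QuotientGroup.eq.2 (hθ _ _ h)
  have hdvd : (specialize Φ P).map (algebraMap K L) ∣ (minpoly K α).map (algebraMap K L) := by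
    rw [hΦ.map_specialize_eq_finprod hx, finprod_eq_prod_of_fintype]
    refine Finset.prod_dvd_of_coprime (fun _ _ _ _ h => pairwise_coprime_X_sub_C hinj h)
      fun q _ => ?_
    obtain ⟨γ, hγ⟩ := mem_galPerm.1 (htop ▸ Subgroup.mem_top q.out)
    rw [dvd_iff_isRoot, IsRoot.def, eval_map_algebraMap, ← map_aeval_eq_of_apply_eq hγ,
      ← AlgEquiv.coe_toAlgHom, aeval_algHom_apply, minpoly.aeval, map_zero]
  have hle := natDegree_le_of_dvd hdvd ((minpoly.monic hint).map _).ne_zero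
  rw [natDegree_map, natDegree_map] at hle
  rw [eq_of_monic_of_dvd_of_natDegree_le (minpoly.monic hint) (hΦ.monic_specialize P)
    (minpoly.dvd K α hroot) hle]
  exact minpoly.irreducible hint

lemma exists_eval_specialize_eq_zero {f : A[X]} [IsDomain A] [UniqueFactorizationMonoid A]
    [Algebra A K] [IsFractionRing A K] [FiniteDimensional K L] [IsGalois K L]
    (hΦ : IsResolvent G θ Φ) (hx : IsRootLabelling (f.map (algebraMap A K)) x)
    (hG : galPerm K x ≤ G) : ∃ z : A, (specialize Φ f).eval z = 0 := by
  have hfixed (γ : L ≃ₐ[K] L) : γ (MvPolynomial.aeval x θ) = MvPolynomial.aeval x θ := by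
    obtain ⟨π, hπ⟩ := hx.exists_perm γ
    rw [map_aeval_eq_of_apply_eq hπ, ← MvPolynomial.aeval_rename,
      hΦ.invariant π (hG (mem_galPerm.2 ⟨γ, hπ⟩))]
  obtain ⟨r, hr⟩ := (IsGalois.mem_range_algebraMap_iff_fixed _).2 hfixed
  have hroot := hΦ.aeval_specialize_eq_zero hx
  rw [← hr, aeval_algebraMap_eq_zero_iff, ← map_specialize, aeval_map_algebraMap] at hroot
  obtain ⟨z, rfl, -⟩ := exists_integer_of_is_root_of_monic (hΦ.monic_specialize f) hroot
  refine ⟨z, ?_⟩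
  rwa [aeval_algebraMap_eq_zero_iff, coe_aeval_eq_eval] at hroot

end IsResolvent

theorem exists_finset_resolvents.{u} (G : Subgroup (Perm (Fin n))) :
    ∃ S : Finset (MvPolynomial (Fin n) ℤ)[X], (∀ Φ ∈ S, ∃ θ, IsResolvent G θ Φ) ∧
      ∀ (K : Type u) [Field K] [CharZero K] (P : K[X]),
        HasGaloisGroup (⊤ : Subgroup (Perm (Fin n))) P → ∃ Φ ∈ S, Irreducible (specialize Φ P) := by
  classical
  obtain ⟨T, hT, hsep⟩ := exists_finset_separating_invariants.{u} G
  choose! Φ hΦ using fun θ (hθ : θ ∈ T) => exists_isResolvent (hT θ hθ)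
  refine ⟨T.image Φ, ?_, ?_⟩
  · simp only [Finset.forall_mem_image]
    exact fun θ hθ => ⟨θ, hΦ θ hθ⟩
  · rintro K _ _ P ⟨x, hx, htop⟩
    have := charZero_of_injective_algebraMap (algebraMap K P.SplittingField).injective
    obtain ⟨θ, hθ, hsepθ⟩ := hsep _ x hx.injective
    exact ⟨Φ θ, Finset.mem_image_of_mem Φ hθ, (hΦ θ hθ).irreducible_specialize hx htop hsepθ⟩

end Resolvents

section ResolventBounds

variable {n : ℕ}

lemma exists_abs_aeval_le {σ : Type*} (p : MvPolynomial σ ℤ) :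
    ∃ c : ℕ, ∀ (a : σ → ℤ) (B : ℝ), 1 ≤ B → (∀ i, |(a i : ℝ)| ≤ B) →
      |(MvPolynomial.aeval a p : ℝ)| ≤ c * B ^ c := by
  induction p using MvPolynomial.induction_on with
  | C m =>
    refine ⟨m.natAbs, fun a B hB _ => ?_⟩
    simpa [Nat.cast_natAbs] using le_mul_of_one_le_right (abs_nonneg (m : ℝ)) (one_le_pow₀ hB)
  | add p q hp hq =>
    obtain ⟨c, hc⟩ := hp
    obtain ⟨c', hc'⟩ := hq
    refine ⟨c + c', fun a B hB ha => ?_⟩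
    rw [map_add, Int.cast_add, Nat.cast_add, add_mul]
    refine (abs_add_le _ _).trans (add_le_add ((hc a B hB ha).trans ?_) ((hc' a B hB ha).trans ?_))
      <;> gcongr <;> first | exact hB | lia
  | mul_X p i hp =>
    obtain ⟨c, hc⟩ := hp
    refine ⟨c + 1, fun a B hB ha => ?_⟩
    rw [map_mul, MvPolynomial.aeval_X, Int.cast_mul, abs_mul, pow_succ, ← mul_assoc]
    gcongr
    · refine (hc a B hB ha).trans ?_
      gcongr
      lia
    · exact ha i

lemma exists_abs_eval_map_aeval_le {σ : Type*} (Φ : (MvPolynomial σ ℤ)[X]) :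
    ∃ c : ℕ, ∀ (a : σ → ℤ) (z : ℤ) (B : ℝ), 1 ≤ B → (∀ i, |(a i : ℝ)| ≤ B) → |(z : ℝ)| ≤ B →
      |(((Φ.map (MvPolynomial.aeval a).toRingHom).eval z : ℤ) : ℝ)| ≤ c * B ^ c := by
  obtain ⟨p, rfl⟩ := (MvPolynomial.optionEquivLeft ℤ σ).surjective Φ
  obtain ⟨c, hc⟩ := exists_abs_aeval_le p
  refine ⟨c, fun a z B hB ha hz => ?_⟩
  have heval : ((evalRingHom z).comp (mapRingHom (MvPolynomial.aeval a).toRingHom)).comp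
      (MvPolynomial.optionEquivLeft ℤ σ).toRingEquiv.toRingHom =
        (MvPolynomial.aeval fun i : Option σ => i.elim z a).toRingHom :=
    MvPolynomial.ringHom_ext (by simp) (by rintro (_ | i) <;> simp)
  refine (congrArg (fun m : ℤ => |(m : ℝ)|) (DFunLike.congr_fun heval p)).trans_le ?_
  exact hc _ B hB (by rintro (_ | i) <;> simp [ha, hz])

lemma abs_rootEsymm (f : ℤ[X]) (i : Fin n) : |rootEsymm n f i| = |f.coeff (n - 1 - i)| := by
  rw [rootEsymm, abs_mul, abs_neg_one_pow, one_mul]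

lemma exists_abs_coeff_specialize_le (Φ : (MvPolynomial (Fin n) ℤ)[X]) :
    ∃ c : ℕ, ∀ (f : ℤ[X]) (B : ℝ), 1 ≤ B → (∀ k, |(f.coeff k : ℝ)| ≤ B) →
      ∀ k, |((specialize Φ f).coeff k : ℝ)| ≤ c * B ^ c := by
  choose c hc using fun k => exists_abs_aeval_le (Φ.coeff k)
  refine ⟨∑ k ∈ Φ.support, c k, fun f B hB hf k => ?_⟩
  rw [coeff_specialize]
  by_cases hk : k ∈ Φ.support
  · have hle : c k ≤ ∑ k ∈ Φ.support, c k := Finset.single_le_sum (fun _ _ => Nat.zero_le _) hk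
    refine (hc k _ B hB fun i => ?_).trans (by gcongr)
    rw [← Int.cast_abs, abs_rootEsymm, Int.cast_abs]
    exact hf _
  · rw [notMem_support_iff.1 hk, map_zero, Int.cast_zero, abs_zero]
    positivity

lemma abs_le_add_one_of_eval_eq_zero {f : ℤ[X]} (hf : f.Monic) {R : ℝ}
    (hR : ∀ k, |(f.coeff k : ℝ)| ≤ R) {z : ℤ} (hz : f.eval z = 0) : |(z : ℝ)| ≤ R + 1 := by
  set g := f.map (Int.castRingHom ℝ) with hg
  have hgm : g.Monic := hf.map _
  have hroot : g.IsRoot (z : ℝ) := by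
    rw [IsRoot.def, hg, eval_intCast_map, Int.cast_id, hz, map_zero]
  have hnonneg : 0 ≤ R := (abs_nonneg _).trans (hR 0)
  have hsup : cauchyBound g ≤ NNReal.mk R hnonneg + 1 := by
    rw [cauchyBound, hgm.leadingCoeff, nnnorm_one, div_one]
    gcongr
    refine Finset.sup_le fun k _ => ?_
    rw [← NNReal.coe_le_coe, coe_nnnorm, Real.norm_eq_abs, hg, coeff_map]
    exact hR k
  have hlt := hroot.norm_lt_cauchyBound hgm.ne_zero
  rw [← NNReal.coe_lt_coe, coe_nnnorm, Real.norm_eq_abs] at hlt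
  exact hlt.le.trans (by exact_mod_cast hsup)

lemma exists_abs_root_specialize_le {Φ : (MvPolynomial (Fin n) ℤ)[X]} (hΦ : Φ.Monic) :
    ∃ c : ℕ, 0 < c ∧ ∀ (f : ℤ[X]) (B : ℝ), 1 ≤ B → (∀ k, |(f.coeff k : ℝ)| ≤ B) →
      ∀ z : ℤ, (specialize Φ f).eval z = 0 → |(z : ℝ)| ≤ c * B ^ c ∧
        |(((derivative (specialize Φ f)).eval z : ℤ) : ℝ)| ≤ c * B ^ c := by
  obtain ⟨b, hb⟩ := exists_abs_coeff_specialize_le Φ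
  obtain ⟨c, hc⟩ := exists_abs_eval_map_aeval_le (derivative Φ)
  set e : ℕ := c * (b + 1) ^ c + (b + 1) * c + (b + 1)
  refine ⟨e, by positivity, fun f B hB hf z hz => ?_⟩
  set Z : ℝ := (b + 1) * B ^ (b + 1) with hZ
  have hBZ : B ≤ Z := (le_self_pow₀ hB b.succ_ne_zero).trans
    (le_mul_of_one_le_left (by positivity) (by simp))
  have hzZ : |(z : ℝ)| ≤ Z := by
    have hroot := abs_le_add_one_of_eval_eq_zero (hΦ.map _) (hb f B hB hf) hz
    have hpow : 1 ≤ B ^ (b + 1) := one_le_pow₀ hB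
    have hle : b * B ^ b ≤ b * B ^ (b + 1) := by gcongr; lia
    linarith
  refine ⟨hzZ.trans ?_, ?_⟩
  · rw [hZ]
    gcongr
    · exact_mod_cast (by lia : b + 1 ≤ e)
    · lia
  · rw [specialize, derivative_map]
    refine (hc _ z Z (hB.trans hBZ) (fun i => ?_) hzZ).trans ?_
    · rw [← Int.cast_abs, abs_rootEsymm, Int.cast_abs]
      exact (hf _).trans hBZ
    · rw [hZ, mul_pow, ← pow_mul, ← mul_assoc]
      gcongr
      · exact_mod_cast (by lia : c * (b + 1) ^ c ≤ e)
      · lia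

end ResolventBounds

/-! ### Counting polynomials with a given Galois group -/

section Lines

open Equiv

variable {n : ℕ} {G : Subgroup (Perm (Fin n))}

lemma eq_top_or_eq_alternatingGroup_of_le {α : Type*} [Fintype α] [DecidableEq α] [Nontrivial α]
    {G : Subgroup (Perm α)} (hG : alternatingGroup α ≤ G) : G = ⊤ ∨ G = alternatingGroup α := by
  have hdvd := Subgroup.index_dvd_of_le hG
  rw [alternatingGroup.index_eq_two, Nat.dvd_prime Nat.prime_two, Subgroup.index_eq_one] at hdvd
  exact hdvd.imp_right Perm.eq_alternatingGroup_of_index_eq_two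

lemma choose_half_le_two_mul_index_of_hasGaloisGroup {K : Type*} [Field K] {P : K[X]} (hn : 9 ≤ n)
    (hP : Irreducible P) (hG : HasGaloisGroup G P) (hS : ¬ Nonempty (P.Gal ≃* Perm (Fin n)))
    (hA : ¬ Nonempty (P.Gal ≃* alternatingGroup (Fin n))) :
    n.choose (n / 2) ≤ 2 * G.index := by
  obtain ⟨x, hx, rfl⟩ := hG
  have : Nontrivial (Fin n) := Fin.nontrivial_iff_two_le.2 (by lia)
  have := hx.isPretransitive_galPerm hP
  obtain ⟨e⟩ : Nonempty (P.Gal ≃* galPerm K x) := hx.nonempty_mulEquiv_galPerm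
  have hnot : ¬ alternatingGroup (Fin n) ≤ galPerm K x := fun hle => by
    obtain h | h := eq_top_or_eq_alternatingGroup_of_le hle
    · exact hS ⟨e.trans ((MulEquiv.subgroupCongr h).trans Subgroup.topEquiv)⟩
    · exact hA ⟨e.trans (MulEquiv.subgroupCongr h)⟩
  simpa only [Fintype.card_fin] using
    choose_half_le_two_mul_index ((Fintype.card_fin n).ge.trans' hn) _ hnot

lemma IsResolvent.exists_eval_eq_zero_of_hasGaloisGroup {θ : MvPolynomial (Fin n) ℤ}
    {Φ : (MvPolynomial (Fin n) ℤ)[X]} (hΦ : IsResolvent G θ Φ) {A K : Type*} [CommRing A]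
    [IsDomain A] [UniqueFactorizationMonoid A] [Field K] [CharZero K] [Algebra A K]
    [IsFractionRing A K] {f : A[X]} (hf : HasGaloisGroup G (f.map (algebraMap A K))) :
    ∃ z : A, (specialize Φ f).eval z = 0 := by
  obtain ⟨x, hx, hG⟩ := hf
  have : IsGalois K (f.map (algebraMap A K)).SplittingField := ⟨⟩
  exact hΦ.exists_eval_specialize_eq_zero hx hG.le

lemma exists_natDegree_coeff_specialize_pencil_le (Φ : (MvPolynomial (Fin n) ℤ)[X]) :
    ∃ D : ℕ, ∀ (f v : ℤ[X]) (k : ℕ), ((specialize Φ (pencil f v)).coeff k).natDegree ≤ D := by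
  refine ⟨∑ k ∈ Φ.support, (Φ.coeff k).totalDegree, fun f v k => ?_⟩
  rw [coeff_specialize]
  by_cases hk : k ∈ Φ.support
  · have hle : (Φ.coeff k).totalDegree ≤ ∑ k ∈ Φ.support, (Φ.coeff k).totalDegree :=
      Finset.single_le_sum (f := fun k => (Φ.coeff k).totalDegree) (fun _ _ => Nat.zero_le _) hk
    refine (MvPolynomial.aeval_natDegree_le (Φ.coeff k) hle (n := 1) _ fun i => ?_).trans
      (mul_one _).le
    rw [rootEsymm, coeff_pencil]
    compute_degree
  · rw [notMem_support_iff.1 hk, map_zero, natDegree_zero]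
    exact Nat.zero_le _

lemma exists_card_specialize_root_le (v : ℤ[X]) {Φ : (MvPolynomial (Fin n) ℤ)[X]} (hΦ : Φ.Monic)
    (hd : 0 < Φ.natDegree) {ε : ℝ} (hε : 0 < ε) :
    ∃ K : ℝ, ∀ H : ℝ, 1 ≤ H → ∀ f : ℤ[X],
      Irreducible (specialize Φ ((pencil f v).map (algebraMap ℤ[X] (FractionRing ℤ[X])))) →
      ∀ S : Finset ℤ, (∀ t ∈ S, |(t : ℝ)| ≤ H ∧ (∀ k, |((f + C t * v).coeff k : ℝ)| ≤ H) ∧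
        ∃ z : ℤ, (specialize Φ (f + C t * v)).eval z = 0) →
      (S.card : ℝ) ≤ K * H ^ ((1 : ℝ) / Φ.natDegree + ε) := by
  obtain ⟨D, hD⟩ := exists_natDegree_coeff_specialize_pencil_le Φ
  obtain ⟨c, hc, hroot⟩ := exists_abs_root_specialize_le hΦ
  obtain ⟨K, hK⟩ := exists_card_integer_points_le hd hc D hε
  refine ⟨K, fun H hH f hirr S hS => hK H hH (specialize Φ (pencil f v)) (hΦ.map _)
    (natDegree_specialize hΦ _) (hD f v) (by rwa [map_specialize]) S fun t ht => ?_⟩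
  obtain ⟨htH, hcoeff, z, hz⟩ := hS t ht
  refine ⟨htH, z, ?_⟩
  rw [← map_evalRingHom_eval, ← map_evalRingHom_eval, ← derivative_map, map_specialize,
    map_pencil_evalRingHom]
  exact ⟨(hroot _ H hH hcoeff z hz).1, hz, (hroot _ H hH hcoeff z hz).2⟩

lemma exists_card_hasGaloisGroup_line_le {v : ℤ[X]}
    (hv : ∀ f : ℤ[X], f.Monic → Irreducible f → f.natDegree = n →
      HasGaloisGroup (⊤ : Subgroup (Perm (Fin n)))
        ((pencil f v).map (algebraMap ℤ[X] (FractionRing ℤ[X]))))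
    (G : Subgroup (Perm (Fin n))) {ε : ℝ} (hε : 0 < ε) :
    ∃ K : ℝ, 0 ≤ K ∧ ∀ H : ℝ, 1 ≤ H → ∀ f : ℤ[X], f.Monic → Irreducible f → f.natDegree = n →
      ∀ S : Finset ℤ, (∀ t ∈ S, |(t : ℝ)| ≤ H ∧ (∀ k, |((f + C t * v).coeff k : ℝ)| ≤ H) ∧
        HasGaloisGroup G ((f + C t * v).map (Int.castRingHom ℚ))) →
      (S.card : ℝ) ≤ K * H ^ ((1 : ℝ) / G.index + ε) := by
  obtain ⟨R, hR, hirr⟩ := exists_finset_resolvents G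
  choose! θ hθ using hR
  have hbound (Φ) (hΦ : Φ ∈ R) := exists_card_specialize_root_le v (hθ Φ hΦ).monic (hε := hε) <| by
    rw [(hθ Φ hΦ).natDegree_eq_index]
    exact Nat.pos_of_ne_zero Subgroup.FiniteIndex.index_ne_zero
  choose! K hK using hbound
  refine ⟨∑ Φ ∈ R, |K Φ|, by positivity, fun H hH f hf hf' hdeg S hS => ?_⟩
  obtain ⟨Φ, hΦ, hΦirr⟩ := hirr _ _ (hv f hf hf' hdeg)
  calc (S.card : ℝ) ≤ K Φ * H ^ ((1 : ℝ) / Φ.natDegree + ε) :=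
        hK Φ hΦ H hH f hΦirr S fun t ht => ⟨(hS t ht).1, (hS t ht).2.1,
          (hθ Φ hΦ).exists_eval_eq_zero_of_hasGaloisGroup (hS t ht).2.2⟩
    _ = K Φ * H ^ ((1 : ℝ) / G.index + ε) := by rw [(hθ Φ hΦ).natDegree_eq_index]
    _ ≤ (∑ Φ ∈ R, |K Φ|) * H ^ ((1 : ℝ) / G.index + ε) := by
        gcongr
        exact (le_abs_self _).trans
          (Finset.single_le_sum (f := fun Φ => |K Φ|) (fun _ _ => abs_nonneg _) hΦ)

end Lines

section Fibration

variable {n : ℕ}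

lemma finite_ncard_monicBox_coeff_eq_zero_le {m : ℕ} (hm : m < n) {R : ℝ} (hR : 1 ≤ R) :
    {g ∈ monicBox n R | g.coeff m = 0}.Finite ∧
      ({g ∈ monicBox n R | g.coeff m = 0}.ncard : ℝ) ≤ (3 * R) ^ (n - 1) := by
  let r : ℕ → ℝ := Function.update (fun _ => R) m 0
  have hr : ∀ j < n, 0 ≤ r j := fun j _ => by
    by_cases hj : j = m <;> simp [r, hj]
    linarith
  obtain ⟨hfin, hcard⟩ := finite_ncard_monic_le_prod n hr
  have hsub : {g ∈ monicBox n R | g.coeff m = 0} ⊆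
      {g : ℤ[X] | g.Monic ∧ g.natDegree = n ∧ ∀ j < n, |(g.coeff j : ℝ)| ≤ r j} := by
    rintro g ⟨⟨hg, hgn, hgR⟩, hgm⟩
    refine ⟨hg, hgn, fun j _ => ?_⟩
    by_cases hj : j = m
    · simp [r, hj, hgm]
    · simpa [r, hj] using hgR j
  refine ⟨hfin.subset hsub, (Nat.cast_le.2 (Set.ncard_le_ncard hsub hfin)).trans ?_⟩
  calc _ ≤ ∏ j ∈ Finset.range n, (2 * r j + 1) := hcard
    _ = ∏ j ∈ (Finset.range n).erase m, (2 * r j + 1) := by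
        rw [← Finset.mul_prod_erase _ _ (Finset.mem_range.2 hm)]
        simp [r]
    _ ≤ ∏ j ∈ (Finset.range n).erase m, 3 * R := by
        refine Finset.prod_le_prod (fun j hj => ?_) fun j hj => ?_
        · linarith [hr j (Finset.mem_range.1 (Finset.mem_of_mem_erase hj))]
        · simp only [r, Function.update_of_ne (Finset.ne_of_mem_erase hj)]
          linarith
    _ = (3 * R) ^ (n - 1) := by
        rw [Finset.prod_const, Finset.card_erase_of_mem (Finset.mem_range.2 hm), Finset.card_range]

lemma exists_nat_abs_coeff_le (v : ℤ[X]) : ∃ V : ℕ, ∀ k, |(v.coeff k : ℝ)| ≤ V := by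
  refine ⟨∑ k ∈ v.support, (v.coeff k).natAbs, fun k => ?_⟩
  rw [← Int.cast_abs, ← Nat.cast_natAbs, Nat.cast_le]
  by_cases hk : k ∈ v.support
  · exact Finset.single_le_sum (f := fun k => (v.coeff k).natAbs) (fun _ _ => Nat.zero_le _) hk
  · simp [notMem_support_iff.1 hk]

lemma sub_coeff_mul_mem_monicBox {f v : ℤ[X]} (hvn : v.natDegree < n) {H V : ℝ}
    (hf : f ∈ monicBox n H) (hV : ∀ k, |(v.coeff k : ℝ)| ≤ V) (m : ℕ) :
    f - C (f.coeff m) * v ∈ monicBox n ((V + 1) * H) := by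
  obtain ⟨hfm, rfl, hfH⟩ := hf
  have hlt : (C (f.coeff m) * v).natDegree < f.natDegree := (natDegree_C_mul_le _ _).trans_lt hvn
  refine ⟨hfm.sub_of_left (degree_lt_degree hlt), natDegree_sub_eq_left_of_natDegree_lt hlt,
    fun j => ?_⟩
  rw [coeff_sub, coeff_C_mul]
  push_cast
  have hmul : |(f.coeff m : ℝ)| * |(v.coeff j : ℝ)| ≤ H * V :=
    mul_le_mul (hfH m) (hV j) (abs_nonneg _) ((abs_nonneg _).trans (hfH m))
  calc |(f.coeff j : ℝ) - f.coeff m * v.coeff j|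
      ≤ |(f.coeff j : ℝ)| + |(f.coeff m : ℝ)| * |(v.coeff j : ℝ)| := by
        rw [← abs_mul]
        exact abs_sub _ _
    _ ≤ (V + 1) * H := by linarith [hfH j]

lemma exists_ncard_le_of_forall_card_line_le {v : ℤ[X]} (hv : v.Monic) (hvn : v.natDegree < n) :
    ∃ c : ℝ, 0 ≤ c ∧ ∀ (H B : ℝ), 1 ≤ H → 0 ≤ B → ∀ s ⊆ monicBox n H,
      (∀ f ∈ s, ∀ T : Finset ℤ, (∀ t ∈ T, f + C t * v ∈ s) → (T.card : ℝ) ≤ B) →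
        (s.ncard : ℝ) ≤ c * H ^ (n - 1) * B := by
  classical
  obtain ⟨V, hV⟩ := exists_nat_abs_coeff_le v
  refine ⟨(3 * (V + 1)) ^ (n - 1), by positivity, fun H B hH hB s hs hline => ?_⟩
  set m := v.natDegree
  let base (f : ℤ[X]) : ℤ[X] := f - C (f.coeff m) * v
  have hR : 1 ≤ (V + 1) * H := one_le_mul_of_one_le_of_one_le (by simp) hH
  obtain ⟨hfin, hcard⟩ := finite_ncard_monicBox_coeff_eq_zero_le hvn hR
  lift s to Finset ℤ[X] using (finite_monicBox n (by linarith)).subset hs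
  have hbase : ∀ f ∈ s, base f ∈ hfin.toFinset := fun f hf => hfin.mem_toFinset.2
    ⟨sub_coeff_mul_mem_monicBox hvn (hs hf) hV m, by simp [base, m, hv.coeff_natDegree]⟩
  have hfibre : ∀ g ∈ hfin.toFinset, {f ∈ s | base f = g}.card ≤ ⌊B⌋₊ := fun g _ => by
    refine Nat.le_floor ?_
    obtain h | ⟨f, hf⟩ := {f ∈ s | base f = g}.eq_empty_or_nonempty
    · simpa [h] using hB
    rw [Finset.mem_filter] at hf
    have heq : ∀ f' ∈ {f ∈ s | base f = g}, f + C (f'.coeff m - f.coeff m) * v = f' := by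
      intro f' hf'
      have h : base f' = base f := (Finset.mem_filter.1 hf').2.trans hf.2.symm
      simp only [base] at h
      rw [C_sub]
      linear_combination -h
    rw [← Finset.card_image_of_injOn (f := fun f' : ℤ[X] => f'.coeff m - f.coeff m)
      fun p hp q hq h => by rw [← heq p hp, ← heq q hq]; exact congrArg (f + C · * v) h]
    refine hline f hf.1 _ ?_
    simp only [Finset.forall_mem_image]
    exact fun f' hf' => (heq f' hf').symm ▸ (Finset.mem_filter.1 hf').1
  have hle := Finset.card_le_mul_card_image_of_maps_to hbase _ hfibre
  rw [← Set.ncard_eq_toFinset_card _ hfin] at hle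
  rw [Set.ncard_coe_finset, ← mul_pow, mul_assoc, mul_comm]
  calc (s.card : ℝ) ≤ ⌊B⌋₊ * {g ∈ monicBox n ((V + 1) * H) | g.coeff m = 0}.ncard := by
        rw [← Nat.cast_mul]
        exact Nat.cast_le.2 hle
    _ ≤ B * (3 * ((V + 1) * H)) ^ (n - 1) := by
        gcongr
        exact Nat.floor_le hB

theorem exists_ncard_irreducible_hasGaloisGroup_le (hn : 9 ≤ n)
    (G : Subgroup (Equiv.Perm (Fin n))) {ε : ℝ} (hε : 0 < ε) :
    ∃ K : ℝ, 0 ≤ K ∧ ∀ H : ℝ, 1 ≤ H →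
      ({f ∈ monicBox n H | Irreducible f ∧
        HasGaloisGroup G (f.map (Int.castRingHom ℚ))}.ncard : ℝ) ≤
          K * H ^ ((n : ℝ) - 1 + 1 / G.index + ε) := by
  obtain ⟨v, hv, hvn, hpencil⟩ := exists_forall_hasGaloisGroup_top_pencil hn
  obtain ⟨c, hc, hcount⟩ := exists_ncard_le_of_forall_card_line_le (n := n) hv (by lia)
  obtain ⟨K, hK, hline⟩ := exists_card_hasGaloisGroup_line_le hpencil G hε
  set e : ℝ := 1 / G.index + ε with he
  refine ⟨c * (K * 2 ^ e), by positivity, fun H hH => ?_⟩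
  calc _ ≤ c * H ^ (n - 1) * (K * (2 * H) ^ e) := by
        refine hcount H _ hH (by positivity) _ (fun f hf => hf.1) fun f hf T hT => ?_
        obtain ⟨⟨hfm, hfn, hfH⟩, hirr, -⟩ := hf
        refine hline (2 * H) (by linarith) f hfm hirr hfn T fun t ht => ?_
        obtain ⟨⟨-, -, hft⟩, -, hgal⟩ := hT t ht
        refine ⟨?_, fun k => (hft k).trans (by linarith), hgal⟩
        have ht := hft v.natDegree
        rw [coeff_add, coeff_C_mul, hv.coeff_natDegree, mul_one, Int.cast_add] at ht
        calc |(t : ℝ)| = |(f.coeff v.natDegree + t : ℝ) - f.coeff v.natDegree| := by ring_nf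
          _ ≤ 2 * H := (abs_sub _ _).trans (by linarith [hfH v.natDegree])
    _ = c * (K * 2 ^ e) * H ^ ((n : ℝ) - 1 + 1 / G.index + ε) := by
        have hexp : (n : ℝ) - 1 + 1 / G.index + ε = ((n - 1 : ℕ) : ℝ) + e := by
          rw [he, Nat.cast_pred (by lia)]
          ring
        rw [hexp, Real.rpow_add (y := ((n - 1 : ℕ) : ℝ)) (by linarith), Real.rpow_natCast,
          Real.mul_rpow zero_le_two (by linarith)]
        ring

end Fibration

section Tuples

variable {n : ℕ}

/-- The polynomial `X ^ n + a₁ X ^ (n - 1) + ⋯ + aₙ`, where `a i` stands for `aᵢ₊₁`. -/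
noncomputable def monicOfTuple (a : Fin n → ℤ) : ℤ[X] :=
  X ^ n + ofFn n (a ∘ Fin.rev)

lemma map_monicOfTuple (a : Fin n → ℤ) :
    (monicOfTuple a).map (Int.castRingHom ℚ) =
      X ^ n + ∑ i : Fin n, C (a i : ℚ) * X ^ (n - 1 - (i : ℕ)) := by
  rw [monicOfTuple, ofFn_eq_sum_monomial, ← Equiv.sum_comp Fin.revPerm]
  simp [Polynomial.map_sum, ← C_mul_X_pow_eq_monomial, Fin.val_rev, Nat.sub_sub, add_comm]

lemma monicOfTuple_injective : Function.Injective (monicOfTuple (n := n)) := fun _ _ h =>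
  Fin.rev_surjective.injective_comp_right (injective_ofFn n (add_left_cancel h))

lemma monicOfTuple_mem_monicBox {a : Fin n → ℤ} {H : ℝ} (hH : 1 ≤ H)
    (ha : ∀ i, |(a i : ℝ)| ≤ H) : monicOfTuple a ∈ monicBox n H := by
  have hdeg : (ofFn n (a ∘ Fin.rev)).degree < n := ofFn_degree_lt _
  refine ⟨monic_X_pow_add hdeg, ?_, fun j => ?_⟩
  · rw [monicOfTuple, natDegree_add_eq_left_of_degree_lt (by rwa [degree_X_pow]),
      natDegree_X_pow]
  · rw [monicOfTuple, coeff_add, coeff_X_pow]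
    obtain hj | hj := lt_or_ge j n
    · rw [if_neg hj.ne, zero_add, ofFn_coeff_eq_val_of_lt _ hj]
      exact ha _
    · rw [ofFn_coeff_eq_zero_of_ge _ hj]
      split_ifs <;> simp <;> linarith

lemma ncard_tuples_le_ncard_monicBox (Q : ℚ[X] → Prop) {H : ℝ} (hH : 1 ≤ H) :
    {a : Fin n → ℤ | (∀ i, |(a i : ℝ)| ≤ H) ∧
      Q (X ^ n + ∑ i : Fin n, C (a i : ℚ) * X ^ (n - 1 - (i : ℕ)))}.ncard ≤
      {f ∈ monicBox n H | Q (f.map (Int.castRingHom ℚ))}.ncard := by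
  refine Set.ncard_le_ncard_of_injOn monicOfTuple (fun a ⟨ha, hQ⟩ => ?_)
    monicOfTuple_injective.injOn ((finite_monicBox n (by linarith)).subset fun f hf => hf.1)
  exact ⟨monicOfTuple_mem_monicBox hH ha, by rwa [map_monicOfTuple]⟩

end Tuples

section Count

variable {n : ℕ}

lemma exists_hasGaloisGroup_choose_half_le {f : ℤ[X]} (hn : 9 ≤ n) (hmonic : f.Monic)
    (hdeg : f.natDegree = n) (hirr : Irreducible f)
    (hS : ¬ Nonempty ((f.map (Int.castRingHom ℚ)).Gal ≃* Equiv.Perm (Fin n)))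
    (hA : ¬ Nonempty ((f.map (Int.castRingHom ℚ)).Gal ≃* alternatingGroup (Fin n))) :
    ∃ G : Subgroup (Equiv.Perm (Fin n)), n.choose (n / 2) ≤ 2 * G.index ∧
      HasGaloisGroup G (f.map (Int.castRingHom ℚ)) := by
  have hirrℚ : Irreducible (f.map (Int.castRingHom ℚ)) :=
    (IsPrimitive.Int.irreducible_iff_irreducible_map_cast hmonic.isPrimitive).1 hirr
  obtain ⟨G, hG⟩ := exists_hasGaloisGroup (hmonic.map (Int.castRingHom ℚ)) hirrℚ.separable
    ((hmonic.natDegree_map _).trans hdeg)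
  exact ⟨G, choose_half_le_two_mul_index_of_hasGaloisGroup hn hirrℚ hG hS hA, hG⟩

lemma one_div_index_le_two_div_choose_half {G : Subgroup (Equiv.Perm (Fin n))}
    (hG : n.choose (n / 2) ≤ 2 * G.index) :
    1 / (G.index : ℝ) ≤ 2 / (n.choose (n / 2) : ℝ) := by
  have hindex : 0 < G.index := Nat.pos_of_ne_zero Subgroup.FiniteIndex.index_ne_zero
  have hchoose : 0 < n.choose (n / 2) := Nat.choose_pos (Nat.div_le_self n 2)
  rw [div_le_div_iff₀ (by exact_mod_cast hindex) (by exact_mod_cast hchoose), one_mul]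
  exact_mod_cast hG

lemma ncard_not_symmetric_nor_alternating_le (hn : 9 ≤ n) {H : ℝ} (hH : 0 ≤ H)
    {large : Finset (Subgroup (Equiv.Perm (Fin n)))}
    (hlarge : ∀ G : Subgroup (Equiv.Perm (Fin n)), n.choose (n / 2) ≤ 2 * G.index → G ∈ large) :
    {f ∈ monicBox n H |
        ¬ Nonempty ((f.map (Int.castRingHom ℚ)).Gal ≃* Equiv.Perm (Fin n)) ∧
        ¬ Nonempty ((f.map (Int.castRingHom ℚ)).Gal ≃* alternatingGroup (Fin n))}.ncard ≤
      {f ∈ monicBox n H | ¬ Irreducible f}.ncard + ∑ G ∈ large, {f ∈ monicBox n H |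
        Irreducible f ∧ HasGaloisGroup G (f.map (Int.castRingHom ℚ))}.ncard := by
  have hfin : ∀ p : ℤ[X] → Prop, {f ∈ monicBox n H | p f}.Finite := fun _ =>
    (finite_monicBox n hH).subset fun f hf => hf.1
  refine (Set.ncard_le_ncard ?_ ((hfin _).union
    (large.finite_toSet.biUnion fun G _ => hfin _))).trans <| (Set.ncard_union_le _ _).trans <|
      Nat.add_le_add_left (large.set_ncard_biUnion_le _) _
  rintro f ⟨hf, hS, hA⟩
  by_cases hirr : Irreducible f
  · obtain ⟨G, hindex, hG⟩ :=
      exists_hasGaloisGroup_choose_half_le hn hf.1 hf.2.1 hirr hS hA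
    exact Or.inr (Set.mem_biUnion (hlarge G hindex) ⟨hf, hirr, hG⟩)
  · exact Or.inl ⟨hf, hirr⟩

theorem exists_ncard_not_symmetric_nor_alternating_le (hn : 9 ≤ n) {ε : ℝ} (hε : 0 < ε) :
    ∃ K : ℝ, ∀ H : ℝ, 1 ≤ H →
      ({f ∈ monicBox n H |
          ¬ Nonempty ((f.map (Int.castRingHom ℚ)).Gal ≃* Equiv.Perm (Fin n)) ∧
          ¬ Nonempty ((f.map (Int.castRingHom ℚ)).Gal ≃* alternatingGroup (Fin n))}.ncard : ℝ) ≤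
        K * H ^ ((n : ℝ) - 1 + 2 / (n.choose (n / 2) : ℝ) + ε) := by
  classical
  obtain ⟨K₀, hK₀, hred⟩ := exists_ncard_reducible_le (n := n) (by lia) hε
  choose K hK hirr using fun G : Subgroup (Equiv.Perm (Fin n)) =>
    exists_ncard_irreducible_hasGaloisGroup_le hn G hε
  let large : Finset (Subgroup (Equiv.Perm (Fin n))) := {G | n.choose (n / 2) ≤ 2 * G.index}
  refine ⟨K₀ + ∑ G ∈ large, K G, fun H hH => ?_⟩
  have hcount := ncard_not_symmetric_nor_alternating_le hn (by linarith : 0 ≤ H) (large := large)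
    fun G hG => Finset.mem_filter.2 ⟨Finset.mem_univ G, hG⟩
  refine (Nat.cast_le.2 hcount).trans ?_
  rw [Nat.cast_add, Nat.cast_sum, add_mul, Finset.sum_mul]
  refine add_le_add ((hred H hH).trans ?_) (Finset.sum_le_sum fun G hG => (hirr G H hH).trans ?_)
  · refine mul_le_mul_of_nonneg_left (Real.rpow_le_rpow_of_exponent_le hH ?_) hK₀
    have : 0 ≤ 2 / (n.choose (n / 2) : ℝ) := by positivity
    linarith
  · refine mul_le_mul_of_nonneg_left (Real.rpow_le_rpow_of_exponent_le hH ?_) (hK G)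
    linarith [one_div_index_le_two_div_choose_half (Finset.mem_filter.1 hG).2]

end Count

end GaloisCount

/-- For `n ≥ 9`, there are at most `O_{n,ε}(H^(n-1+e(n)+ε))` monic integer polynomials of
degree `n` and height at most `H` whose splitting field over `ℚ` has Galois group isomorphic
neither to `Sₙ` nor to the alternating group `Aₙ`, where `e(n) = 2/binom(n, ⌊n/2⌋)`. -/
theorem count_polynomials_not_symmetric_nor_alternating (n : ℕ) (hn : 9 ≤ n)
    (ε : ℝ) (hε : 0 < ε) :
    ∃ C : ℝ, ∀ H : ℝ, 1 ≤ H →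
      (Set.ncard {a : Fin n → ℤ |
          (∀ i, (|a i| : ℝ) ≤ H) ∧
          ¬ Nonempty ((X ^ n + ∑ i : Fin n, Polynomial.C ((a i : ℚ)) * X ^ (n - 1 - (i : ℕ)) :
              Polynomial ℚ).Gal ≃* Equiv.Perm (Fin n)) ∧
          ¬ Nonempty ((X ^ n + ∑ i : Fin n, Polynomial.C ((a i : ℚ)) * X ^ (n - 1 - (i : ℕ)) :
              Polynomial ℚ).Gal ≃* alternatingGroup (Fin n))} : ℝ)
        ≤ C * H ^ ((n : ℝ) - 1 + 2 / (n.choose (n / 2) : ℝ) + ε) := by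
  obtain ⟨K, hK⟩ := GaloisCount.exists_ncard_not_symmetric_nor_alternating_le hn hε
  refine ⟨K, fun H hH => (Nat.cast_le.2 ?_).trans (hK H hH)⟩
  exact GaloisCount.ncard_tuples_le_ncard_monicBox
    (fun P => ¬ Nonempty (P.Gal ≃* Equiv.Perm (Fin n)) ∧
    ¬ Nonempty (P.Gal ≃* alternatingGroup (Fin n))) hH
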